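/- arXiv:2603.25957 — 2 statements merged into one kernel-verified Lean document; each statement's English description precedes it below -/
import Mathlib

section
/- Fix γ ∈ (1,2) and Φ_ℓ, Φ_r ∈ ℝ. Let, for each n ≥ 2, Φ_ss^n : Λ_n → ℝ be the unique solution of the discrete stationary equation, and let Φ_ss be the unique weak solution of the stationary fractional Dirichlet problem. Then for every continuous G : [0,1] → ℝ, lim_{n→∞} (1/n) ∑_{x∈Λ_n} G(x/n) Φ_ss^n(x) = ∫_0^1 G(u) Φ_ss(u) du. -/
open MeasureTheory Filter ENNReal NNReal

noncomputable section

/-- The normalizing constant `c_γ = (∑_{z∈ℤ, z≠0} |z|^{-(1+γ)})⁻¹`. -/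
def cGamma (γ : ℝ) : ℝ := (∑' z : ℤ, if z = 0 then (0:ℝ) else |(z : ℝ)| ^ (-(1 + γ)))⁻¹

/-- The long-range kernel `p(z) = c_γ |z|^{-(1+γ)}` for `z ≠ 0`, `p(0) = 0`. -/
def pker (γ : ℝ) (z : ℝ) : ℝ := if z = 0 then 0 else cGamma γ * |z| ^ (-(1 + γ))

/-- The fractional inner product `⟨F,G⟩_{γ/2}`. -/
def fracInner (γ : ℝ) (F G : ℝ → ℝ) : ℝ :=
  (cGamma γ / 2) * ∫ u in Set.Icc (0:ℝ) 1, ∫ v in Set.Icc (0:ℝ) 1,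
    (F u - F v) * (G u - G v) * |u - v| ^ (-(1 + γ))

/-- The squared fractional seminorm `‖F‖²_{γ/2}`, as an extended real number. -/
def fracSeminormSq (γ : ℝ) (F : ℝ → ℝ) : ℝ≥0∞ :=
  ∫⁻ u in Set.Icc (0:ℝ) 1, ∫⁻ v in Set.Icc (0:ℝ) 1,
    ENNReal.ofReal ((cGamma γ / 2) * (F u - F v) ^ 2 * |u - v| ^ (-(1 + γ)))

/-- The squared `L²` norm on `[0,1]`, as an extended real number. -/
def l2NormSq (F : ℝ → ℝ) : ℝ≥0∞ :=
  ∫⁻ u in Set.Icc (0:ℝ) 1, ENNReal.ofReal ((F u) ^ 2)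

/-- The squared fractional Sobolev norm `‖F‖²_{H^{γ/2}}`. -/
def sobNormSq (γ : ℝ) (F : ℝ → ℝ) : ℝ≥0∞ := l2NormSq F + fracSeminormSq γ F

/-- Membership in the fractional Sobolev space `H^{γ/2}`. -/
def MemHgamma (γ : ℝ) (F : ℝ → ℝ) : Prop := Measurable F ∧ sobNormSq γ F < ⊤

/-- `F` admits a continuous representative on `[0,1]` taking the values `a` at `0` and
`b` at `1`. -/
def HasBoundaryValues (F : ℝ → ℝ) (a b : ℝ) : Prop :=
  ∃ Fc : ℝ → ℝ, ContinuousOn Fc (Set.Icc 0 1) ∧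
    (∀ᵐ u ∂(volume.restrict (Set.Icc (0:ℝ) 1)), F u = Fc u) ∧ Fc 0 = a ∧ Fc 1 = b

/-- The regional fractional Laplacian on `[0,1]`, as a principal-value limit. -/
def HasFracLapAt (γ : ℝ) (F : ℝ → ℝ) (u L : ℝ) : Prop :=
  Tendsto (fun ε : ℝ =>
      cGamma γ * ∫ v in {v : ℝ | v ∈ Set.Icc (0:ℝ) 1 ∧ ε ≤ abs (u - v)},
        (F v - F u) * |v - u| ^ (-(1 + γ)))
    (nhdsWithin (0:ℝ) (Set.Ioi 0)) (nhds L)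

/-- The regional fractional Laplacian `𝕃^γ F(u)` (junk value `0` when the
principal-value limit does not exist). -/
def fracLap (γ : ℝ) (F : ℝ → ℝ) (u : ℝ) : ℝ :=
  open Classical in
  if h : ∃ L, HasFracLapAt γ F u L then h.choose else 0

/-- Smooth real functions with compact support contained in `(0,1)`. -/
def IsSpatialTest (G : ℝ → ℝ) : Prop :=
  ContDiff ℝ (⊤ : ℕ∞) G ∧ ∃ K : Set ℝ, IsCompact K ∧ K ⊆ Set.Ioo 0 1 ∧ Function.support G ⊆ K

/-- Test functions `C¹` in time and `C^∞` in space, with spatial supports contained in a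
fixed compact subset of `(0,1)`. -/
def IsTestCInf (G : ℝ → ℝ → ℝ) : Prop :=
  (∀ u, ContDiff ℝ 1 fun t => G t u) ∧ (∀ t, ContDiff ℝ (⊤ : ℕ∞) fun u => G t u) ∧
  ∃ K : Set ℝ, IsCompact K ∧ K ⊆ Set.Ioo 0 1 ∧ ∀ t, Function.support (G t) ⊆ K

/-- Functions `C¹` in time and `C²` in space, with spatial supports contained in a fixed
compact subset of `(0,1)`. -/
def IsTestC2 (G : ℝ → ℝ → ℝ) : Prop :=
  (∀ u, ContDiff ℝ 1 fun t => G t u) ∧ (∀ t, ContDiff ℝ 2 fun u => G t u) ∧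
  ∃ K : Set ℝ, IsCompact K ∧ K ⊆ Set.Ioo 0 1 ∧ ∀ t, Function.support (G t) ⊆ K

/-- Weak solution of the stationary problem `𝕃^γ Φss = 0` on `[0,1]` with Dirichlet
boundary values `Φl` at `0` and `Φr` at `1`. -/
def IsStationarySolution (γ Φl Φr : ℝ) (Φss : ℝ → ℝ) : Prop :=
  MemHgamma γ Φss ∧ HasBoundaryValues Φss Φl Φr ∧
  ∀ G : ℝ → ℝ, IsSpatialTest G → (∫ u in Set.Icc (0:ℝ) 1, Φss u * fracLap γ G u) = 0

/-- The discrete stationary equation for the profile `ψ` on `Λ_n = {1, …, n−1}`. -/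
def IsDiscreteProfile (γ Φl Φr : ℝ) (n : ℕ) (ψ : ℕ → ℝ) : Prop :=
  ∀ x ∈ Finset.Icc 1 (n - 1),
    (∑ y ∈ Finset.Icc 1 (n - 1), pker γ ((y : ℝ) - (x : ℝ)) * (ψ y - ψ x))
      + (if x = 1 then Φl - ψ 1 else 0) + (if x = n - 1 then Φr - ψ (n - 1) else 0) = 0

section

lemma cGamma_pos {γ : ℝ} (hγ : γ ∈ Set.Ioo (1:ℝ) 2) : 0 < cGamma γ := by
  unfold cGamma
  apply inv_pos.mpr
  have h1 : Summable (fun z : ℤ => |(z:ℝ)| ^ (-(1+γ))) :=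
    Real.summable_abs_int_rpow (by linarith [hγ.1])
  have h2 : Summable (fun z : ℤ => if z = 0 then (0:ℝ) else |(z:ℝ)| ^ (-(1+γ))) := by
    refine h1.congr ?_
    intro z
    split_ifs with h
    · subst h
      simp only [Int.cast_zero, abs_zero]
      rw [Real.zero_rpow (by linarith [hγ.1])]
    · rfl
  refine h2.tsum_pos (fun z => ?_) 1 ?_
  · split_ifs <;> positivity
  · simp

/-- The square root kernel. -/
def kap (γ z : ℝ) : ℝ := |z| ^ (-(1 + γ) / 2)

lemma kap_mul (γ z : ℝ) : kap γ z * kap γ z = |z| ^ (-(1 + γ)) := by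
  unfold kap
  rw [← pow_two, ← Real.rpow_mul_natCast (abs_nonneg z)]
  congr 1
  push_cast
  ring

lemma kap_nonneg (γ z : ℝ) : 0 ≤ kap γ z := by unfold kap; positivity

lemma kap_neg (γ z : ℝ) : kap γ (-z) = kap γ z := by unfold kap; rw [abs_neg]

lemma kap_sub_comm (γ x y : ℝ) : kap γ (x - y) = kap γ (y - x) := by
  unfold kap; rw [abs_sub_comm]

lemma measurable_kap (γ : ℝ) : Measurable (kap γ) := by
  unfold kap; fun_prop

lemma pker_eq {γ : ℝ} (hγ : γ ∈ Set.Ioo (1:ℝ) 2) (z : ℝ) :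
    pker γ z = cGamma γ * |z| ^ (-(1 + γ)) := by
  unfold pker
  split_ifs with h
  · subst h
    rw [abs_zero, Real.zero_rpow (by linarith [hγ.1]), mul_zero]
  · rfl

/-- Lebesgue measure on the unit interval. -/
abbrev mI : Measure ℝ := volume.restrict (Set.Icc (0:ℝ) 1)

lemma kap_mul_abs {γ : ℝ} (hγ : γ ∈ Set.Ioo (1:ℝ) 2) (z : ℝ) :
    |z| * kap γ z = |z| ^ ((1 - γ) / 2) := by
  unfold kap
  by_cases h : z = 0
  · subst h
    rw [abs_zero, zero_mul, Real.zero_rpow (by linarith [hγ.1])]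
  · have h0 : 0 < |z| := abs_pos.mpr h
    nth_rewrite 1 [← Real.rpow_one |z|]
    rw [← Real.rpow_add h0]
    congr 1; ring

lemma sq_half_pow (γ z : ℝ) : (|z| ^ ((1 - γ) / 2)) ^ 2 = |z| ^ (1 - γ) := by
  rw [← Real.rpow_mul_natCast (abs_nonneg z)]
  congr 1
  push_cast
  ring

lemma integrableOn_abs_rpow {β : ℝ} (hβ : -1 < β) :
    IntegrableOn (fun z : ℝ => |z| ^ β) (Set.Icc (-1) 1) := by
  have h1 : IntegrableOn (fun z : ℝ => |z| ^ β) (Set.Ioc 0 1) := by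
    have := (intervalIntegral.intervalIntegrable_rpow' (a := 0) (b := 1) hβ)
    rw [intervalIntegrable_iff_integrableOn_Ioc_of_le zero_le_one] at this
    refine this.congr_fun ?_ measurableSet_Ioc
    intro x hx
    simp only
    rw [abs_of_pos hx.1]
  have h2 : IntegrableOn (fun z : ℝ => |z| ^ β) (Set.Ico (-1) 0) := by
    have h3 := h1.comp_neg
    simpa using h3
  have h4 : IntegrableOn (fun z : ℝ => |z| ^ β) ({0} : Set ℝ) :=
    integrableOn_singleton (by simp) (by simp)
  refine ((h1.union h2).union h4).mono_set ?_
  intro x hx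
  rcases lt_trichotomy x 0 with h | h | h
  · exact Or.inl (Or.inr ⟨hx.1, h⟩)
  · exact Or.inr h
  · exact Or.inl (Or.inl ⟨h, hx.2⟩)

lemma lintegral_abs_sub_rpow_le {β : ℝ} {u : ℝ} (hu : u ∈ Set.Icc (0:ℝ) 1) :
    ∫⁻ v, ENNReal.ofReal (|u - v| ^ β) ∂mI
      ≤ ∫⁻ z in Set.Icc (-1:ℝ) 1, ENNReal.ofReal (|z| ^ β) := by
  rw [← lintegral_indicator measurableSet_Icc, ← lintegral_indicator measurableSet_Icc]
  rw [← lintegral_sub_left_eq_self (μ := volume)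
    (fun z => (Set.Icc (-1:ℝ) 1).indicator (fun z => ENNReal.ofReal (|z| ^ β)) z) u]
  refine lintegral_mono fun v => ?_
  by_cases hv : v ∈ Set.Icc (0:ℝ) 1
  · rw [Set.indicator_of_mem hv, Set.indicator_of_mem]
    exact ⟨by linarith [hu.1, hv.2], by linarith [hu.2, hv.1]⟩
  · rw [Set.indicator_of_notMem hv]; exact zero_le

lemma integrable_abs_sub_rpow {β : ℝ} (hβ : -1 < β) :
    Integrable (fun p : ℝ × ℝ => |p.1 - p.2| ^ β) (mI.prod mI) := by
  refine ⟨(show Measurable _ by fun_prop).aestronglyMeasurable, ?_⟩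
  unfold HasFiniteIntegral
  have h0 : ∀ p : ℝ × ℝ, ‖|p.1 - p.2| ^ β‖ₑ = ENNReal.ofReal (|p.1 - p.2| ^ β) := by
    intro p
    rw [Real.enorm_of_nonneg (by positivity)]
  simp_rw [h0]
  rw [lintegral_prod _ (by fun_prop)]
  have h1 : ∫⁻ z in Set.Icc (-1:ℝ) 1, ENNReal.ofReal (|z| ^ β) < ⊤ := by
    have := (integrableOn_abs_rpow hβ).lintegral_lt_top
    exact this
  calc _ ≤ ∫⁻ u, (∫⁻ z in Set.Icc (-1:ℝ) 1, ENNReal.ofReal (|z| ^ β)) ∂mI := by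
        refine lintegral_mono_ae ?_
        filter_upwards [ae_restrict_mem measurableSet_Icc] with u hu
        exact lintegral_abs_sub_rpow_le hu
    _ < ⊤ := by
        rw [lintegral_const]
        exact ENNReal.mul_lt_top h1 (by simp)

lemma weak_conv {X : Type*} [MeasurableSpace X] {μ : Measure X} [IsFiniteMeasure μ]
    {a b : ℕ → X → ℝ} {a' b' g : X → ℝ} {C : ℝ≥0∞} (hC : C ≠ ⊤)
    (ha : ∀ n, AEStronglyMeasurable (a n) μ) (hb : ∀ n, AEStronglyMeasurable (b n) μ)
    (haC : ∀ n, eLpNorm (a n) 2 μ ≤ C)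
    (hlim : ∀ᵐ x ∂μ, Tendsto (fun n => a n x) atTop (nhds (a' x)))
    (hblim : ∀ᵐ x ∂μ, Tendsto (fun n => b n x) atTop (nhds (b' x)))
    (hg : MemLp g 2 μ) (hbg : ∀ n, ∀ᵐ x ∂μ, |b n x| ≤ g x) :
    MemLp a' 2 μ ∧ Tendsto (fun n => ∫ x, a n x * b n x ∂μ) atTop (nhds (∫ x, a' x * b' x ∂μ)) := by
  have ha'm : AEStronglyMeasurable a' μ := aestronglyMeasurable_of_tendsto_ae atTop ha hlim
  have hb'm : AEStronglyMeasurable b' μ := aestronglyMeasurable_of_tendsto_ae atTop hb hblim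
  have ha' : MemLp a' 2 μ := by
    refine ⟨ha'm, ?_⟩
    refine lt_of_le_of_lt (Lp.eLpNorm_lim_le_liminf_eLpNorm ha a' hlim) ?_
    refine lt_of_le_of_lt ?_ hC.lt_top
    refine liminf_le_of_le (by isBoundedDefault) (fun c hc => ?_)
    obtain ⟨n, hn⟩ := hc.exists
    exact hn.trans (haC n)
  have hb' : MemLp b' 2 μ := by
    refine hg.mono hb'm ?_
    have : ∀ᵐ x ∂μ, ∀ n, |b n x| ≤ g x := ae_all_iff.mpr hbg
    filter_upwards [this, hblim] with x hx hl
    rw [Real.norm_eq_abs, Real.norm_eq_abs]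
    exact (le_of_tendsto hl.abs (Eventually.of_forall hx)).trans (le_abs_self _)
  refine ⟨ha', ?_⟩
  have hIntg' : Integrable (fun x => a' x * b' x) μ := MemLp.integrable_mul ha' hb'
  have hbn : ∀ n, MemLp (b n) 2 μ := fun n => by
    refine hg.mono (hb n) ?_
    filter_upwards [hbg n] with x hx
    rw [Real.norm_eq_abs, Real.norm_eq_abs]
    exact hx.trans (le_abs_self _)
  have han : ∀ n, MemLp (a n) 2 μ := fun n => ⟨ha n, (haC n).trans_lt hC.lt_top⟩
  have hIntg : ∀ n, Integrable (fun x => a n x * b n x) μ := fun n =>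
    MemLp.integrable_mul (han n) (hbn n)
  have hui : UnifIntegrable (fun n => fun x => a n x * b n x) 1 μ := by
    intro ε hε
    obtain ⟨δ, hδ, H⟩ := hg.eLpNorm_indicator_le (by norm_num) (by norm_num)
      (show 0 < ε / (C.toReal + 1) by positivity)
    refine ⟨δ, hδ, fun n s hs hμ => ?_⟩
    have h1 := H s hs hμ
    have h2 : eLpNorm (s.indicator (b n)) 2 μ ≤ eLpNorm (s.indicator g) 2 μ := by
      refine eLpNorm_mono_ae ?_
      filter_upwards [hbg n] with x hx
      by_cases hxs : x ∈ s
      · simp only [Set.indicator_of_mem hxs, Real.norm_eq_abs]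
        exact hx.trans (le_abs_self _)
      · simp [Set.indicator_of_notMem hxs]
    have h3 : s.indicator (fun x => a n x * b n x) = fun x => a n x * (s.indicator (b n)) x := by
      ext x
      by_cases hxs : x ∈ s
      · simp [Set.indicator_of_mem hxs]
      · simp [Set.indicator_of_notMem hxs]
    rw [h3]
    have h4 := eLpNorm_le_eLpNorm_mul_eLpNorm_of_nnnorm (p := 2) (q := 2) (r := 1)
      (ha n) ((hb n).indicator hs) (fun x y : ℝ => x * y) 1 (by
        filter_upwards with x
        simp [nnnorm_mul])
    refine h4.trans ?_
    rw [ENNReal.coe_one, one_mul]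
    calc eLpNorm (a n) 2 μ * eLpNorm (s.indicator (b n)) 2 μ
        ≤ C * ENNReal.ofReal (ε / (C.toReal + 1)) := by
          gcongr
          · exact haC n
          · exact h2.trans h1
      _ = ENNReal.ofReal (C.toReal * (ε / (C.toReal + 1))) := by
          rw [ENNReal.ofReal_mul ENNReal.toReal_nonneg, ENNReal.ofReal_toReal hC]
      _ ≤ ENNReal.ofReal ε := by
          apply ENNReal.ofReal_le_ofReal
          have : 0 ≤ C.toReal := ENNReal.toReal_nonneg
          rw [← mul_div_assoc, div_le_iff₀ (by positivity)]
          nlinarith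
  have hlim2 := tendsto_Lp_finite_of_tendsto_ae (p := 1) le_rfl (by norm_num)
    (fun n => (hIntg n).1) (memLp_one_iff_integrable.mpr hIntg') hui (by
      filter_upwards [hlim, hblim] with x h1 h2
      exact h1.mul h2)
  exact tendsto_integral_of_L1' _ hIntg'.1 (Eventually.of_forall hIntg) hlim2

end

section

lemma test_props {φ : ℝ → ℝ} (hφ : IsSpatialTest φ) :
    ∃ η : ℝ, 0 < η ∧ (∀ u, u ∉ Set.Icc η (1 - η) → φ u = 0) ∧
      (∀ u, u ∉ Set.Icc η (1 - η) → deriv φ u = 0) ∧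
      ∃ C0 C1 C2 : ℝ, 0 ≤ C0 ∧ 0 ≤ C1 ∧ 0 ≤ C2 ∧ (∀ u, |φ u| ≤ C0) ∧
        (∀ u v, |φ v - φ u| ≤ C1 * |v - u|) ∧
        (∀ u v, |φ v - φ u - deriv φ u * (v - u)| ≤ C2 * |v - u| ^ 2) := by
  obtain ⟨hs, K, hK, hKs, hsupp⟩ := hφ
  have htK : tsupport φ ⊆ K := closure_minimal hsupp hK.isClosed
  obtain ⟨δ, hδ, hδs⟩ := hK.exists_cthickening_subset_open isOpen_Ioo hKs
  have hKI : ∀ x ∈ K, x ∈ Set.Icc δ (1 - δ) := by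
    intro x hx
    have h1 : x + δ ∈ Metric.cthickening δ K :=
      Metric.mem_cthickening_of_dist_le (x + δ) x δ K hx (by simp [abs_of_pos hδ])
    have h2 : x - δ ∈ Metric.cthickening δ K :=
      Metric.mem_cthickening_of_dist_le (x - δ) x δ K hx (by simp [abs_of_pos hδ])
    have h3 := hδs h1
    have h4 := hδs h2
    exact ⟨by linarith [h4.1], by linarith [h3.2]⟩
  have hcs : HasCompactSupport φ := hK.of_isClosed_subset (isClosed_tsupport φ) htK
  have hd : ContDiff ℝ (⊤ : ℕ∞) (deriv φ) := by
    have : ContDiff ℝ ((⊤ : ℕ∞) + 1) φ := by simpa using hs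
    exact (contDiff_succ_iff_deriv.mp this).2.2
  have hcs1 : HasCompactSupport (deriv φ) := hcs.deriv
  have hcs2 : HasCompactSupport (deriv (deriv φ)) := hcs1.deriv
  have hc2 : Continuous (deriv (deriv φ)) := hd.continuous_deriv (by simp)
  obtain ⟨C0, hC0⟩ := hcs.exists_bound_of_continuous hs.continuous
  obtain ⟨C1, hC1⟩ := hcs1.exists_bound_of_continuous hd.continuous
  obtain ⟨C2, hC2⟩ := hcs2.exists_bound_of_continuous hc2
  have hdiff : Differentiable ℝ φ := hs.differentiable (by simp)
  have hdiff1 : Differentiable ℝ (deriv φ) := hd.differentiable (by simp)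
  refine ⟨δ, hδ, ?_, ?_, C0, C1, C2, (norm_nonneg _).trans (hC0 0), (norm_nonneg _).trans (hC1 0),
    (norm_nonneg _).trans (hC2 0), fun u => hC0 u, ?_, ?_⟩
  · intro u hu
    by_contra h
    exact hu (hKI u (hsupp h))
  · intro u hu
    by_contra h
    exact hu (hKI u (htK (support_deriv_subset h)))
  · intro u v
    exact Convex.norm_image_sub_le_of_norm_deriv_le (fun x _ => hdiff x) (fun x _ => hC1 x)
      convex_univ (Set.mem_univ u) (Set.mem_univ v)
  · intro u v
    have h1 : ∀ x, |deriv φ x - deriv φ u| ≤ C2 * |x - u| := fun x =>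
      Convex.norm_image_sub_le_of_norm_deriv_le (fun x _ => hdiff1 x) (fun x _ => hC2 x)
        convex_univ (Set.mem_univ u) (Set.mem_univ x)
    have hC2' : 0 ≤ C2 := (norm_nonneg _).trans (hC2 0)
    have h2 := Convex.norm_image_sub_le_of_norm_hasDerivWithin_le
      (f := fun t => φ t - deriv φ u * t) (f' := fun t => deriv φ t - deriv φ u)
      (s := Set.uIcc u v) (x := u) (y := v) (C := C2 * |v - u|)
      (fun x _ => by
        have := ((hdiff x).hasDerivAt.sub ((hasDerivAt_id x).const_mul (deriv φ u)))
        have h3 := this.hasDerivWithinAt (s := Set.uIcc u v)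
        rw [mul_one] at h3
        exact h3)
      (fun x hx => by
        refine (h1 x).trans ?_
        exact mul_le_mul_of_nonneg_left (Set.abs_sub_left_of_mem_uIcc hx) hC2')
      (convex_uIcc u v) Set.left_mem_uIcc Set.right_mem_uIcc
    rw [Real.norm_eq_abs, Real.norm_eq_abs] at h2
    calc _ = |φ v - deriv φ u * v - (φ u - deriv φ u * u)| := by congr 1; ring
      _ ≤ _ := h2
      _ = _ := by ring

/-- Truncated kernel. -/
def kep (γ ε z : ℝ) : ℝ := if ε ≤ |z| then |z| ^ (-(1 + γ)) else 0

lemma measurable_kep (γ ε : ℝ) : Measurable (kep γ ε) := by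
  unfold kep
  refine Measurable.ite (measurableSet_le (by fun_prop) (by fun_prop)) (by fun_prop) (by fun_prop)

lemma kep_nonneg (γ ε z : ℝ) : 0 ≤ kep γ ε z := by
  unfold kep; split_ifs <;> positivity

lemma kep_le (γ ε z : ℝ) : kep γ ε z ≤ |z| ^ (-(1 + γ)) := by
  unfold kep; split_ifs
  · rfl
  · positivity

lemma kep_neg (γ ε z : ℝ) : kep γ ε (-z) = kep γ ε z := by unfold kep; rw [abs_neg]

lemma kep_bound {γ ε : ℝ} (hγ : γ ∈ Set.Ioo (1:ℝ) 2) (hε : 0 < ε) (z : ℝ) :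
    kep γ ε z ≤ ε ^ (-(1 + γ)) := by
  unfold kep; split_ifs with h
  · exact Real.rpow_le_rpow_of_nonpos hε h (by linarith [hγ.1])
  · positivity

lemma kep_tendsto {γ : ℝ} (hγ : γ ∈ Set.Ioo (1:ℝ) 2) (z : ℝ) :
    Tendsto (fun ε => kep γ ε z) (nhdsWithin (0:ℝ) (Set.Ioi 0)) (nhds (|z| ^ (-(1 + γ)))) := by
  apply tendsto_nhds_of_eventually_eq
  by_cases hz : z = 0
  · subst hz
    filter_upwards [self_mem_nhdsWithin] with ε hε
    unfold kep
    rw [abs_zero, Real.zero_rpow (by linarith [hγ.1])]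
    simp
  · have : Set.Iio |z| ∈ nhdsWithin (0:ℝ) (Set.Ioi 0) :=
      mem_nhdsWithin_of_mem_nhds (Iio_mem_nhds (abs_pos.mpr hz))
    filter_upwards [this] with ε hε
    unfold kep
    rw [if_pos (le_of_lt hε)]

lemma sq_mul_ker {γ : ℝ} (hγ : γ ∈ Set.Ioo (1:ℝ) 2) (z : ℝ) :
    |z| ^ 2 * |z| ^ (-(1 + γ)) = |z| ^ (1 - γ) := by
  rw [← kap_mul, ← sq_half_pow, ← kap_mul_abs hγ]
  ring

/-- Second order remainder. -/
def rem2 (φ : ℝ → ℝ) (η u v : ℝ) : ℝ :=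
  φ v - φ u - (if |v - u| < η then deriv φ u * (v - u) else 0)

lemma odd_int_zero {γ : ℝ} (η ε u : ℝ) (hu : u ∈ Set.Icc η (1 - η)) :
    ∫ v, (if |v - u| < η then (v - u) else 0) * kep γ ε (u - v) ∂mI = 0 := by
  rw [← integral_indicator measurableSet_Icc]
  set g : ℝ → ℝ := fun z => (if |z| < η then z else 0) * kep γ ε z with hg
  have h1 : (Set.Icc (0:ℝ) 1).indicator
      (fun v => (if |v - u| < η then (v - u) else 0) * kep γ ε (u - v)) = fun v => g (v - u) := by
    ext v
    by_cases hv : v ∈ Set.Icc (0:ℝ) 1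
    · rw [Set.indicator_of_mem hv]
      simp only [hg]
      rw [← kep_neg γ ε (u - v), neg_sub]
    · rw [Set.indicator_of_notMem hv]
      simp only [hg]
      rw [if_neg, zero_mul]
      intro h
      rw [abs_lt] at h
      exact hv ⟨by linarith [hu.1, h.1], by linarith [hu.2, h.2]⟩
  rw [h1, integral_sub_right_eq_self g u]
  have h2 : ∫ z, g (-z) = ∫ z, g z := integral_neg_eq_self g volume
  have h3 : ∀ z, g (-z) = - g z := by
    intro z
    simp only [hg, kep_neg, abs_neg]
    split_ifs <;> ring
  simp_rw [h3] at h2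
  rw [integral_neg] at h2
  linarith

lemma prod_ae_mem : ∀ᵐ p ∂(mI.prod mI), p.1 ∈ Set.Icc (0:ℝ) 1 ∧ p.2 ∈ Set.Icc (0:ℝ) 1 := by
  rw [Measure.prod_restrict]
  filter_upwards [ae_restrict_mem (measurableSet_Icc.prod measurableSet_Icc)] with p hp
  exact hp

lemma fracLap_eq {γ : ℝ} {φ : ℝ → ℝ} {u L : ℝ} (h : HasFracLapAt γ φ u L) : fracLap γ φ u = L := by
  unfold fracLap
  have hex : ∃ L, HasFracLapAt γ φ u L := ⟨L, h⟩
  rw [dif_pos hex]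
  exact tendsto_nhds_unique hex.choose_spec h

lemma ibp {γ : ℝ} (hγ : γ ∈ Set.Ioo (1:ℝ) 2) {F : ℝ → ℝ} (hF : Continuous F) {M : ℝ}
    (hM : ∀ u, |F u| ≤ M)
    (hE : MemLp (fun p : ℝ × ℝ => (F p.1 - F p.2) * kap γ (p.1 - p.2)) 2 (mI.prod mI))
    {φ : ℝ → ℝ} (hφ : IsSpatialTest φ) (h0 : ∫ u, F u * fracLap γ φ u ∂mI = 0) :
    ∫ p : ℝ × ℝ, ((F p.1 - F p.2) * kap γ (p.1 - p.2)) * ((φ p.1 - φ p.2) * kap γ (p.1 - p.2))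
      ∂(mI.prod mI) = 0 := by
  obtain ⟨η, hη, hφ0, hφ1, C0, C1, C2, hC0, hC1, hC2, hb0, hb1, hb2⟩ := test_props hφ
  have hφc : Continuous φ := hφ.1.continuous
  have hφd : Continuous (deriv φ) := hφ.1.continuous_deriv (by simp)
  have hφm := hφc.measurable
  have hφdm := hφd.measurable
  have hFm := hF.measurable
  have hM0 : 0 ≤ M := (abs_nonneg _).trans (hM 0)
  have hc := cGamma_pos hγ
  set C3 : ℝ := max C2 (C1 / η) with hC3
  have hC30 : 0 ≤ C3 := le_max_of_le_left hC2
  have hR : ∀ u v, |rem2 φ η u v| ≤ C3 * |u - v| ^ 2 := by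
    intro u v
    unfold rem2
    rw [abs_sub_comm u v]
    split_ifs with h
    · refine (hb2 u v).trans ?_
      gcongr
      exact le_max_left _ _
    · rw [sub_zero]
      refine (hb1 u v).trans ?_
      push Not at h
      calc C1 * |v - u| ≤ C1 / η * |v - u| ^ 2 := by
            rw [div_mul_eq_mul_div, le_div_iff₀ hη]
            have := mul_le_mul_of_nonneg_left h (mul_nonneg hC1 (abs_nonneg (v - u)))
            nlinarith
        _ ≤ _ := by
            gcongr
            exact le_max_right _ _
  have hRm : Measurable (fun p : ℝ × ℝ => rem2 φ η p.1 p.2) := by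
    unfold rem2
    refine Measurable.sub (by fun_prop) ?_
    exact Measurable.ite (measurableSet_lt (by fun_prop) (by fun_prop)) (by fun_prop) (by fun_prop)
  have hkm : Measurable (fun p : ℝ × ℝ => |p.1 - p.2| ^ (-(1 + γ))) := by fun_prop
  have hkem : ∀ ε, Measurable (fun p : ℝ × ℝ => kep γ ε (p.1 - p.2)) := fun ε =>
    (measurable_kep γ ε).comp (by fun_prop)
  have hRk : ∀ u v, |rem2 φ η u v| * |u - v| ^ (-(1 + γ)) ≤ C3 * |u - v| ^ (1 - γ) := by
    intro u v
    calc _ ≤ C3 * |u - v| ^ 2 * |u - v| ^ (-(1 + γ)) := by gcongr; exact hR u v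
      _ = _ := by rw [mul_assoc, sq_mul_ker hγ]
  have hγ1 : -1 < 1 - γ := by linarith [hγ.2]
  -- truncated operator with remainder
  have hin : ∀ u ∈ Set.Icc (0:ℝ) 1, ∀ ε > 0,
      ∫ v, (φ v - φ u) * kep γ ε (u - v) ∂mI = ∫ v, rem2 φ η u v * kep γ ε (u - v) ∂mI := by
    intro u hu ε hε
    have hsplit : ∀ v, rem2 φ η u v * kep γ ε (u - v) = (φ v - φ u) * kep γ ε (u - v)
        - deriv φ u * ((if |v - u| < η then (v - u) else 0) * kep γ ε (u - v)) := by
      intro v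
      unfold rem2
      split_ifs <;> ring
    simp_rw [hsplit]
    have hkem' : Measurable (fun v : ℝ => kep γ ε (u - v)) :=
      (measurable_kep γ ε).comp (by fun_prop)
    rw [integral_sub, integral_const_mul]
    · by_cases h : u ∈ Set.Icc η (1 - η)
      · rw [odd_int_zero η ε u h]; ring
      · rw [hφ1 u h]; ring
    · refine Integrable.of_bound (Measurable.aestronglyMeasurable (by fun_prop))
        (2 * C0 * ε ^ (-(1 + γ))) (Eventually.of_forall fun v => ?_)
      rw [norm_mul, Real.norm_eq_abs, Real.norm_eq_abs, abs_of_nonneg (kep_nonneg _ _ _)]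
      gcongr
      · exact kep_nonneg _ _ _
      · rw [two_mul]
        exact (abs_sub _ _).trans (add_le_add (hb0 v) (hb0 u))
      · exact kep_bound hγ hε _
    · refine Integrable.const_mul ?_ _
      refine Integrable.of_bound (Measurable.aestronglyMeasurable ?_)
        (η * ε ^ (-(1 + γ))) (Eventually.of_forall fun v => ?_)
      · refine Measurable.mul ?_ hkem'
        exact Measurable.ite (measurableSet_lt (by fun_prop) (by fun_prop)) (by fun_prop)
          (by fun_prop)
      · rw [norm_mul, Real.norm_eq_abs, Real.norm_eq_abs, abs_of_nonneg (kep_nonneg _ _ _)]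
        gcongr
        · exact kep_nonneg _ _ _
        · split_ifs with h
          · exact h.le
          · simpa using hη.le
        · exact kep_bound hγ hε _
  have hlapl : ∀ u ∈ Set.Icc (0:ℝ) 1, fracLap γ φ u
      = cGamma γ * ∫ v, rem2 φ η u v * |u - v| ^ (-(1 + γ)) ∂mI := by
    intro u hu
    apply fracLap_eq
    unfold HasFracLapAt
    refine Tendsto.const_mul _ ?_
    have hRm' : Measurable (fun v => rem2 φ η u v) :=
      hRm.comp (measurable_const.prodMk measurable_id)
    have h1 : Tendsto (fun ε => ∫ v, rem2 φ η u v * kep γ ε (u - v) ∂mI)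
        (nhdsWithin (0:ℝ) (Set.Ioi 0)) (nhds (∫ v, rem2 φ η u v * |u - v| ^ (-(1 + γ)) ∂mI)) := by
      refine tendsto_integral_filter_of_dominated_convergence (fun v => C3 * |u - v| ^ (1 - γ))
        (Eventually.of_forall fun ε => ?_) (Eventually.of_forall fun ε =>
          Eventually.of_forall fun v => ?_) ?_ (Eventually.of_forall fun v => ?_)
      · exact (hRm'.mul ((measurable_kep γ ε).comp (by fun_prop))).aestronglyMeasurable
      · rw [norm_mul, Real.norm_eq_abs, Real.norm_eq_abs, abs_of_nonneg (kep_nonneg _ _ _)]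
        refine le_trans ?_ (hRk u v)
        gcongr
        exact kep_le _ _ _
      · refine Integrable.const_mul ?_ _
        refine ⟨(show Measurable _ by fun_prop).aestronglyMeasurable, ?_⟩
        unfold HasFiniteIntegral
        have h0 : ∀ v : ℝ, ‖|u - v| ^ (1 - γ)‖ₑ = ENNReal.ofReal (|u - v| ^ (1 - γ)) := by
          intro p
          rw [Real.enorm_of_nonneg (by positivity)]
        simp_rw [h0]
        exact (lintegral_abs_sub_rpow_le hu).trans_lt
          (integrableOn_abs_rpow hγ1).lintegral_lt_top
      · exact (kep_tendsto hγ (u - v)).const_mul _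
    refine h1.congr' ?_
    filter_upwards [self_mem_nhdsWithin] with ε hε
    rw [← hin u hu ε hε]
    have hset : {v : ℝ | v ∈ Set.Icc (0:ℝ) 1 ∧ ε ≤ |u - v|}
        = Set.Icc (0:ℝ) 1 ∩ {v : ℝ | ε ≤ |u - v|} := rfl
    rw [hset, ← setIntegral_indicator (measurableSet_le (by fun_prop) (by fun_prop))]
    refine integral_congr_ae (Eventually.of_forall fun v => ?_)
    simp only [Set.indicator, Set.mem_ofPred_eq, kep]
    rw [abs_sub_comm v u]
    split_ifs <;> ring
  -- limit of the double integrals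
  have hA : Tendsto (fun ε => ∫ p : ℝ × ℝ, F p.1 * (rem2 φ η p.1 p.2 * kep γ ε (p.1 - p.2))
        ∂(mI.prod mI)) (nhdsWithin (0:ℝ) (Set.Ioi 0))
      (nhds (∫ p : ℝ × ℝ, F p.1 * (rem2 φ η p.1 p.2 * |p.1 - p.2| ^ (-(1 + γ)))
        ∂(mI.prod mI))) := by
    refine tendsto_integral_filter_of_dominated_convergence
        (fun p => M * (C3 * |p.1 - p.2| ^ (1 - γ)))
        (Eventually.of_forall fun ε => ?_) (Eventually.of_forall fun ε =>
          Eventually.of_forall fun p => ?_) ?_ (Eventually.of_forall fun p => ?_)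
    · exact ((hFm.comp measurable_fst).mul (hRm.mul (hkem ε))).aestronglyMeasurable
    · rw [norm_mul, norm_mul, Real.norm_eq_abs, Real.norm_eq_abs, Real.norm_eq_abs,
        abs_of_nonneg (kep_nonneg _ _ _)]
      refine mul_le_mul (hM _) (le_trans ?_ (hRk p.1 p.2))
        (mul_nonneg (abs_nonneg _) (kep_nonneg _ _ _)) hM0
      gcongr
      exact kep_le _ _ _
    · exact ((integrable_abs_sub_rpow hγ1).const_mul _).const_mul _
    · exact ((kep_tendsto hγ _).const_mul _).const_mul _
  have hintR : Integrable (fun p : ℝ × ℝ => F p.1 * (rem2 φ η p.1 p.2 * |p.1 - p.2| ^ (-(1 + γ))))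
      (mI.prod mI) := by
    refine Integrable.mono' (((integrable_abs_sub_rpow hγ1).const_mul C3).const_mul M)
      ((hFm.comp measurable_fst).mul (hRm.mul hkm)).aestronglyMeasurable
      (Eventually.of_forall fun p => ?_)
    rw [norm_mul, norm_mul, Real.norm_eq_abs, Real.norm_eq_abs, Real.norm_eq_abs,
      abs_of_nonneg (show 0 ≤ |p.1 - p.2| ^ (-(1 + γ)) by positivity)]
    exact mul_le_mul (hM _) (hRk p.1 p.2) (by positivity) hM0
  have hA0 : ∫ p : ℝ × ℝ, F p.1 * (rem2 φ η p.1 p.2 * |p.1 - p.2| ^ (-(1 + γ)))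
        ∂(mI.prod mI) = 0 := by
    rw [integral_prod _ hintR]
    have : ∫ u, F u * fracLap γ φ u ∂mI = cGamma γ * ∫ u, ∫ v, F u * (rem2 φ η u v *
        |u - v| ^ (-(1 + γ))) ∂mI ∂mI := by
      rw [← integral_const_mul]
      refine integral_congr_ae ?_
      filter_upwards [ae_restrict_mem measurableSet_Icc] with u hu
      rw [hlapl u hu, integral_const_mul]
      ring
    rw [h0] at this
    exact ((mul_eq_zero.mp this.symm).resolve_left hc.ne')
  have hB : Tendsto (fun ε => ∫ p : ℝ × ℝ, ((F p.1 - F p.2) * (φ p.1 - φ p.2)) *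
        kep γ ε (p.1 - p.2) ∂(mI.prod mI)) (nhdsWithin (0:ℝ) (Set.Ioi 0))
      (nhds (∫ p : ℝ × ℝ, ((F p.1 - F p.2) * (φ p.1 - φ p.2)) * |p.1 - p.2| ^ (-(1 + γ))
        ∂(mI.prod mI))) := by
    have hbd : ∀ p : ℝ × ℝ, |(F p.1 - F p.2) * (φ p.1 - φ p.2)| * |p.1 - p.2| ^ (-(1 + γ))
        ≤ ((F p.1 - F p.2) * kap γ (p.1 - p.2)) ^ 2 + C1 ^ 2 * |p.1 - p.2| ^ (1 - γ) := by
      intro p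
      rw [← sq_half_pow, ← kap_mul, ← kap_mul_abs hγ, abs_mul]
      have h1 := hb1 p.2 p.1
      have hk := kap_nonneg γ (p.1 - p.2)
      set k := kap γ (p.1 - p.2)
      set x := |F p.1 - F p.2| with hx
      have hx2 : ((F p.1 - F p.2) * k) ^ 2 = (x * k) ^ 2 := by
        rw [mul_pow, mul_pow, hx, sq_abs]
      rw [hx2]
      have hx0 : 0 ≤ x := abs_nonneg _
      calc x * |φ p.1 - φ p.2| * (k * k) ≤ x * (C1 * |p.1 - p.2|) * (k * k) := by gcongr
        _ = (x * k) * (C1 * (|p.1 - p.2| * k)) := by ring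
        _ ≤ _ := by nlinarith [sq_nonneg ((x * k) - (C1 * (|p.1 - p.2| * k))),
            sq_nonneg (x * k), sq_nonneg (C1 * (|p.1 - p.2| * k))]
    refine tendsto_integral_filter_of_dominated_convergence
        (fun p => ((F p.1 - F p.2) * kap γ (p.1 - p.2)) ^ 2 + C1 ^ 2 * |p.1 - p.2| ^ (1 - γ))
        (Eventually.of_forall fun ε => ?_) (Eventually.of_forall fun ε =>
          Eventually.of_forall fun p => ?_) ?_ (Eventually.of_forall fun p => ?_)
    · exact (Measurable.mul (by fun_prop) (hkem ε)).aestronglyMeasurable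
    · rw [norm_mul, Real.norm_eq_abs, Real.norm_eq_abs, abs_of_nonneg (kep_nonneg _ _ _)]
      refine le_trans ?_ (hbd p)
      gcongr
      exact kep_le _ _ _
    · exact hE.integrable_sq.add ((integrable_abs_sub_rpow hγ1).const_mul _)
    · exact (kep_tendsto hγ _).const_mul _
  -- relation
  have hAB : ∀ ε > 0, ∫ p : ℝ × ℝ, ((F p.1 - F p.2) * (φ p.1 - φ p.2)) *
        kep γ ε (p.1 - p.2) ∂(mI.prod mI)
      = -2 * ∫ p : ℝ × ℝ, F p.1 * (rem2 φ η p.1 p.2 * kep γ ε (p.1 - p.2)) ∂(mI.prod mI) := by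
    intro ε hε
    have hI1 : Integrable (fun p : ℝ × ℝ => F p.1 * ((φ p.2 - φ p.1) * kep γ ε (p.1 - p.2)))
        (mI.prod mI) := by
      have := hkem ε
      refine Integrable.of_bound (Measurable.aestronglyMeasurable (by fun_prop))
        (M * (2 * C0 * ε ^ (-(1 + γ)))) (Eventually.of_forall fun p => ?_)
      rw [norm_mul, norm_mul, Real.norm_eq_abs, Real.norm_eq_abs, Real.norm_eq_abs,
        abs_of_nonneg (kep_nonneg _ _ _)]
      refine mul_le_mul (hM _) ?_ (mul_nonneg (abs_nonneg _) (kep_nonneg _ _ _)) hM0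
      refine mul_le_mul ?_ (kep_bound hγ hε _) (kep_nonneg _ _ _) (by positivity)
      rw [two_mul]
      exact (abs_sub _ _).trans (add_le_add (hb0 _) (hb0 _))
    have hI2 : Integrable (fun p : ℝ × ℝ => F p.1 * (rem2 φ η p.1 p.2 * kep γ ε (p.1 - p.2)))
        (mI.prod mI) := by
      refine Integrable.mono' (((integrable_abs_sub_rpow hγ1).const_mul C3).const_mul M)
        ((hFm.comp measurable_fst).mul (hRm.mul (hkem ε))).aestronglyMeasurable
        (Eventually.of_forall fun p => ?_)
      rw [norm_mul, norm_mul, Real.norm_eq_abs, Real.norm_eq_abs, Real.norm_eq_abs,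
        abs_of_nonneg (kep_nonneg _ _ _)]
      refine mul_le_mul (hM _) (le_trans ?_ (hRk p.1 p.2))
        (mul_nonneg (abs_nonneg _) (kep_nonneg _ _ _)) hM0
      gcongr
      exact kep_le _ _ _
    have e1 : ∫ p : ℝ × ℝ, F p.1 * (rem2 φ η p.1 p.2 * kep γ ε (p.1 - p.2)) ∂(mI.prod mI)
        = ∫ p : ℝ × ℝ, F p.1 * ((φ p.2 - φ p.1) * kep γ ε (p.1 - p.2)) ∂(mI.prod mI) := by
      rw [integral_prod _ hI1, integral_prod _ hI2]
      refine integral_congr_ae ?_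
      filter_upwards [ae_restrict_mem measurableSet_Icc] with u hu
      rw [integral_const_mul, integral_const_mul, hin u hu ε hε]
    have e2 := integral_prod_swap (μ := mI) (ν := mI)
      (fun p : ℝ × ℝ => F p.1 * ((φ p.2 - φ p.1) * kep γ ε (p.1 - p.2)))
    have hI3 := hI1.swap
    have e3 : ∀ p : ℝ × ℝ, ((F p.1 - F p.2) * (φ p.1 - φ p.2)) * kep γ ε (p.1 - p.2)
        = - ((F p.1 * ((φ p.2 - φ p.1) * kep γ ε (p.1 - p.2)))
          + ((fun p : ℝ × ℝ => F p.1 * ((φ p.2 - φ p.1) * kep γ ε (p.1 - p.2))) p.swap)) := by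
      intro p
      simp only [Prod.fst_swap, Prod.snd_swap]
      rw [← kep_neg γ ε (p.2 - p.1), neg_sub]
      ring
    simp_rw [e3]
    rw [integral_neg]
    have e4 := integral_add hI1 hI3
    simp only [Function.comp_def] at e4
    rw [e4, e2, e1]
    ring
  have hfin : ∫ p : ℝ × ℝ, ((F p.1 - F p.2) * (φ p.1 - φ p.2)) * |p.1 - p.2| ^ (-(1 + γ))
        ∂(mI.prod mI) = 0 := by
    refine tendsto_nhds_unique hB ?_
    have h := hA.const_mul (-2)
    rw [hA0, mul_zero] at h
    refine h.congr' ?_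
    filter_upwards [self_mem_nhdsWithin] with ε hε
    exact (hAB ε hε).symm
  rw [← hfin]
  refine integral_congr_ae (Eventually.of_forall fun p => ?_)
  simp only
  rw [← kap_mul]
  ring

end

section
open scoped Convolution

/-- Mollification. -/
def moll (ρ : ContDiffBump (0:ℝ)) (w : ℝ → ℝ) : ℝ → ℝ :=
  (ρ.normed volume ⋆[ContinuousLinearMap.lsmul ℝ ℝ, volume] w)

lemma moll_apply (ρ : ContDiffBump (0:ℝ)) (w : ℝ → ℝ) (x : ℝ) :
    moll ρ w x = ∫ s, ρ.normed volume s * w (x - s) := by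
  unfold moll
  rw [convolution_def]
  simp

lemma eLpNorm_two_le {X : Type*} [MeasurableSpace X] {μ : Measure X} {a : X → ℝ} {A : ℝ≥0∞}
    (h : ∫⁻ x, ENNReal.ofReal ((a x) ^ 2) ∂μ ≤ A) : eLpNorm a 2 μ ≤ A ^ (1 / 2 : ℝ) := by
  rw [eLpNorm_eq_lintegral_rpow_enorm_toReal (by norm_num) (by norm_num)]
  simp only [ENNReal.toReal_ofNat]
  refine ENNReal.rpow_le_rpow (le_trans (le_of_eq ?_) h) (by norm_num)
  refine lintegral_congr fun x => ?_
  rw [← sq_abs, ENNReal.ofReal_pow (abs_nonneg _), ← Real.norm_eq_abs, ofReal_norm]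
  norm_cast

lemma moll_jensen (ρ : ContDiffBump (0:ℝ)) {w : ℝ → ℝ} (hw : Continuous w) {B : ℝ}
    (hB : ∀ u, |w u| ≤ B) (u v : ℝ) :
    ENNReal.ofReal ((moll ρ w u - moll ρ w v) ^ 2)
      ≤ ∫⁻ s, ENNReal.ofReal (ρ.normed volume s) *
          ENNReal.ofReal ((w (u - s) - w (v - s)) ^ 2) := by
  have hρ : Integrable (ρ.normed volume) := ρ.integrable_normed
  have hI : ∀ g : ℝ → ℝ, Continuous g → (∃ C, ∀ s, |g s| ≤ C) →
      Integrable (fun s => ρ.normed volume s * g s) := by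
    intro g hg ⟨C, hC⟩
    exact hρ.mul_bdd hg.aestronglyMeasurable (Eventually.of_forall hC)
  have hbd : ∀ s, |w (u - s) - w (v - s)| ≤ B + B := fun s =>
    (abs_sub _ _).trans (add_le_add (hB _) (hB _))
  set g : ℝ → ℝ := fun s => w (u - s) - w (v - s) with hg
  have hgc : Continuous g := by fun_prop
  set m := moll ρ w u - moll ρ w v with hm
  have hmeq : m = ∫ s, ρ.normed volume s * g s := by
    rw [hm, moll_apply, moll_apply, ← integral_sub]
    · simp only [hg, mul_sub]
    · exact hI _ (by fun_prop) ⟨B, fun s => hB _⟩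
    · exact hI _ (by fun_prop) ⟨B, fun s => hB _⟩
  have hI2 : Integrable (fun s => ρ.normed volume s * g s ^ 2) :=
    hI _ (by fun_prop) ⟨(B + B) ^ 2, fun s => by
      rw [abs_pow]; gcongr; exact hbd s⟩
  have hJ : m ^ 2 ≤ ∫ s, ρ.normed volume s * g s ^ 2 := by
    have h0 : 0 ≤ ∫ s, ρ.normed volume s * (g s - m) ^ 2 :=
      integral_nonneg fun s => mul_nonneg (ρ.nonneg_normed s) (sq_nonneg _)
    have h1 : ∀ s, ρ.normed volume s * (g s - m) ^ 2
        = ρ.normed volume s * g s ^ 2 - (2 * m) * (ρ.normed volume s * g s)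
          + m ^ 2 * ρ.normed volume s := fun s => by ring
    simp_rw [h1] at h0
    have hIg := hI g hgc ⟨_, hbd⟩
    have hsub : Integrable (fun s => ρ.normed volume s * g s ^ 2
        - (2 * m) * (ρ.normed volume s * g s)) := hI2.sub (hIg.const_mul _)
    rw [integral_add hsub (hρ.const_mul _),
      integral_sub hI2 (hIg.const_mul _), integral_const_mul, integral_const_mul, ← hmeq,
      ρ.integral_normed] at h0
    nlinarith
  refine (ENNReal.ofReal_le_ofReal hJ).trans (le_of_eq ?_)
  rw [ofReal_integral_eq_lintegral_ofReal hI2 (Eventually.of_forall fun s =>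
    mul_nonneg (ρ.nonneg_normed s) (sq_nonneg _))]
  exact lintegral_congr fun s => ENNReal.ofReal_mul (ρ.nonneg_normed s)

lemma moll_energy (γ : ℝ) (ρ : ContDiffBump (0:ℝ)) (hρ1 : ρ.rOut ≤ 1) {w : ℝ → ℝ}
    (hw : Continuous w) {B : ℝ} (hB : ∀ u, |w u| ≤ B) :
    ∫⁻ p : ℝ × ℝ, ENNReal.ofReal (((moll ρ w p.1 - moll ρ w p.2) * kap γ (p.1 - p.2)) ^ 2)
        ∂(mI.prod mI)
      ≤ ∫⁻ p in (Set.Icc (-1:ℝ) 2) ×ˢ (Set.Icc (-1:ℝ) 2),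
        ENNReal.ofReal (((w p.1 - w p.2) * kap γ (p.1 - p.2)) ^ 2) := by
  set h : ℝ × ℝ → ℝ≥0∞ := fun p => ENNReal.ofReal (((w p.1 - w p.2) * kap γ (p.1 - p.2)) ^ 2)
    with hh
  have hwm := hw.measurable
  have hkm := measurable_kap γ
  have hhm : Measurable h := by
    rw [hh]
    fun_prop
  have hρm : Measurable (ρ.normed volume) := ρ.continuous_normed.measurable
  set A := ∫⁻ p in (Set.Icc (-1:ℝ) 2) ×ˢ (Set.Icc (-1:ℝ) 2), h p with hA
  have h1 : ∀ p : ℝ × ℝ,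
      ENNReal.ofReal (((moll ρ w p.1 - moll ρ w p.2) * kap γ (p.1 - p.2)) ^ 2)
      ≤ ∫⁻ s, ENNReal.ofReal (ρ.normed volume s) * h (p - (s, s)) := by
    intro p
    rw [mul_pow, ENNReal.ofReal_mul (sq_nonneg _)]
    refine (mul_le_mul_left (moll_jensen ρ hw hB p.1 p.2) _).trans (le_of_eq ?_)
    rw [← lintegral_mul_const _ (by fun_prop)]
    refine lintegral_congr fun s => ?_
    rw [hh, mul_assoc, ← ENNReal.ofReal_mul (sq_nonneg _), ← mul_pow]
    simp
  refine (lintegral_mono h1).trans ?_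
  rw [lintegral_lintegral_swap (by
    refine Measurable.aemeasurable ?_
    exact ((hρm.comp measurable_snd).ennreal_ofReal).mul
      (hhm.comp (measurable_fst.sub (measurable_snd.prodMk measurable_snd))))]
  have h2 : ∀ s, ∫⁻ p, ENNReal.ofReal (ρ.normed volume s) * h (p - (s, s)) ∂(mI.prod mI)
      ≤ ENNReal.ofReal (ρ.normed volume s) * A := by
    intro s
    rw [lintegral_const_mul _ (by fun_prop)]
    by_cases hs : s ∈ Metric.ball (0:ℝ) ρ.rOut
    · gcongr
      rw [Measure.prod_restrict, hA,
        ← lintegral_indicator (measurableSet_Icc.prod measurableSet_Icc),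
        ← lintegral_indicator (measurableSet_Icc.prod measurableSet_Icc)]
      rw [← Measure.volume_eq_prod, ← lintegral_sub_right_eq_self (μ := (volume : Measure (ℝ × ℝ)))
        ((Set.Icc (-1:ℝ) 2 ×ˢ Set.Icc (-1:ℝ) 2).indicator h) (s, s)]
      refine lintegral_mono fun p => ?_
      have hs1 : |s| < 1 := by
        have : |s| < ρ.rOut := by simpa using hs
        linarith
      rw [abs_lt] at hs1
      by_cases hp : p ∈ Set.Icc (0:ℝ) 1 ×ˢ Set.Icc (0:ℝ) 1
      · rw [Set.indicator_of_mem hp, Set.indicator_of_mem]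
        obtain ⟨⟨a1, a2⟩, b1, b2⟩ := hp
        refine ⟨⟨?_, ?_⟩, ?_, ?_⟩ <;> simp only [Prod.fst_sub, Prod.snd_sub] <;> linarith [hs1.1, hs1.2]
      · rw [Set.indicator_of_notMem hp]; exact zero_le
    · have : ρ.normed volume s = 0 := by
        rw [← ρ.support_normed_eq (μ := volume)] at hs
        simpa using hs
      simp [this]
  refine (lintegral_mono h2).trans ?_
  rw [lintegral_mul_const _ (by fun_prop)]
  have h3 : ∫⁻ s, ENNReal.ofReal (ρ.normed volume s) = 1 := by
    rw [← ofReal_integral_eq_lintegral_ofReal ρ.integrable_normed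
      (Eventually.of_forall ρ.nonneg_normed), ρ.integral_normed, ENNReal.ofReal_one]
  rw [h3, one_mul]

/-- Soft threshold. -/
def soft (ε x : ℝ) : ℝ := max (x - ε) 0 + min (x + ε) 0

lemma soft_cont (ε : ℝ) : Continuous (soft ε) := by unfold soft; fun_prop

lemma soft_zero {ε x : ℝ} (h : |x| ≤ ε) : soft ε x = 0 := by
  rw [abs_le] at h
  unfold soft
  rw [max_eq_right (by linarith), min_eq_right (by linarith), add_zero]

lemma soft_mul {ε x : ℝ} (hε : 0 < ε) (h : x * soft ε x = 0) : |x| ≤ ε := by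
  by_contra hc
  push Not at hc
  rcases lt_abs.mp hc with h1 | h1
  · unfold soft at h
    rw [max_eq_left (by linarith), min_eq_right (by linarith)] at h
    nlinarith
  · unfold soft at h
    rw [max_eq_right (by linarith), min_eq_left (by linarith)] at h
    nlinarith

lemma soft_contr {ε : ℝ} (hε : 0 < ε) (x y : ℝ) :
    (soft ε x - soft ε y) ^ 2 ≤ (x - y) ^ 2 ∧ 0 ≤ (x - y) * (soft ε x - soft ε y) := by
  have key : ∀ x y, x ≤ y → 0 ≤ soft ε y - soft ε x ∧ soft ε y - soft ε x ≤ y - x := by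
    intro x y h
    unfold soft
    rcases max_cases (x - ε) 0 with h1 | h1 <;> rcases max_cases (y - ε) 0 with h2 | h2 <;>
    rcases min_cases (x + ε) 0 with h3 | h3 <;> rcases min_cases (y + ε) 0 with h4 | h4 <;>
    constructor <;> linarith [h1.1, h1.2, h2.1, h2.2, h3.1, h3.2, h4.1, h4.2]
  rcases le_total x y with h | h
  · obtain ⟨a, b⟩ := key x y h
    constructor <;> nlinarith
  · obtain ⟨a, b⟩ := key y x h
    constructor <;> nlinarith

lemma uniq {γ : ℝ} (hγ : γ ∈ Set.Ioo (1:ℝ) 2) {W : ℝ → ℝ} (hW : Continuous W)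
    (hW0 : ∀ u, u ∉ Set.Ioo (0:ℝ) 1 → W u = 0)
    (hE : MemLp (fun p : ℝ × ℝ => (W p.1 - W p.2) * kap γ (p.1 - p.2)) 2 (mI.prod mI))
    (horth : ∀ φ : ℝ → ℝ, IsSpatialTest φ →
      ∫ p : ℝ × ℝ, ((W p.1 - W p.2) * kap γ (p.1 - p.2)) * ((φ p.1 - φ p.2) * kap γ (p.1 - p.2))
        ∂(mI.prod mI) = 0) (u : ℝ) : W u = 0 := by
  by_cases hu01 : u ∈ Set.Ioo (0:ℝ) 1
  swap
  · exact hW0 u hu01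
  suffices H : ∀ ε > 0, |W u| ≤ ε by
    have : |W u| ≤ 0 := le_of_forall_pos_le_add (fun ε hε => by simpa using H ε hε)
    exact abs_nonpos_iff.mp this
  intro ε hε
  set w : ℝ → ℝ := fun x => soft ε (W x) with hw
  have hwc : Continuous w := (soft_cont ε).comp hW
  -- support of w
  obtain ⟨η, hη, hη1, hws⟩ : ∃ η : ℝ, 0 < η ∧ η ≤ 1 ∧ ∀ x, x ∉ Set.Icc η (1 - η) → w x = 0 := by
    have c0 : ∀ᶠ x in nhds (0:ℝ), |W x| < ε := by
      have : Tendsto (fun x => |W x|) (nhds 0) (nhds |W 0|) := (hW.abs).tendsto 0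
      rw [hW0 0 (by simp), abs_zero] at this
      exact this.eventually_lt_const hε
    have c1 : ∀ᶠ x in nhds (1:ℝ), |W x| < ε := by
      have : Tendsto (fun x => |W x|) (nhds 1) (nhds |W 1|) := (hW.abs).tendsto 1
      rw [hW0 1 (by simp), abs_zero] at this
      exact this.eventually_lt_const hε
    obtain ⟨a, ha, Ha⟩ := Metric.eventually_nhds_iff.mp c0
    obtain ⟨b, hb, Hb⟩ := Metric.eventually_nhds_iff.mp c1
    refine ⟨min (min a b) 1, by positivity, min_le_right _ _, fun x hx => ?_⟩
    apply soft_zero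
    have m1 : min (min a b) 1 ≤ a := (min_le_left _ _).trans (min_le_left _ _)
    have m2 : min (min a b) 1 ≤ b := (min_le_left _ _).trans (min_le_right _ _)
    by_cases hx01 : x ∈ Set.Ioo (0:ℝ) 1
    swap
    · rw [hW0 x hx01, abs_zero]; exact hε.le
    · by_cases hxa : x < min (min a b) 1
      · refine (Ha ?_).le
        rw [Real.dist_eq, sub_zero, abs_of_pos hx01.1]; linarith
      · have : 1 - min (min a b) 1 < x := by
          by_contra h
          exact hx ⟨not_lt.mp hxa, not_lt.mp h⟩
        refine (Hb ?_).le
        rw [Real.dist_eq, abs_sub_comm, abs_of_pos (by linarith [hx01.2])]; linarith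
  obtain ⟨B, hB⟩ : ∃ B, ∀ x, |w x| ≤ B := by
    have hcs : HasCompactSupport w := HasCompactSupport.intro isCompact_Icc hws
    exact hcs.exists_bound_of_continuous hwc
  have hB0 : 0 ≤ B := (abs_nonneg _).trans (hB 0)
  -- finite energy on the larger square
  set A := ∫⁻ p in (Set.Icc (-1:ℝ) 2) ×ˢ (Set.Icc (-1:ℝ) 2),
        ENNReal.ofReal (((w p.1 - w p.2) * kap γ (p.1 - p.2)) ^ 2) with hA
  have hkm := measurable_kap γ
  have hWm := hW.measurable
  have hAfin : A ≠ ⊤ := by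
    set q : ℝ × ℝ → ℝ≥0∞ := fun p => ENNReal.ofReal (((W p.1 - W p.2) * kap γ (p.1 - p.2)) ^ 2)
      with hq
    have hqfin : ∫⁻ p in (Set.Icc (0:ℝ) 1) ×ˢ (Set.Icc (0:ℝ) 1), q p < ⊤ := by
      have := hE.integrable_sq.lintegral_lt_top
      rw [Measure.prod_restrict] at this
      exact this
    set c : ℝ≥0∞ := ENNReal.ofReal ((2 * B) ^ 2 * (η / 2) ^ (-(1 + γ))) with hc
    have hpt : ∀ p : ℝ × ℝ, ENNReal.ofReal (((w p.1 - w p.2) * kap γ (p.1 - p.2)) ^ 2)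
        ≤ ((Set.Icc (0:ℝ) 1) ×ˢ (Set.Icc (0:ℝ) 1)).indicator q p + c := by
      intro p
      by_cases hfar : η / 2 ≤ |p.1 - p.2|
      · refine le_trans ?_ le_add_self
        apply ENNReal.ofReal_le_ofReal
        rw [mul_pow, sq (kap γ _), kap_mul]
        refine mul_le_mul ?_ ?_ (by positivity) (by positivity)
        · rw [sq_le_sq, abs_of_nonneg (show 0 ≤ 2 * B by positivity), two_mul]
          exact (abs_sub _ _).trans (add_le_add (hB _) (hB _))
        · exact Real.rpow_le_rpow_of_nonpos (by positivity) hfar (by linarith [hγ.1])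
      · push Not at hfar
        rw [abs_lt] at hfar
        by_cases hp : p ∈ (Set.Icc (0:ℝ) 1) ×ˢ (Set.Icc (0:ℝ) 1)
        · rw [Set.indicator_of_mem hp]
          refine le_trans ?_ le_self_add
          apply ENNReal.ofReal_le_ofReal
          rw [mul_pow, mul_pow]
          exact mul_le_mul_of_nonneg_right (soft_contr hε _ _).1 (sq_nonneg _)
        · have hz : w p.1 = 0 ∧ w p.2 = 0 := by
            have : p.1 < 0 ∨ 1 < p.1 ∨ p.2 < 0 ∨ 1 < p.2 := by
              by_contra hcon
              push Not at hcon
              exact hp ⟨⟨hcon.1, hcon.2.1⟩, ⟨hcon.2.2.1, hcon.2.2.2⟩⟩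
            constructor <;> apply hws <;> rintro ⟨h1, h2⟩ <;>
              rcases this with h | h | h | h <;> linarith [hfar.1, hfar.2]
          rw [hz.1, hz.2]
          simp
    refine ne_of_lt ?_
    calc A ≤ ∫⁻ p in (Set.Icc (-1:ℝ) 2) ×ˢ (Set.Icc (-1:ℝ) 2),
          (((Set.Icc (0:ℝ) 1) ×ˢ (Set.Icc (0:ℝ) 1)).indicator q p + c) := lintegral_mono hpt
      _ = (∫⁻ p in (Set.Icc (-1:ℝ) 2) ×ˢ (Set.Icc (-1:ℝ) 2),
          ((Set.Icc (0:ℝ) 1) ×ˢ (Set.Icc (0:ℝ) 1)).indicator q p)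
          + c * volume ((Set.Icc (-1:ℝ) 2) ×ˢ (Set.Icc (-1:ℝ) 2)) := by
          rw [lintegral_add_right _ measurable_const, setLIntegral_const]
      _ < ⊤ := by
          refine ENNReal.add_lt_top.mpr ⟨?_, ?_⟩
          · refine lt_of_le_of_lt (setLIntegral_le_lintegral _ _) ?_
            rw [lintegral_indicator (measurableSet_Icc.prod measurableSet_Icc)]
            exact hqfin
          · refine ENNReal.mul_lt_top ENNReal.ofReal_lt_top ?_
            exact (isCompact_Icc.prod isCompact_Icc).measure_lt_top
  -- the mollifiers
  let ρ : ℕ → ContDiffBump (0:ℝ) := fun n =>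
    ⟨η / 4 / ((n:ℝ) + 1), η / 2 / ((n:ℝ) + 1), by positivity, by
      gcongr; norm_num⟩
  have hρle : ∀ n, (ρ n).rOut ≤ η / 2 := fun n => by
    have : (1:ℝ) ≤ (n:ℝ) + 1 := by linarith [Nat.cast_nonneg (α := ℝ) n]
    exact div_le_self (by positivity) this
  have hρlim : Tendsto (fun n => (ρ n).rOut) atTop (nhds 0) := by
    have := tendsto_one_div_add_atTop_nhds_zero_nat (𝕜 := ℝ)
    have h2 := this.const_mul (η / 2)
    rw [mul_zero] at h2
    refine h2.congr fun n => ?_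
    show η / 2 * (1 / ((n:ℝ) + 1)) = η / 2 / ((n:ℝ) + 1)
    ring
  have htest : ∀ n, IsSpatialTest (moll (ρ n) w) := by
    intro n
    refine ⟨?_, Set.Icc (η / 2) (1 - η / 2), isCompact_Icc, ?_, ?_⟩
    · exact (ρ n).hasCompactSupport_normed.contDiff_convolution_left _ (ρ n).contDiff_normed
        hwc.locallyIntegrable
    · intro x hx
      exact ⟨by linarith [hx.1], by linarith [hx.2]⟩
    · intro x hx
      by_contra hxn
      apply hx
      rw [moll_apply]
      refine integral_eq_zero_of_ae (Eventually.of_forall fun s => ?_)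
      simp only [Pi.zero_apply, mul_eq_zero]
      by_cases hs : s ∈ Metric.ball (0:ℝ) (ρ n).rOut
      · right
        have hs1 : |s| < η / 2 := by
          have : |s| < (ρ n).rOut := by simpa using hs
          linarith [hρle n]
        rw [abs_lt] at hs1
        apply hws
        rintro ⟨h1, h2⟩
        exact hxn ⟨by linarith [hs1.1, hs1.2], by linarith [hs1.1, hs1.2]⟩
      · left
        rw [← (ρ n).support_normed_eq (μ := volume)] at hs
        simpa using hs
  have hmc : ∀ n, Continuous (moll (ρ n) w) := fun n => (htest n).1.continuous
  have hlim : ∀ x, Tendsto (fun n => moll (ρ n) w x) atTop (nhds (w x)) := fun x =>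
    ContDiffBump.convolution_tendsto_right_of_continuous hρlim hwc x
  obtain ⟨hmem, hconv⟩ := weak_conv (μ := mI.prod mI) (C := A ^ (1 / 2 : ℝ))
    (a := fun n p => (moll (ρ n) w p.1 - moll (ρ n) w p.2) * kap γ (p.1 - p.2))
    (b := fun _ p => (W p.1 - W p.2) * kap γ (p.1 - p.2))
    (a' := fun p => (w p.1 - w p.2) * kap γ (p.1 - p.2))
    (b' := fun p => (W p.1 - W p.2) * kap γ (p.1 - p.2))
    (g := fun p => |(W p.1 - W p.2) * kap γ (p.1 - p.2)|)
    (ENNReal.rpow_ne_top_of_nonneg (by norm_num) hAfin)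
    (fun n => by
      have := (hmc n).measurable
      exact Measurable.aestronglyMeasurable (by fun_prop))
    (fun _ => hE.1)
    (fun n => eLpNorm_two_le (moll_energy γ (ρ n) ((hρle n).trans (by linarith)) hwc hB))
    (Eventually.of_forall fun p => ((hlim _).sub (hlim _)).mul_const _)
    (Eventually.of_forall fun p => tendsto_const_nhds)
    hE.abs (fun _ => Eventually.of_forall fun p => le_rfl)
  have hz : ∫ p : ℝ × ℝ, ((w p.1 - w p.2) * kap γ (p.1 - p.2)) *
      ((W p.1 - W p.2) * kap γ (p.1 - p.2)) ∂(mI.prod mI) = 0 := by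
    refine tendsto_nhds_unique hconv ?_
    refine tendsto_nhds_of_eventually_eq (Eventually.of_forall fun n => ?_)
    rw [← horth _ (htest n)]
    refine integral_congr_ae (Eventually.of_forall fun p => ?_)
    simp only
    ring
  have hIntg : Integrable (fun p : ℝ × ℝ => ((w p.1 - w p.2) * kap γ (p.1 - p.2)) *
      ((W p.1 - W p.2) * kap γ (p.1 - p.2))) (mI.prod mI) := MemLp.integrable_mul hmem hE
  rw [integral_eq_zero_iff_of_nonneg _ hIntg] at hz
  swap
  · intro p
    have h1 := (soft_contr hε (W p.1) (W p.2)).2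
    have h2 := mul_nonneg h1 (mul_nonneg (kap_nonneg γ (p.1 - p.2)) (kap_nonneg γ (p.1 - p.2)))
    simp only [Pi.zero_apply]
    calc (0:ℝ) ≤ _ := h2
      _ = _ := by simp only [hw]; ring
  have hP : (fun p : ℝ × ℝ => (w p.1 - w p.2) * (W p.1 - W p.2))
      =ᵐ[(volume : Measure (ℝ × ℝ)).restrict ((Set.Icc (0:ℝ) 1) ×ˢ (Set.Icc (0:ℝ) 1))]
      (fun _ => (0:ℝ)) := by
    rw [Measure.volume_eq_prod, ← Measure.prod_restrict]
    filter_upwards [hz] with p hp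
    by_cases h : p.1 = p.2
    · rw [h]; ring
    · have hk : 0 < kap γ (p.1 - p.2) := by
        unfold kap
        have : 0 < |p.1 - p.2| := abs_pos.mpr (sub_ne_zero.mpr h)
        positivity
      simp only [Pi.zero_apply] at hp
      have h3 : (w p.1 - w p.2) * (W p.1 - W p.2) * (kap γ (p.1 - p.2) * kap γ (p.1 - p.2)) = 0 := by
        rw [← hp]; ring
      exact (mul_eq_zero.mp h3).resolve_right (by positivity)
  have hEq := Measure.eqOn_of_ae_eq hP (Continuous.continuousOn (by fun_prop)) continuousOn_const
    (by rw [interior_prod_eq, interior_Icc, closure_prod_eq, closure_Ioo (by norm_num)])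
  have h5 := hEq (show ((u, 0) : ℝ × ℝ) ∈ _ from ⟨⟨hu01.1.le, hu01.2.le⟩, by simp⟩)
  simp only at h5
  rw [hW0 0 (by simp), hw] at h5
  simp only [hW0 0 (by simp), soft_zero (show |(0:ℝ)| ≤ ε by simpa using hε.le), sub_zero] at h5
  exact soft_mul hε (by rw [mul_comm]; exact h5)

end

section

/-- The discrete Dirichlet form. -/
def dform (γ : ℝ) (n : ℕ) (a b : ℕ → ℝ) : ℝ :=
  ∑ x ∈ Finset.Icc 1 (n - 1), ∑ y ∈ Finset.Icc 1 (n - 1),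
    (a x - a y) * (b x - b y) * |(x : ℝ) - (y : ℝ)| ^ (-(1 + γ))

lemma sbp {γ Φl Φr : ℝ} (hγ : γ ∈ Set.Ioo (1:ℝ) 2) {n : ℕ} (hn : 2 ≤ n) {ψ : ℕ → ℝ}
    (h : IsDiscreteProfile γ Φl Φr n ψ) (g : ℕ → ℝ) :
    cGamma γ * dform γ n ψ g = 2 * (g 1 * (Φl - ψ 1) + g (n - 1) * (Φr - ψ (n - 1))) := by
  set s := Finset.Icc 1 (n - 1) with hs
  have h1 : (1:ℕ) ∈ s := by rw [hs, Finset.mem_Icc]; omega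
  have h2 : n - 1 ∈ s := by rw [hs, Finset.mem_Icc]; omega
  set A := ∑ x ∈ s, ∑ y ∈ s, pker γ ((y:ℝ) - x) * (ψ y - ψ x) * g x with hA
  have e1 : A + (g 1 * (Φl - ψ 1) + g (n - 1) * (Φr - ψ (n - 1))) = 0 := by
    have : ∑ x ∈ s, ((∑ y ∈ s, pker γ ((y : ℝ) - (x : ℝ)) * (ψ y - ψ x))
      + (if x = 1 then Φl - ψ 1 else 0) + (if x = n - 1 then Φr - ψ (n - 1) else 0)) * g x = 0 :=
      Finset.sum_eq_zero fun x hx => by rw [h x hx, zero_mul]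
    simp only [add_mul, Finset.sum_add_distrib, ite_mul, zero_mul, Finset.sum_ite_eq', h1, h2,
      if_true, Finset.sum_mul] at this
    rw [hA]
    linarith
  have e2 : ∑ x ∈ s, ∑ y ∈ s, pker γ ((y:ℝ) - x) * (ψ y - ψ x) * g y = -A := by
    rw [Finset.sum_comm, hA, ← Finset.sum_neg_distrib]
    refine Finset.sum_congr rfl fun x _ => ?_
    rw [← Finset.sum_neg_distrib]
    refine Finset.sum_congr rfl fun y _ => ?_
    rw [pker_eq hγ, pker_eq hγ, abs_sub_comm]
    ring
  have e3 : cGamma γ * dform γ n ψ g = -A - A := by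
    rw [← e2, hA, ← Finset.sum_sub_distrib, dform, Finset.mul_sum]
    refine Finset.sum_congr rfl fun x _ => ?_
    rw [← Finset.sum_sub_distrib, Finset.mul_sum]
    refine Finset.sum_congr rfl fun y _ => ?_
    rw [pker_eq hγ, abs_sub_comm (y:ℝ)]
    ring
  rw [e3]; linarith

lemma dform_nonneg (γ : ℝ) (n : ℕ) (a : ℕ → ℝ) : 0 ≤ dform γ n a a :=
  Finset.sum_nonneg fun _ _ => Finset.sum_nonneg fun _ _ =>
    mul_nonneg (mul_self_nonneg _) (Real.rpow_nonneg (abs_nonneg _) _)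

lemma dform_amgm (γ : ℝ) (n : ℕ) (a b : ℕ → ℝ) :
    2 * dform γ n a b ≤ dform γ n a a + dform γ n b b := by
  simp only [dform]
  rw [← Finset.sum_add_distrib, Finset.mul_sum]
  refine Finset.sum_le_sum fun x _ => ?_
  rw [← Finset.sum_add_distrib, Finset.mul_sum]
  refine Finset.sum_le_sum fun y _ => ?_
  have := Real.rpow_nonneg (abs_nonneg ((x:ℝ) - y)) (-(1 + γ))
  nlinarith [mul_nonneg this (sq_nonneg ((a x - a y) - (b x - b y)))]

lemma dform_sub (γ : ℝ) (n : ℕ) (a b c : ℕ → ℝ) :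
    dform γ n a (fun x => b x - c x) = dform γ n a b - dform γ n a c := by
  simp only [dform, ← Finset.sum_sub_distrib]
  refine Finset.sum_congr rfl fun x _ => Finset.sum_congr rfl fun y _ => ?_
  ring

lemma energy {γ Φl Φr : ℝ} (hγ : γ ∈ Set.Ioo (1:ℝ) 2) {n : ℕ} (hn : 2 ≤ n) {ψ : ℕ → ℝ}
    (h : IsDiscreteProfile γ Φl Φr n ψ) (g : ℕ → ℝ) (hg1 : g 1 = Φl) (hg2 : g (n - 1) = Φr) :
    dform γ n ψ ψ ≤ dform γ n g g ∧
    (ψ 1 - Φl) ^ 2 ≤ cGamma γ * dform γ n g g ∧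
    (ψ (n - 1) - Φr) ^ 2 ≤ cGamma γ * dform γ n g g := by
  have hc := cGamma_pos hγ
  have e := sbp hγ hn h (fun x => ψ x - g x)
  rw [dform_sub] at e
  simp only [hg1, hg2] at e
  have h1 := dform_amgm γ n ψ g
  have h2 := dform_nonneg γ n ψ
  have h3 := dform_nonneg γ n g
  have h1' := mul_le_mul_of_nonneg_left h1 hc.le
  have h2' := mul_nonneg hc.le h2
  have h3' := mul_nonneg hc.le h3
  refine ⟨?_, ?_, ?_⟩
  · refine le_of_mul_le_mul_left ?_ hc
    nlinarith [sq_nonneg (ψ 1 - Φl), sq_nonneg (ψ (n-1) - Φr)]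
  · nlinarith [sq_nonneg (ψ 1 - Φl), sq_nonneg (ψ (n-1) - Φr)]
  · nlinarith [sq_nonneg (ψ 1 - Φl), sq_nonneg (ψ (n-1) - Φr)]

lemma step1 {n : ℕ} (hn : 1 ≤ n) (F : ℕ → ℝ) :
    ∫ u, F ⌊(n:ℝ) * u⌋₊ ∂mI = (1 / (n:ℝ)) * ∑ x ∈ Finset.range n, F x := by
  have hn0 : (0:ℝ) < n := by exact_mod_cast hn
  have h1 : ∀ᵐ u ∂mI, F ⌊(n:ℝ) * u⌋₊ = ∑ x ∈ Finset.range n,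
      (Set.Ico ((x:ℝ) / n) ((x + 1) / n)).indicator (fun _ => F x) u := by
    have hne : ∀ᵐ u ∂mI, u ≠ 1 := by
      refine ae_restrict_of_ae ?_
      simp [ae_iff]
    filter_upwards [hne, ae_restrict_mem measurableSet_Icc] with u hu1 hu
    have hu' : u < 1 := lt_of_le_of_ne hu.2 hu1
    have hnu : 0 ≤ (n:ℝ) * u := mul_nonneg hn0.le hu.1
    have hk : ⌊(n:ℝ) * u⌋₊ < n := by
      rw [Nat.floor_lt hnu]; nlinarith
    rw [Finset.sum_eq_single_of_mem _ (Finset.mem_range.2 hk)]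
    · rw [Set.indicator_of_mem]
      constructor
      · rw [div_le_iff₀ hn0, mul_comm u]; exact Nat.floor_le hnu
      · rw [lt_div_iff₀ hn0, mul_comm u]; exact Nat.lt_floor_add_one _
    · intro x _ hx
      rw [Set.indicator_of_notMem]
      rintro ⟨ha, hb⟩
      apply hx
      rw [div_le_iff₀ hn0] at ha
      rw [lt_div_iff₀ hn0] at hb
      exact ((Nat.floor_eq_iff hnu).2 ⟨by linarith, by linarith⟩).symm
  rw [integral_congr_ae h1, integral_finsetSum, Finset.mul_sum]
  · refine Finset.sum_congr rfl fun x hx => ?_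
    have hx' : (x:ℝ) + 1 ≤ n := by exact_mod_cast Finset.mem_range.1 hx
    rw [integral_indicator_const _ measurableSet_Ico, smul_eq_mul]
    congr 1
    rw [Measure.real, Measure.restrict_apply measurableSet_Ico, Set.inter_eq_left.2,
      Real.volume_Ico, ENNReal.toReal_ofReal]
    · field_simp; ring
    · rw [sub_nonneg]; gcongr; linarith
    · intro u hu
      exact ⟨le_trans (by positivity) hu.1, hu.2.le.trans (by rw [div_le_one hn0]; exact hx')⟩
  · intro x _
    exact (integrable_const _).indicator measurableSet_Ico

lemma step2_meas (n : ℕ) (F : ℕ → ℕ → ℝ) :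
    Measurable (fun p : ℝ × ℝ => F ⌊(n:ℝ) * p.1⌋₊ ⌊(n:ℝ) * p.2⌋₊) := by
  have h : Measurable (fun q : ℕ × ℕ => F q.1 q.2) := measurable_of_countable _
  have h1 : Measurable (fun p : ℝ × ℝ => (⌊(n:ℝ) * p.1⌋₊, ⌊(n:ℝ) * p.2⌋₊)) :=
    (Nat.measurable_floor.comp (measurable_fst.const_mul _)).prodMk
      (Nat.measurable_floor.comp (measurable_snd.const_mul _))
  exact h.comp h1

lemma step2_int (n : ℕ) (F : ℕ → ℕ → ℝ) :
    Integrable (fun p : ℝ × ℝ => F ⌊(n:ℝ) * p.1⌋₊ ⌊(n:ℝ) * p.2⌋₊) (mI.prod mI) := by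
  refine Integrable.of_bound (step2_meas n F).aestronglyMeasurable
    (∑ x ∈ Finset.range (n + 1), ∑ y ∈ Finset.range (n + 1), |F x y|) ?_
  filter_upwards [prod_ae_mem] with p hp
  have hk : ∀ u ∈ Set.Icc (0:ℝ) 1, ⌊(n:ℝ) * u⌋₊ ∈ Finset.range (n + 1) := by
    intro u hu
    rw [Finset.mem_range, Nat.lt_succ_iff]
    refine Nat.floor_le_of_le ?_
    have : (0:ℝ) ≤ n := Nat.cast_nonneg _
    nlinarith [hu.2]
  rw [Real.norm_eq_abs]
  refine le_trans ?_ (Finset.single_le_sum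
    (f := fun x => ∑ y ∈ Finset.range (n + 1), |F x y|)
    (fun x _ => Finset.sum_nonneg fun y _ => abs_nonneg _) (hk _ hp.1))
  exact Finset.single_le_sum (f := fun y => |F _ y|) (fun y _ => abs_nonneg _) (hk _ hp.2)

lemma step2 {n : ℕ} (hn : 1 ≤ n) (F : ℕ → ℕ → ℝ) :
    ∫ p : ℝ × ℝ, F ⌊(n:ℝ) * p.1⌋₊ ⌊(n:ℝ) * p.2⌋₊ ∂(mI.prod mI)
      = (1 / (n:ℝ)) ^ 2 * ∑ x ∈ Finset.range n, ∑ y ∈ Finset.range n, F x y := by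
  rw [integral_prod _ (step2_int n F)]
  simp_rw [fun u : ℝ => step1 hn (fun y => F ⌊(n:ℝ) * u⌋₊ y)]
  rw [step1 hn (fun x => (1 / (n:ℝ)) * ∑ y ∈ Finset.range n, F x y), ← Finset.mul_sum]
  ring

/-- Discrete difference quotients, viewed as a step function. -/
def stk (γ : ℝ) (n : ℕ) (a : ℕ → ℝ) (x y : ℕ) : ℝ :=
  if 1 ≤ x ∧ 1 ≤ y then (a x - a y) * kap γ (((x:ℝ) - y) / n) else 0

lemma sum_range_eq_Icc {n : ℕ} (f : ℕ → ℝ) (h0 : f 0 = 0) :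
    ∑ x ∈ Finset.range n, f x = ∑ x ∈ Finset.Icc 1 (n - 1), f x := by
  symm
  refine Finset.sum_subset ?_ ?_
  · intro x hx
    rw [Finset.mem_Icc] at hx
    rw [Finset.mem_range]; omega
  · intro x hx hx'
    rw [Finset.mem_range] at hx
    rw [Finset.mem_Icc] at hx'
    have : x = 0 := by omega
    rw [this, h0]

lemma stk_integral {γ : ℝ} {n : ℕ} (hn : 1 ≤ n) (a b : ℕ → ℝ) :
    ∫ p : ℝ × ℝ, stk γ n a ⌊(n:ℝ) * p.1⌋₊ ⌊(n:ℝ) * p.2⌋₊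
      * stk γ n b ⌊(n:ℝ) * p.1⌋₊ ⌊(n:ℝ) * p.2⌋₊ ∂(mI.prod mI)
      = (n:ℝ) ^ (γ - 1) * dform γ n a b := by
  have hn0 : (0:ℝ) < n := by exact_mod_cast hn
  rw [step2 hn (fun x y => stk γ n a x y * stk γ n b x y)]
  rw [sum_range_eq_Icc _ (by simp [stk])]
  have : ∀ x, ∑ y ∈ Finset.range n, stk γ n a x y * stk γ n b x y
      = ∑ y ∈ Finset.Icc 1 (n - 1), stk γ n a x y * stk γ n b x y := fun x =>
    sum_range_eq_Icc _ (by simp [stk])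
  simp_rw [this]
  rw [dform, Finset.mul_sum, Finset.mul_sum]
  refine Finset.sum_congr rfl fun x hx => ?_
  rw [Finset.mul_sum, Finset.mul_sum]
  refine Finset.sum_congr rfl fun y hy => ?_
  have h : 1 ≤ x ∧ 1 ≤ y := ⟨(Finset.mem_Icc.1 hx).1, (Finset.mem_Icc.1 hy).1⟩
  rw [stk, stk, if_pos h, if_pos h, mul_mul_mul_comm, kap_mul, abs_div, Nat.abs_cast,
    Real.div_rpow (abs_nonneg _) hn0.le]
  have : (1 / (n:ℝ)) ^ 2 / (n:ℝ) ^ (-(1 + γ)) = (n:ℝ) ^ (γ - 1) := by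
    rw [one_div, inv_pow, ← Real.rpow_natCast, ← Real.rpow_neg hn0.le, ← Real.rpow_sub hn0]
    congr 1; push_cast; ring
  rw [← this]; ring

lemma floor_dist {n : ℕ} (hn : 1 ≤ n) {u v : ℝ} (hu : 0 ≤ u) (hv : 0 ≤ v) :
    |u - v| ≤ (|(⌊(n:ℝ) * u⌋₊:ℝ) - ⌊(n:ℝ) * v⌋₊| + 1) / n := by
  have hn0 : (0:ℝ) < n := by exact_mod_cast hn
  rw [le_div_iff₀ hn0]
  have a1 := Nat.floor_le (mul_nonneg hn0.le hu)
  have a2 := Nat.lt_floor_add_one ((n:ℝ) * u)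
  have b1 := Nat.floor_le (mul_nonneg hn0.le hv)
  have b2 := Nat.lt_floor_add_one ((n:ℝ) * v)
  have : |u - v| * n = |(n:ℝ) * u - n * v| := by
    rw [← mul_sub, abs_mul, abs_of_pos hn0, mul_comm]
  rw [this, abs_le]
  constructor
  · linarith [neg_abs_le ((⌊(n:ℝ) * u⌋₊:ℝ) - ⌊(n:ℝ) * v⌋₊)]
  · linarith [le_abs_self ((⌊(n:ℝ) * u⌋₊:ℝ) - ⌊(n:ℝ) * v⌋₊)]

lemma step_pow_le {n : ℕ} (hn : 1 ≤ n) {u v β : ℝ} (hu : 0 ≤ u) (hv : 0 ≤ v) (hβ : β < 0) :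
    |((⌊(n:ℝ) * u⌋₊:ℝ) - ⌊(n:ℝ) * v⌋₊) / n| ^ β ≤ 2 ^ (-β) * |u - v| ^ β := by
  have hn0 : (0:ℝ) < n := by exact_mod_cast hn
  by_cases hxy : ⌊(n:ℝ) * u⌋₊ = ⌊(n:ℝ) * v⌋₊
  · rw [hxy, sub_self, zero_div, abs_zero, Real.zero_rpow hβ.ne]
    positivity
  have huv : u ≠ v := fun h => hxy (by rw [h])
  have hd := floor_dist hn hu hv
  have h1 : (1:ℝ) ≤ |(⌊(n:ℝ) * u⌋₊:ℝ) - ⌊(n:ℝ) * v⌋₊| := by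
    have : (1:ℤ) ≤ |(⌊(n:ℝ) * u⌋₊:ℤ) - ⌊(n:ℝ) * v⌋₊| := by
      apply Int.one_le_abs; omega
    exact_mod_cast this
  have hpos : 0 < |u - v| := abs_pos.2 (sub_ne_zero.2 huv)
  have hge : |u - v| / 2 ≤ |((⌊(n:ℝ) * u⌋₊:ℝ) - ⌊(n:ℝ) * v⌋₊) / n| := by
    rw [abs_div, Nat.abs_cast, le_div_iff₀ hn0]
    rw [le_div_iff₀ hn0] at hd
    linarith
  refine (Real.rpow_le_rpow_of_nonpos (by positivity) hge hβ.le).trans (le_of_eq ?_)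
  rw [Real.div_rpow (abs_nonneg _) (by norm_num), Real.rpow_neg (by norm_num)]
  field_simp

lemma stk_bound {γ : ℝ} (hγ : γ ∈ Set.Ioo (1:ℝ) 2) {h : ℝ → ℝ} {L : ℝ} (hL : 0 ≤ L)
    (hLip : ∀ u v, |h v - h u| ≤ L * |v - u|) {n : ℕ} (hn : 1 ≤ n) {u v : ℝ}
    (hu : 0 ≤ u) (hv : 0 ≤ v) :
    |stk γ n (fun x => h ((x:ℝ) / n)) ⌊(n:ℝ) * u⌋₊ ⌊(n:ℝ) * v⌋₊|
      ≤ L * 2 ^ (-((1 - γ) / 2)) * |u - v| ^ ((1 - γ) / 2) := by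
  rw [stk]
  split_ifs with hc
  · rw [abs_mul, abs_of_nonneg (kap_nonneg _ _)]
    set z := ((⌊(n:ℝ) * u⌋₊:ℝ) - ⌊(n:ℝ) * v⌋₊) / n with hz
    have h1 : |h ((⌊(n:ℝ) * u⌋₊:ℝ) / n) - h ((⌊(n:ℝ) * v⌋₊:ℝ) / n)| ≤ L * |z| := by
      refine (hLip _ _).trans (le_of_eq ?_)
      rw [hz, _root_.sub_div]
    calc _ ≤ L * |z| * kap γ z := mul_le_mul_of_nonneg_right h1 (kap_nonneg _ _)
      _ = L * |z| ^ ((1 - γ) / 2) := by rw [mul_assoc, kap_mul_abs hγ]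
      _ ≤ L * (2 ^ (-((1 - γ) / 2)) * |u - v| ^ ((1 - γ) / 2)) :=
        mul_le_mul_of_nonneg_left (step_pow_le hn hu hv (by linarith [hγ.1])) hL
      _ = _ := by ring
  · rw [abs_zero]; positivity

/-- The uniform bound for the energy of Lipschitz functions. -/
lemma lip_energy {γ : ℝ} (hγ : γ ∈ Set.Ioo (1:ℝ) 2) {h : ℝ → ℝ} {L : ℝ} (hL : 0 ≤ L)
    (hLip : ∀ u v, |h v - h u| ≤ L * |v - u|) :
    ∃ C, 0 ≤ C ∧ ∀ n : ℕ, 1 ≤ n → (n:ℝ) ^ (γ - 1) *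
      dform γ n (fun x => h ((x:ℝ) / n)) (fun x => h ((x:ℝ) / n)) ≤ C := by
  have hIntg : Integrable (fun p : ℝ × ℝ => (L * 2 ^ (-((1 - γ) / 2))) ^ 2 * |p.1 - p.2| ^ (1 - γ))
      (mI.prod mI) := (integrable_abs_sub_rpow (by linarith [hγ.2])).const_mul _
  refine ⟨∫ p : ℝ × ℝ, (L * 2 ^ (-((1 - γ) / 2))) ^ 2 * |p.1 - p.2| ^ (1 - γ) ∂(mI.prod mI),
    integral_nonneg fun p => by positivity, fun n hn => ?_⟩
  rw [← stk_integral hn]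
  refine integral_mono_ae (step2_int n (fun x y => stk γ n _ x y * stk γ n _ x y)) hIntg ?_
  filter_upwards [prod_ae_mem] with p hp
  have := stk_bound hγ hL hLip hn hp.1.1 hp.2.1
  rw [← sq_half_pow, ← mul_pow, ← sq, ← sq_abs]
  exact pow_le_pow_left₀ (abs_nonneg _) this 2

end

section

lemma morrey_step {γ : ℝ} (hγ : γ ∈ Set.Ioo (1:ℝ) 2) {η : ℝ} (hη : 0 < η) (hη2 : η < 1 / 2)
    {n : ℕ} {ψ : ℕ → ℝ} {S : ℝ} (hS0 : 0 ≤ S)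
    (hS : ∀ x ∈ Finset.Icc 1 (n - 1), ∀ y ∈ Finset.Icc 1 (n - 1),
      |ψ x - ψ y| ≤ S * |(x:ℝ) - y| ^ ((γ - 1) / 2))
    {a b : ℕ} (ha : a ∈ Finset.Icc 1 (n - 1)) (hb : b ∈ Finset.Icc 1 (n - 1)) (hab : a < b) :
    |ψ a - ψ b| ≤ (2 * η ^ ((γ - 1) / 2) * S + √(dform γ n ψ ψ) / η)
      * ((b:ℝ) - a) ^ ((γ - 1) / 2) := by
  set α := (γ - 1) / 2 with hα
  have hα0 : 0 < α := by rw [hα]; linarith [hγ.1]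
  set d : ℝ := (b:ℝ) - a with hd
  have hd1 : 1 ≤ d := by
    have : (a:ℝ) + 1 ≤ b := by exact_mod_cast hab
    rw [hd]; linarith
  have hd0 : 0 < d := by linarith
  rw [Finset.mem_Icc] at ha hb
  set k := ⌊η * d⌋₊ with hk
  have hk1 : (k:ℝ) ≤ η * d := Nat.floor_le (by positivity)
  have hk2 : η * d < k + 1 := Nat.lt_floor_add_one _
  have hkd : 2 * (k:ℝ) < d := by nlinarith
  have hkd' : 2 * k < b - a := by
    have : ((2 * k : ℕ):ℝ) < ((b - a : ℕ):ℝ) := by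
      rw [Nat.cast_sub hab.le]; push_cast; exact hkd
    exact_mod_cast this
  set R := |ψ a - ψ b| - 2 * S * (η * d) ^ α with hR
  set D := dform γ n ψ ψ with hD
  have hD0 : 0 ≤ D := dform_nonneg _ _ _
  have hDR : (η * d) * R ≤ √(d ^ (1 + γ) * D) := by
    by_cases hR0 : R ≤ 0
    · exact (mul_nonpos_of_nonneg_of_nonpos (by positivity) hR0).trans (Real.sqrt_nonneg _)
    push Not at hR0
    apply Real.le_sqrt_of_sq_le
    set P := Finset.Icc a (a + k) ×ˢ Finset.Icc (b - k) b with hP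
    set s := Finset.Icc 1 (n - 1) with hs
    have hsub : P ⊆ s ×ˢ s := by
      intro q hq
      rw [hP, Finset.mem_product, Finset.mem_Icc, Finset.mem_Icc] at hq
      rw [Finset.mem_product, hs, Finset.mem_Icc, Finset.mem_Icc]
      omega
    have hcard : P.card = (k + 1) * (k + 1) := by
      rw [hP, Finset.card_product, Nat.card_Icc, Nat.card_Icc]
      congr 1 <;> omega
    have hpt : ∀ q ∈ P, R ^ 2 ≤ d ^ (1 + γ) * ((ψ q.1 - ψ q.2) * (ψ q.1 - ψ q.2) *
        |(q.1:ℝ) - q.2| ^ (-(1 + γ))) := by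
      intro q hq
      have hqs := Finset.mem_product.1 (hsub hq)
      rw [hP, Finset.mem_product, Finset.mem_Icc, Finset.mem_Icc] at hq
      have c1 : (a:ℝ) ≤ q.1 := by exact_mod_cast hq.1.1
      have c2 : (q.1:ℝ) ≤ a + k := by exact_mod_cast hq.1.2
      have c3 : (b:ℝ) ≤ q.2 + k := by
        have : b ≤ q.2 + k := by omega
        exact_mod_cast this
      have c4 : (q.2:ℝ) ≤ b := by exact_mod_cast hq.2.2
      have e1 : |ψ a - ψ q.1| ≤ S * (η * d) ^ α := by
        refine (hS a (Finset.mem_Icc.2 ha) _ hqs.1).trans ?_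
        gcongr
        rw [abs_le]; constructor <;> linarith
      have e2 : |ψ q.2 - ψ b| ≤ S * (η * d) ^ α := by
        refine (hS _ hqs.2 b (Finset.mem_Icc.2 hb)).trans ?_
        gcongr
        rw [abs_le]; constructor <;> linarith
      have e3 : R ≤ |ψ q.1 - ψ q.2| := by
        have := abs_sub_le (ψ a) (ψ q.1) (ψ b)
        have := abs_sub_le (ψ q.1) (ψ q.2) (ψ b)
        rw [hR]; linarith
      have e4 : 0 < |(q.1:ℝ) - q.2| := by
        apply abs_pos.2
        have : (q.1:ℝ) < q.2 := by linarith
        linarith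
      have e5 : |(q.1:ℝ) - q.2| ≤ d := by
        rw [abs_le]; constructor <;> linarith
      have e6 : 1 ≤ d ^ (1 + γ) * |(q.1:ℝ) - q.2| ^ (-(1 + γ)) := by
        rw [Real.rpow_neg e4.le, ← div_eq_mul_inv, one_le_div (by positivity)]
        exact Real.rpow_le_rpow e4.le e5 (by linarith [hγ.1])
      calc R ^ 2 ≤ |ψ q.1 - ψ q.2| ^ 2 := by gcongr
        _ = (ψ q.1 - ψ q.2) ^ 2 * 1 := by rw [sq_abs, mul_one]
        _ ≤ (ψ q.1 - ψ q.2) ^ 2 * (d ^ (1 + γ) * |(q.1:ℝ) - q.2| ^ (-(1 + γ))) := by gcongr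
        _ = _ := by ring
    have h1 := Finset.card_nsmul_le_sum P _ _ hpt
    rw [hcard, nsmul_eq_mul, ← Finset.mul_sum] at h1
    have h2 : ∑ q ∈ P, ((ψ q.1 - ψ q.2) * (ψ q.1 - ψ q.2) *
        |(q.1:ℝ) - q.2| ^ (-(1 + γ))) ≤ D := by
      rw [hD, dform, ← Finset.sum_product']
      refine Finset.sum_le_sum_of_subset_of_nonneg hsub fun q _ _ => ?_
      exact mul_nonneg (mul_self_nonneg _) (Real.rpow_nonneg (abs_nonneg _) _)
    have h3 : ((η * d) * R) ^ 2 ≤ (((k + 1) * (k + 1) : ℕ):ℝ) * R ^ 2 := by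
      rw [mul_pow]; push_cast; rw [← sq]
      gcongr
    exact h3.trans (h1.trans (mul_le_mul_of_nonneg_left h2 (by positivity)))
  have hsq : √(d ^ (1 + γ) * D) = d * d ^ α * √D := by
    rw [Real.sqrt_mul (by positivity)]
    congr 1
    rw [Real.sqrt_eq_iff_mul_self_eq (by positivity) (by positivity)]
    have : d ^ (1 + γ) = d ^ 2 * (d ^ α * d ^ α) := by
      rw [← Real.rpow_add hd0, ← Real.rpow_natCast, ← Real.rpow_add hd0]
      congr 1; rw [hα]; push_cast; ring
    rw [this]; ring
  rw [hsq] at hDR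
  have hRle : R ≤ √D / η * d ^ α := by
    have : d * (η * R) ≤ d * (d ^ α * √D) := by linarith
    have := le_of_mul_le_mul_left this hd0
    rw [div_mul_eq_mul_div, le_div_iff₀ hη]
    linarith
  rw [hR, Real.mul_rpow hη.le hd0.le] at hRle
  linarith

lemma morrey {γ : ℝ} (hγ : γ ∈ Set.Ioo (1:ℝ) 2) :
    ∃ K, 0 ≤ K ∧ ∀ (n : ℕ) (ψ : ℕ → ℝ), ∀ a ∈ Finset.Icc 1 (n - 1), ∀ b ∈ Finset.Icc 1 (n - 1),
      |ψ a - ψ b| ≤ K * √(dform γ n ψ ψ) * |(a:ℝ) - b| ^ ((γ - 1) / 2) := by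
  set α := (γ - 1) / 2 with hα
  have hα0 : 0 < α := by rw [hα]; linarith [hγ.1]
  have hα1 : α < 1 / 2 := by rw [hα]; linarith [hγ.2]
  set η : ℝ := (1 / 4) ^ (1 / α) with hη
  have hη0 : 0 < η := by rw [hη]; positivity
  have hηα : η ^ α = 1 / 4 := by
    rw [hη, ← Real.rpow_mul (by norm_num), one_div_mul_cancel hα0.ne', Real.rpow_one]
  have hη2 : η < 1 / 2 := by
    have h1 : η ≤ (1 / 4 : ℝ) ^ (1:ℝ) := by
      apply Real.rpow_le_rpow_of_exponent_ge (by norm_num) (by norm_num)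
      rw [le_div_iff₀ hα0]; linarith
    rw [Real.rpow_one] at h1; linarith
  refine ⟨2 / η, by positivity, fun n ψ a ha b hb => ?_⟩
  set s := Finset.Icc 1 (n - 1) with hs
  set D := dform γ n ψ ψ with hD
  obtain ⟨q, hq, hmax⟩ := Finset.exists_max_image (s ×ˢ s)
    (fun q : ℕ × ℕ => |ψ q.1 - ψ q.2| / |(q.1:ℝ) - q.2| ^ α) ⟨(a, b), by simp [ha, hb]⟩
  set S := |ψ q.1 - ψ q.2| / |(q.1:ℝ) - q.2| ^ α with hSdef
  have hS0 : 0 ≤ S := by rw [hSdef]; positivity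
  have hS : ∀ x ∈ s, ∀ y ∈ s, |ψ x - ψ y| ≤ S * |(x:ℝ) - y| ^ α := by
    intro x hx y hy
    by_cases hxy : x = y
    · rw [hxy]; simp only [sub_self, abs_zero]; positivity
    · have : (0:ℝ) < |(x:ℝ) - y| := abs_pos.2 (sub_ne_zero.2 (by exact_mod_cast hxy))
      have := hmax (x, y) (by simp [hx, hy])
      rwa [div_le_iff₀ (by positivity)] at this
  have key : S ≤ 2 / η * √D := by
    have hmain : ∀ a b : ℕ, a ∈ s → b ∈ s → a < b →
        S = |ψ a - ψ b| / |(a:ℝ) - b| ^ α → S ≤ 2 / η * √D := by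
      intro a b ha hb hab hSab
      have h := morrey_step hγ hη0 hη2 hS0 hS ha hb hab
      have hd : (0:ℝ) < (b:ℝ) - a := sub_pos.2 (by exact_mod_cast hab)
      rw [abs_sub_comm (a:ℝ), abs_of_pos hd] at hSab
      rw [← div_le_iff₀ (by positivity), ← hSab, ← hα, hηα] at h
      have : √D / η = 1 / η * √D := by ring
      rw [← hD, this] at h
      have : 2 / η * √D = 2 * (1 / η * √D) := by ring
      rw [this]
      linarith
    have hq' := Finset.mem_product.1 hq
    rcases lt_trichotomy q.1 q.2 with h | h | h
    · exact hmain _ _ hq'.1 hq'.2 h hSdef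
    · have : S = 0 := by rw [hSdef, h]; simp
      rw [this]; positivity
    · exact hmain _ _ hq'.2 hq'.1 h (by rw [hSdef, abs_sub_comm, abs_sub_comm (q.1:ℝ)])
  exact (hS a ha b hb).trans (by gcongr)

end

section

/-- Projection of the real line on the unit interval. -/
def clamp (t : ℝ) : ℝ := max 0 (min 1 t)

lemma clamp_lip (s t : ℝ) : |clamp s - clamp t| ≤ |s - t| := by
  unfold clamp
  rcases max_cases 0 (min 1 s) with h1 | h1 <;> rcases min_cases 1 s with h2 | h2 <;>
    rcases max_cases 0 (min 1 t) with h3 | h3 <;> rcases min_cases 1 t with h4 | h4 <;>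
    rw [h1.1, h3.1] <;> rw [abs_le] <;>
    rcases abs_cases (s - t) with h5 | h5 <;> constructor <;> linarith

lemma clamp_mem (t : ℝ) : clamp t ∈ Set.Icc (0:ℝ) 1 :=
  ⟨le_max_left _ _, max_le zero_le_one (min_le_left _ _)⟩

lemma clamp_of_mem {t : ℝ} (ht : t ∈ Set.Icc (0:ℝ) 1) : clamp t = t := by
  unfold clamp
  rw [min_eq_right ht.2, max_eq_right ht.1]

lemma apriori {γ Φl Φr : ℝ} (hγ : γ ∈ Set.Ioo (1:ℝ) 2)
    (ψ : ℕ → ℕ → ℝ) (hψ : ∀ n : ℕ, 2 ≤ n → IsDiscreteProfile γ Φl Φr n (ψ n)) :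
    ∃ C K M E : ℝ, 0 ≤ C ∧ 0 ≤ K ∧ 0 ≤ M ∧ 0 ≤ E ∧ ∀ n : ℕ, 4 ≤ n →
      (n:ℝ) ^ (γ - 1) * dform γ n (ψ n) (ψ n) ≤ C ∧
      (∀ a ∈ Finset.Icc 1 (n - 1), ∀ b ∈ Finset.Icc 1 (n - 1),
        |ψ n a - ψ n b| ≤ K * (|(a:ℝ) - b| / n) ^ ((γ - 1) / 2)) ∧
      (∀ a ∈ Finset.Icc 1 (n - 1), |ψ n a| ≤ M) ∧
      (ψ n 1 - Φl) ^ 2 ≤ E * (n:ℝ) ^ (-(γ - 1)) ∧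
      (ψ n (n - 1) - Φr) ^ 2 ≤ E * (n:ℝ) ^ (-(γ - 1)) := by
  have hc := cGamma_pos hγ
  set h : ℝ → ℝ := fun u => Φl + (Φr - Φl) * clamp (2 * u - 1 / 2) with hh
  have hLip : ∀ u v, |h v - h u| ≤ (2 * |Φr - Φl|) * |v - u| := by
    intro u v
    have h1 : h v - h u = (Φr - Φl) * (clamp (2 * v - 1 / 2) - clamp (2 * u - 1 / 2)) := by
      simp only [hh]; ring
    rw [h1, abs_mul]
    have h2 := clamp_lip (2 * v - 1 / 2) (2 * u - 1 / 2)
    have h3 : |2 * v - 1 / 2 - (2 * u - 1 / 2)| = 2 * |v - u| := by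
      rw [show 2 * v - 1 / 2 - (2 * u - 1 / 2) = 2 * (v - u) by ring, abs_mul]; norm_num
    rw [h3] at h2
    nlinarith [abs_nonneg (Φr - Φl)]
  obtain ⟨C, hC0, hC⟩ := lip_energy hγ (by positivity) hLip
  obtain ⟨K, hK0, hK⟩ := morrey hγ
  set α := (γ - 1) / 2 with hα
  have hα0 : 0 < α := by rw [hα]; linarith [hγ.1]
  refine ⟨C, K * √C, |Φl| + √(cGamma γ * C) + K * √C, cGamma γ * C, hC0, by positivity,
    by positivity, by positivity, fun n hn => ?_⟩
  have hn4 : (4:ℝ) ≤ n := by exact_mod_cast hn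
  have hn0 : (0:ℝ) < n := by linarith
  have hb1 : h (((1:ℕ):ℝ) / n) = Φl := by
    have : 2 * (((1:ℕ):ℝ) / n) - 1 / 2 ≤ 0 := by
      have : ((1:ℕ):ℝ) / n ≤ 1 / 4 := by rw [div_le_iff₀ hn0]; push_cast; linarith
      linarith
    simp only [hh, clamp]
    rw [max_eq_left ((min_le_right _ _).trans this)]; ring
  have hb2 : h (((n - 1 : ℕ):ℝ) / n) = Φr := by
    have : 1 ≤ 2 * (((n - 1 : ℕ):ℝ) / n) - 1 / 2 := by
      have : 3 / 4 ≤ ((n - 1 : ℕ):ℝ) / n := by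
        rw [le_div_iff₀ hn0, Nat.cast_sub (by omega)]; push_cast; linarith
      linarith
    simp only [hh, clamp]
    rw [min_eq_left this, max_eq_right zero_le_one]; ring
  obtain ⟨e1, e2, e3⟩ := energy hγ (by omega) (hψ n (by omega))
    (fun x => h ((x:ℝ) / n)) hb1 hb2
  have hCn := hC n (by omega)
  have hnp : 0 < (n:ℝ) ^ (γ - 1) := by positivity
  have hdh : dform γ n (fun x => h ((x:ℝ) / n)) (fun x => h ((x:ℝ) / n))
      ≤ C * (n:ℝ) ^ (-(γ - 1)) := by
    rw [Real.rpow_neg hn0.le, ← div_eq_mul_inv, le_div_iff₀ hnp]; linarith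
  have hE1 : (ψ n 1 - Φl) ^ 2 ≤ cGamma γ * C * (n:ℝ) ^ (-(γ - 1)) := by
    rw [mul_assoc]; exact e2.trans (mul_le_mul_of_nonneg_left hdh hc.le)
  have hE2 : (ψ n (n - 1) - Φr) ^ 2 ≤ cGamma γ * C * (n:ℝ) ^ (-(γ - 1)) := by
    rw [mul_assoc]; exact e3.trans (mul_le_mul_of_nonneg_left hdh hc.le)
  have hH : ∀ a ∈ Finset.Icc 1 (n - 1), ∀ b ∈ Finset.Icc 1 (n - 1),
        |ψ n a - ψ n b| ≤ K * √C * (|(a:ℝ) - b| / n) ^ α := by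
    intro a ha b hb
    refine (hK n (ψ n) a ha b hb).trans ?_
    have : √(dform γ n (ψ n) (ψ n)) ≤ √C * ((n:ℝ) ^ α)⁻¹ := by
      rw [← Real.rpow_neg hn0.le]
      apply Real.sqrt_le_iff.2 ⟨by positivity, ?_⟩
      rw [mul_pow, Real.sq_sqrt hC0, sq, ← Real.rpow_add hn0]
      refine (e1.trans hdh).trans (le_of_eq ?_)
      congr 2; rw [hα]; ring
    rw [Real.div_rpow (abs_nonneg _) hn0.le]
    calc _ ≤ K * (√C * ((n:ℝ) ^ α)⁻¹) * |(a:ℝ) - b| ^ α := by gcongr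
      _ = _ := by ring
  refine ⟨(mul_le_mul_of_nonneg_left e1 hnp.le).trans hCn, hH, ?_, hE1, hE2⟩
  intro a ha
  have h1 : |ψ n 1 - Φl| ≤ √(cGamma γ * C) := by
    apply Real.abs_le_sqrt
    refine hE1.trans ?_
    have : (n:ℝ) ^ (-(γ - 1)) ≤ 1 :=
      Real.rpow_le_one_of_one_le_of_nonpos (by linarith) (by linarith [hγ.1])
    exact mul_le_of_le_one_right (by positivity) this
  have h2 : |ψ n a - ψ n 1| ≤ K * √C := by
    refine (hH a ha 1 (Finset.mem_Icc.2 (by omega))).trans ?_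
    apply mul_le_of_le_one_right (by positivity)
    apply Real.rpow_le_one (by positivity) _ hα0.le
    rw [div_le_one hn0]
    rw [Finset.mem_Icc] at ha
    have h3 : (1:ℝ) ≤ a := by exact_mod_cast ha.1
    have h4 : (a:ℝ) ≤ n := by
      have : a ≤ n := by omega
      exact_mod_cast this
    rw [abs_le]; push_cast; constructor <;> linarith
  have h3 : ψ n a = Φl + (ψ n 1 - Φl) + (ψ n a - ψ n 1) := by ring
  rw [h3]
  refine (abs_add_le _ _).trans (add_le_add ((abs_add_le _ _).trans (add_le_add le_rfl h1)) h2)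

/-- The cell index. -/
def cl (n : ℕ) (u : ℝ) : ℕ := max 1 (min (n - 1) ⌊(n:ℝ) * clamp u⌋₊)

lemma cl_mem {n : ℕ} (hn : 4 ≤ n) (u : ℝ) : cl n u ∈ Finset.Icc 1 (n - 1) := by
  rw [Finset.mem_Icc, cl]; omega

lemma cl_dist {n : ℕ} (hn : 4 ≤ n) (u v : ℝ) :
    |(cl n u : ℝ) - cl n v| / n ≤ |u - v| + 1 / n := by
  have hn0 : (0:ℝ) < n := by exact_mod_cast (show 0 < n by omega)
  rw [div_le_iff₀ hn0, add_mul, one_div_mul_cancel hn0.ne']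
  set x := ⌊(n:ℝ) * clamp u⌋₊ with hx
  set y := ⌊(n:ℝ) * clamp v⌋₊ with hy
  have h1 : |(cl n u : ℝ) - cl n v| ≤ |(x:ℝ) - y| := by
    have : |(cl n u : ℤ) - cl n v| ≤ |(x:ℤ) - y| := by
      rw [cl, cl, ← hx, ← hy, abs_le]
      rcases abs_cases ((x:ℤ) - y) with h | h <;> constructor <;> omega
    exact_mod_cast this
  refine h1.trans ?_
  have a1 := Nat.floor_le (mul_nonneg hn0.le (clamp_mem u).1)
  have a2 := Nat.lt_floor_add_one ((n:ℝ) * clamp u)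
  have b1 := Nat.floor_le (mul_nonneg hn0.le (clamp_mem v).1)
  have b2 := Nat.lt_floor_add_one ((n:ℝ) * clamp v)
  rw [← hx] at a1 a2
  rw [← hy] at b1 b2
  have h3 : |clamp u - clamp v| * n = |(n:ℝ) * clamp u - n * clamp v| := by
    rw [← mul_sub, abs_mul, abs_of_pos hn0, mul_comm]
  have h4 := mul_le_mul_of_nonneg_right (clamp_lip u v) hn0.le
  rw [h3] at h4
  have h5 := abs_le.1 h4
  rw [abs_le]; constructor <;> linarith

lemma cl_eq {n : ℕ} (hn : 4 ≤ n) {u : ℝ} (hu : u ∈ Set.Icc (0:ℝ) 1) (hu1 : u < 1)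
    (h1 : 1 ≤ ⌊(n:ℝ) * u⌋₊) : cl n u = ⌊(n:ℝ) * u⌋₊ := by
  have hn0 : (0:ℝ) < n := by exact_mod_cast (show 0 < n by omega)
  have hk : ⌊(n:ℝ) * u⌋₊ < n := by
    rw [Nat.floor_lt (mul_nonneg hn0.le hu.1)]; nlinarith
  rw [cl, clamp_of_mem hu]; omega

lemma arzela {K M α : ℝ} (hα : 0 < α) (fs : ℕ → ℝ → ℝ) (ε : ℕ → ℝ)
    (hε : Tendsto ε atTop (nhds 0))
    (hM : ∀ j u, |fs j u| ≤ M)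
    (hK : ∀ j u v, |fs j u - fs j v| ≤ K * (|u - v| + ε j) ^ α) :
    ∃ θ : ℕ → ℕ, StrictMono θ ∧ ∃ f : ℝ → ℝ, Continuous f ∧
      ∀ u, Tendsto (fun j => fs (θ j) u) atTop (nhds (f u)) := by
  have hcpt : IsCompact (Set.pi Set.univ (fun _ : ℚ => Set.Icc (-M) M)) :=
    isCompact_univ_pi fun _ => isCompact_Icc
  obtain ⟨f0, _, θ, hθ, hlim⟩ := hcpt.tendsto_subseq (x := fun j (q : ℚ) => fs j q)
    (fun j q _ => abs_le.1 (hM j q))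
  rw [tendsto_pi_nhds] at hlim
  have hεθ : Tendsto (fun j => ε (θ j)) atTop (nhds 0) := hε.comp hθ.tendsto_atTop
  have hpow : ∀ c : ℝ, Tendsto (fun j => K * (c + ε (θ j)) ^ α) atTop (nhds (K * c ^ α)) := by
    intro c
    have h1 : Tendsto (fun j => c + ε (θ j)) atTop (nhds c) := by
      simpa using tendsto_const_nhds.add hεθ
    exact (h1.rpow_const (Or.inr hα.le)).const_mul K
  have hcont0 : Tendsto (fun c : ℝ => K * c ^ α) (nhds 0) (nhds 0) := by
    have : Tendsto (fun c : ℝ => K * c ^ α) (nhds 0) (nhds (K * (0:ℝ) ^ α)) :=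
      (tendsto_id.rpow_const (Or.inr hα.le)).const_mul K
    rwa [Real.zero_rpow hα.ne', mul_zero] at this
  have hcau : ∀ u, CauchySeq (fun j => fs (θ j) u) := by
    intro u
    rw [Metric.cauchySeq_iff']
    intro e he
    have h1 : ∀ᶠ c in nhds (0:ℝ), K * c ^ α < e / 4 :=
      hcont0.eventually_lt_const (by linarith)
    obtain ⟨δ, hδ, hδ'⟩ := Metric.eventually_nhds_iff.1 h1
    obtain ⟨q, hq1, hq2⟩ := exists_rat_btwn (show u < u + δ by linarith)
    have hq : |u - q| < δ := by rw [abs_lt]; constructor <;> linarith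
    have h2 : K * |u - q| ^ α < e / 4 := hδ' (by rw [Real.dist_0_eq_abs, abs_abs]; exact hq)
    have h3 := (hpow |u - q|).eventually_lt_const h2
    have h4 := (Metric.tendsto_nhds.1 (hlim q)) (e / 4) (by linarith)
    obtain ⟨N, hN⟩ := eventually_atTop.1 (h3.and h4)
    refine ⟨N, fun j hj => ?_⟩
    obtain ⟨a1, a2⟩ := hN j hj
    obtain ⟨b1, b2⟩ := hN N le_rfl
    have a3 := hK (θ j) u q
    have b3 := hK (θ N) u q
    simp only [Function.comp, Real.dist_eq] at a2 b2 ⊢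
    rw [abs_lt] at a2 b2 ⊢
    rw [abs_le] at a3 b3
    constructor <;> linarith
  choose f hf using fun u => cauchySeq_tendsto_of_complete (hcau u)
  refine ⟨θ, hθ, f, ?_, hf⟩
  have hh : ∀ u v, |f u - f v| ≤ K * |u - v| ^ α := fun u v =>
    le_of_tendsto_of_tendsto' ((hf u).sub (hf v)).abs (hpow _) (fun j => hK _ _ _)
  rw [continuous_iff_continuousAt]
  intro u
  rw [ContinuousAt, tendsto_iff_norm_sub_tendsto_zero]
  refine squeeze_zero (fun _ => norm_nonneg _) (fun v => hh v u) ?_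
  refine hcont0.comp ?_
  have : Tendsto (fun v : ℝ => |v - u|) (nhds u) (nhds |u - u|) :=
    (Continuous.abs (continuous_id.sub continuous_const)).tendsto u
  simpa using this

end

section

lemma mI_Ioo : ∀ᵐ u ∂mI, u ∈ Set.Ioo (0:ℝ) 1 := by
  have h0 : ∀ᵐ u ∂mI, u ≠ 0 := ae_restrict_of_ae (by simp [ae_iff])
  have h1 : ∀ᵐ u ∂mI, u ≠ 1 := ae_restrict_of_ae (by simp [ae_iff])
  filter_upwards [h0, h1, ae_restrict_mem measurableSet_Icc] with u a b c
  exact ⟨lt_of_le_of_ne c.1 (Ne.symm a), lt_of_le_of_ne c.2 b⟩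

lemma prod_ae_good : ∀ᵐ p ∂(mI.prod mI), p.1 ∈ Set.Ioo (0:ℝ) 1 ∧ p.2 ∈ Set.Ioo (0:ℝ) 1 ∧
    p.1 ≠ p.2 := by
  have h1 : ∀ᵐ p ∂(mI.prod mI), p.1 ∈ Set.Ioo (0:ℝ) 1 :=
    Measure.quasiMeasurePreserving_fst.ae mI_Ioo
  have h2 : ∀ᵐ p ∂(mI.prod mI), p.2 ∈ Set.Ioo (0:ℝ) 1 :=
    Measure.quasiMeasurePreserving_snd.ae mI_Ioo
  have h3 : ∀ᵐ p ∂(mI.prod mI), p ∈ {p : ℝ × ℝ | p.1 ≠ p.2} := by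
    have hms : MeasurableSet {p : ℝ × ℝ | p.1 ≠ p.2} :=
      (measurableSet_eq_fun measurable_fst measurable_snd).compl
    rw [Measure.ae_prod_mem_iff_ae_ae_mem hms]
    refine Eventually.of_forall fun u => ae_restrict_of_ae ?_
    simp [ae_iff]
  filter_upwards [h1, h2, h3] with p a b c
  exact ⟨a, b, c⟩

lemma clamp_continuous : Continuous clamp := by
  unfold clamp; fun_prop

lemma stationary {γ Φl Φr : ℝ} (hγ : γ ∈ Set.Ioo (1:ℝ) 2) {Φss : ℝ → ℝ}
    (hss : IsStationarySolution γ Φl Φr Φss) :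
    ∃ F : ℝ → ℝ, Continuous F ∧ F 0 = Φl ∧ F 1 = Φr ∧ (∀ᵐ u ∂mI, Φss u = F u) ∧
      MemLp (fun p : ℝ × ℝ => (F p.1 - F p.2) * kap γ (p.1 - p.2)) 2 (mI.prod mI) ∧
      ∀ φ, IsSpatialTest φ → ∫ p : ℝ × ℝ, ((F p.1 - F p.2) * kap γ (p.1 - p.2)) *
        ((φ p.1 - φ p.2) * kap γ (p.1 - p.2)) ∂(mI.prod mI) = 0 := by
  obtain ⟨⟨hmeas, hsob⟩, ⟨Fc, hFc, hae, hF0, hF1⟩, horth⟩ := hss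
  have hc := cGamma_pos hγ
  set F : ℝ → ℝ := fun u => Fc (clamp u) with hFdef
  have hFcont : Continuous F := hFc.comp_continuous clamp_continuous clamp_mem
  obtain ⟨M, hM⟩ := isCompact_Icc.exists_bound_of_continuousOn hFc
  have haeF : ∀ᵐ u ∂mI, Φss u = F u := by
    filter_upwards [hae, ae_restrict_mem measurableSet_Icc] with u h1 h2
    rw [h1, hFdef]; simp only [clamp_of_mem h2]
  have hfin : fracSeminormSq γ Φss < ⊤ := lt_of_le_of_lt le_add_self hsob
  have hkm := measurable_kap γ
  have hmΦ : Measurable (fun p : ℝ × ℝ => (Φss p.1 - Φss p.2) * kap γ (p.1 - p.2)) := by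
    fun_prop
  have hE0 : MemLp (fun p : ℝ × ℝ => (Φss p.1 - Φss p.2) * kap γ (p.1 - p.2)) 2
      (mI.prod mI) := by
    refine ⟨hmΦ.aestronglyMeasurable, lt_of_le_of_lt (eLpNorm_two_le le_rfl)
      (ENNReal.rpow_lt_top_of_nonneg (by norm_num) (ne_of_lt ?_))⟩
    have h1 : ∀ p : ℝ × ℝ, ENNReal.ofReal (((Φss p.1 - Φss p.2) * kap γ (p.1 - p.2)) ^ 2)
        = ENNReal.ofReal (2 / cGamma γ) * ENNReal.ofReal ((cGamma γ / 2)
          * (Φss p.1 - Φss p.2) ^ 2 * |p.1 - p.2| ^ (-(1 + γ))) := by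
      intro p
      rw [← ENNReal.ofReal_mul (by positivity), mul_pow, sq (kap γ _), kap_mul]
      congr 1; field_simp
    simp_rw [h1]
    rw [lintegral_const_mul' _ _ ENNReal.ofReal_ne_top]
    refine ENNReal.mul_lt_top ENNReal.ofReal_lt_top ?_
    rw [lintegral_prod _ (by
      refine Measurable.aemeasurable ?_
      fun_prop)]
    exact hfin
  have hE : MemLp (fun p : ℝ × ℝ => (F p.1 - F p.2) * kap γ (p.1 - p.2)) 2 (mI.prod mI) := by
    refine hE0.ae_eq ?_
    have a1 : ∀ᵐ p ∂(mI.prod mI), Φss p.1 = F p.1 := Measure.quasiMeasurePreserving_fst.ae haeF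
    have a2 : ∀ᵐ p ∂(mI.prod mI), Φss p.2 = F p.2 := Measure.quasiMeasurePreserving_snd.ae haeF
    filter_upwards [a1, a2] with p b1 b2
    rw [b1, b2]
  refine ⟨F, hFcont, ?_, ?_, haeF, hE, fun φ hφ => ?_⟩
  · rw [hFdef]; simp only [clamp_of_mem (show (0:ℝ) ∈ Set.Icc (0:ℝ) 1 by simp), hF0]
  · rw [hFdef]; simp only [clamp_of_mem (show (1:ℝ) ∈ Set.Icc (0:ℝ) 1 by simp), hF1]
  · refine ibp hγ hFcont (M := M) (fun u => hM _ (clamp_mem u)) hE hφ ?_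
    rw [← horth φ hφ]
    refine integral_congr_ae ?_
    filter_upwards [haeF] with u hu
    rw [hu]

lemma zero_test : IsSpatialTest (fun _ => 0) :=
  ⟨contDiff_const, ∅, isCompact_empty, Set.empty_subset _, by simp⟩

lemma tendsto_floor_div {N : ℕ → ℕ} (hN : Tendsto N atTop atTop) {u : ℝ} (hu : 0 ≤ u) :
    Tendsto (fun j => (⌊(N j:ℝ) * u⌋₊:ℝ) / (N j:ℝ)) atTop (nhds u) := by
  have h1 := (tendsto_nat_floor_mul_div_atTop hu).comp
    (tendsto_natCast_atTop_atTop.comp hN)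
  refine h1.congr fun j => ?_
  simp only [Function.comp, mul_comm]

lemma eventually_floor {N : ℕ → ℕ} (hN : Tendsto N atTop atTop) {u : ℝ} (hu : 0 < u) :
    ∀ᶠ j in atTop, 1 ≤ ⌊(N j:ℝ) * u⌋₊ := by
  have h1 : Tendsto (fun j => (N j:ℝ) * u) atTop atTop :=
    (tendsto_natCast_atTop_atTop.comp hN).atTop_mul_const hu
  filter_upwards [h1.eventually_ge_atTop 1] with j hj
  exact (Nat.one_le_floor_iff _).2 hj

lemma eventually_psi {ψ : ℕ → ℕ → ℝ} {N : ℕ → ℕ} (hN4 : ∀ j, 4 ≤ N j)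
    (hN : Tendsto N atTop atTop) {f : ℝ → ℝ}
    (hlim : ∀ u, Tendsto (fun j => ψ (N j) (cl (N j) u)) atTop (nhds (f u)))
    {u : ℝ} (hu : u ∈ Set.Ioo (0:ℝ) 1) :
    Tendsto (fun j => ψ (N j) ⌊(N j:ℝ) * u⌋₊) atTop (nhds (f u)) := by
  refine (hlim u).congr' ?_
  filter_upwards [eventually_floor hN hu.1] with j hj
  rw [cl_eq (hN4 j) ⟨hu.1.le, hu.2.le⟩ hu.2 hj]

lemma kap_continuousAt (γ : ℝ) {z : ℝ} (hz : z ≠ 0) : ContinuousAt (kap γ) z := by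
  unfold kap
  exact (continuous_abs.continuousAt).rpow_const (Or.inl (abs_ne_zero.2 hz))

lemma stk_tendsto {γ : ℝ} {a : ℕ → ℕ → ℝ} {N : ℕ → ℕ}
    (hN : Tendsto N atTop atTop) {f : ℝ → ℝ} {p : ℝ × ℝ}
    (hp : p.1 ∈ Set.Ioo (0:ℝ) 1 ∧ p.2 ∈ Set.Ioo (0:ℝ) 1 ∧ p.1 ≠ p.2)
    (h1 : Tendsto (fun j => a j ⌊(N j:ℝ) * p.1⌋₊) atTop (nhds (f p.1)))
    (h2 : Tendsto (fun j => a j ⌊(N j:ℝ) * p.2⌋₊) atTop (nhds (f p.2))) :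
    Tendsto (fun j => stk γ (N j) (a j) ⌊(N j:ℝ) * p.1⌋₊ ⌊(N j:ℝ) * p.2⌋₊) atTop
      (nhds ((f p.1 - f p.2) * kap γ (p.1 - p.2))) := by
  have h3 : Tendsto (fun j => ((⌊(N j:ℝ) * p.1⌋₊:ℝ) - (⌊(N j:ℝ) * p.2⌋₊:ℝ)) / (N j:ℝ)) atTop
      (nhds (p.1 - p.2)) := by
    refine ((tendsto_floor_div hN hp.1.1.le).sub (tendsto_floor_div hN hp.2.1.1.le)).congr
      fun j => ?_
    rw [_root_.sub_div]
  have h4 := (kap_continuousAt γ (sub_ne_zero.2 hp.2.2)).tendsto.comp h3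
  refine ((h1.sub h2).mul h4).congr' ?_
  filter_upwards [eventually_floor hN hp.1.1, eventually_floor hN hp.2.1.1] with j h5 h6
  rw [stk, if_pos ⟨h5, h6⟩]; rfl

lemma core {γ Φl Φr : ℝ} (hγ : γ ∈ Set.Ioo (1:ℝ) 2)
    {ψ : ℕ → ℕ → ℝ} (hψ : ∀ n : ℕ, 2 ≤ n → IsDiscreteProfile γ Φl Φr n (ψ n))
    {C : ℝ} (hC : ∀ n : ℕ, 4 ≤ n → (n:ℝ) ^ (γ - 1) * dform γ n (ψ n) (ψ n) ≤ C)
    {N : ℕ → ℕ} (hN4 : ∀ j, 4 ≤ N j) (hN : Tendsto N atTop atTop) {f : ℝ → ℝ}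
    (hlim : ∀ u, Tendsto (fun j => ψ (N j) (cl (N j) u)) atTop (nhds (f u)))
    {φ : ℝ → ℝ} (hφ : IsSpatialTest φ) :
    MemLp (fun p : ℝ × ℝ => (f p.1 - f p.2) * kap γ (p.1 - p.2)) 2 (mI.prod mI) ∧
      ∫ p : ℝ × ℝ, ((f p.1 - f p.2) * kap γ (p.1 - p.2)) *
        ((φ p.1 - φ p.2) * kap γ (p.1 - p.2)) ∂(mI.prod mI) = 0 := by
  obtain ⟨η, hη, hφ0, -, C0, C1, C2, -, hC1, -, -, hLip, -⟩ := test_props hφ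
  have hφc : Continuous φ := hφ.1.continuous
  have hc := cGamma_pos hγ
  have hg : MemLp (fun p : ℝ × ℝ => C1 * 2 ^ (-((1 - γ) / 2)) * |p.1 - p.2| ^ ((1 - γ) / 2)) 2
      (mI.prod mI) := by
    refine MemLp.const_mul ?_ _
    have hm : Measurable (fun p : ℝ × ℝ => |p.1 - p.2| ^ ((1 - γ) / 2)) := by fun_prop
    rw [memLp_two_iff_integrable_sq hm.aestronglyMeasurable]
    simp_rw [sq_half_pow]
    exact integrable_abs_sub_rpow (by linarith [hγ.2])
  have hw := weak_conv (μ := mI.prod mI)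
    (a := fun j p => stk γ (N j) (ψ (N j)) ⌊(N j:ℝ) * p.1⌋₊ ⌊(N j:ℝ) * p.2⌋₊)
    (b := fun j p => stk γ (N j) (fun x => φ ((x:ℝ) / (N j))) ⌊(N j:ℝ) * p.1⌋₊
      ⌊(N j:ℝ) * p.2⌋₊)
    (a' := fun p => (f p.1 - f p.2) * kap γ (p.1 - p.2))
    (b' := fun p => (φ p.1 - φ p.2) * kap γ (p.1 - p.2))
    (C := (ENNReal.ofReal C) ^ (1 / 2 : ℝ))
    (ENNReal.rpow_ne_top_of_nonneg (by norm_num) ENNReal.ofReal_ne_top)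
    (fun j => (step2_meas (N j) (stk γ (N j) (ψ (N j)))).aestronglyMeasurable)
    (fun j => (step2_meas (N j) (stk γ (N j) _)).aestronglyMeasurable)
    (fun j => by
      apply eLpNorm_two_le
      rw [← ofReal_integral_eq_lintegral_ofReal
        (step2_int (N j) (fun x y => (stk γ (N j) (ψ (N j)) x y) ^ 2))
        (Eventually.of_forall fun _ => sq_nonneg _)]
      apply ENNReal.ofReal_le_ofReal
      refine le_trans (le_of_eq ?_) (hC (N j) (hN4 j))
      rw [← stk_integral (by have := hN4 j; omega)]
      simp_rw [sq])
    (by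
      filter_upwards [prod_ae_good] with p hp
      exact stk_tendsto (a := fun j => ψ (N j)) hN hp (eventually_psi hN4 hN hlim hp.1)
        (eventually_psi hN4 hN hlim hp.2.1))
    (by
      filter_upwards [prod_ae_good] with p hp
      exact stk_tendsto (a := fun j x => φ ((x:ℝ) / (N j))) hN hp
        ((hφc.tendsto _).comp (tendsto_floor_div hN hp.1.1.le))
        ((hφc.tendsto _).comp (tendsto_floor_div hN hp.2.1.1.le)))
    hg
    (fun j => by
      filter_upwards [prod_ae_mem] with p hp
      exact stk_bound hγ hC1 hLip (by have := hN4 j; omega) hp.1.1 hp.2.1)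
  refine ⟨hw.1, tendsto_nhds_unique hw.2 ?_⟩
  refine tendsto_const_nhds.congr' ?_
  have hinv : Tendsto (fun j => 1 / (N j:ℝ)) atTop (nhds 0) :=
    tendsto_one_div_atTop_nhds_zero_nat.comp hN
  filter_upwards [hinv.eventually_lt_const hη] with j hj
  have h4 := hN4 j
  have hj0 : (0:ℝ) < N j := by exact_mod_cast (show 0 < N j by omega)
  symm
  rw [stk_integral (by omega)]
  have h5 := sbp hγ (by omega) (hψ (N j) (by omega)) (fun x => φ ((x:ℝ) / (N j)))
  have h6 : φ (((1:ℕ):ℝ) / (N j)) = 0 := by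
    apply hφ0; rintro ⟨h, -⟩; push_cast at h; linarith
  have h7 : φ (((N j - 1 : ℕ):ℝ) / (N j)) = 0 := by
    apply hφ0; rintro ⟨-, h⟩
    rw [Nat.cast_sub (by omega), _root_.sub_div, div_self hj0.ne'] at h
    push_cast at h; linarith
  simp only [h6, h7, zero_mul, add_zero, mul_zero] at h5
  rcases mul_eq_zero.1 h5 with h | h
  · exact absurd h hc.ne'
  · rw [h, mul_zero]

lemma sq_lim {E δ a : ℝ} (hδ : 0 < δ) {N : ℕ → ℕ} (hN : Tendsto N atTop atTop) {t : ℕ → ℝ}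
    (h : ∀ j, (t j - a) ^ 2 ≤ E * (N j:ℝ) ^ (-δ)) : Tendsto t atTop (nhds a) := by
  have h1 : Tendsto (fun j => E * (N j:ℝ) ^ (-δ)) atTop (nhds 0) := by
    have := ((tendsto_rpow_neg_atTop hδ).comp (tendsto_natCast_atTop_atTop.comp hN)).const_mul E
    simpa using this
  have h2 : Tendsto (fun j => (t j - a) ^ 2) atTop (nhds 0) :=
    squeeze_zero (fun _ => sq_nonneg _) h h1
  have h3 := h2.sqrt
  simp only [Real.sqrt_sq_eq_abs, Real.sqrt_zero] at h3
  rw [tendsto_iff_norm_sub_tendsto_zero]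
  exact h3

lemma limit_eq {γ : ℝ} (hγ : γ ∈ Set.Ioo (1:ℝ) 2) {f F : ℝ → ℝ}
    (hf : Continuous f) (hF : Continuous F) (h0 : f 0 = F 0) (h1 : f 1 = F 1)
    (hEf : MemLp (fun p : ℝ × ℝ => (f p.1 - f p.2) * kap γ (p.1 - p.2)) 2 (mI.prod mI))
    (hEF : MemLp (fun p : ℝ × ℝ => (F p.1 - F p.2) * kap γ (p.1 - p.2)) 2 (mI.prod mI))
    (hof : ∀ φ, IsSpatialTest φ → ∫ p : ℝ × ℝ, ((f p.1 - f p.2) * kap γ (p.1 - p.2)) *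
        ((φ p.1 - φ p.2) * kap γ (p.1 - p.2)) ∂(mI.prod mI) = 0)
    (hoF : ∀ φ, IsSpatialTest φ → ∫ p : ℝ × ℝ, ((F p.1 - F p.2) * kap γ (p.1 - p.2)) *
        ((φ p.1 - φ p.2) * kap γ (p.1 - p.2)) ∂(mI.prod mI) = 0) :
    ∀ u ∈ Set.Icc (0:ℝ) 1, f u = F u := by
  set W : ℝ → ℝ := fun u => f (clamp u) - F (clamp u) with hW
  have hWc : Continuous W := (hf.comp clamp_continuous).sub (hF.comp clamp_continuous)
  have hW0 : ∀ u ∉ Set.Ioo (0:ℝ) 1, W u = 0 := by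
    intro u hu
    have : u ≤ 0 ∨ 1 ≤ u := by
      by_contra hcon; push Not at hcon; exact hu hcon
    rcases this with h | h
    · have : clamp u = 0 := by
        unfold clamp; exact max_eq_left ((min_le_right _ _).trans h)
      rw [hW]; simp only [this, h0, sub_self]
    · have : clamp u = 1 := by
        unfold clamp; rw [min_eq_left h, max_eq_right zero_le_one]
      rw [hW]; simp only [this, h1, sub_self]
  have hae : ∀ᵐ p ∂(mI.prod mI), ((f p.1 - f p.2) * kap γ (p.1 - p.2))
      - ((F p.1 - F p.2) * kap γ (p.1 - p.2)) = (W p.1 - W p.2) * kap γ (p.1 - p.2) := by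
    filter_upwards [prod_ae_mem] with p hp
    rw [hW]; simp only [clamp_of_mem hp.1, clamp_of_mem hp.2]; ring
  have hz := uniq hγ hWc hW0 ((hEf.sub hEF).ae_eq hae) (fun φ hφ => by
    obtain ⟨η, hη, hφ0, -, C0, C1, C2, -, hC1, -, -, hLip, -⟩ := test_props hφ
    have hφc : Continuous φ := hφ.1.continuous
    have hkm := measurable_kap γ
    have hφm := hφc.measurable
    have hb : MemLp (fun p : ℝ × ℝ => (φ p.1 - φ p.2) * kap γ (p.1 - p.2)) 2 (mI.prod mI) := by
      have hm : Measurable (fun p : ℝ × ℝ => |p.1 - p.2| ^ ((1 - γ) / 2)) := by fun_prop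
      have hg : MemLp (fun p : ℝ × ℝ => C1 * |p.1 - p.2| ^ ((1 - γ) / 2)) 2
          (mI.prod mI) := by
        refine MemLp.const_mul ?_ _
        rw [memLp_two_iff_integrable_sq hm.aestronglyMeasurable]
        simp_rw [sq_half_pow]
        exact integrable_abs_sub_rpow (by linarith [hγ.2])
      have hbm : Measurable (fun p : ℝ × ℝ => (φ p.1 - φ p.2) * kap γ (p.1 - p.2)) := by fun_prop
      refine hg.mono hbm.aestronglyMeasurable (Eventually.of_forall fun p => ?_)
      rw [Real.norm_eq_abs, Real.norm_eq_abs, abs_mul, abs_of_nonneg (kap_nonneg _ _),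
        abs_of_nonneg (show 0 ≤ C1 * |p.1 - p.2| ^ ((1 - γ) / 2) by positivity),
        ← kap_mul_abs hγ, ← mul_assoc]
      exact mul_le_mul_of_nonneg_right (hLip _ _) (kap_nonneg _ _)
    have e : ∀ᵐ p ∂(mI.prod mI), (W p.1 - W p.2) * kap γ (p.1 - p.2) *
        ((φ p.1 - φ p.2) * kap γ (p.1 - p.2))
        = ((f p.1 - f p.2) * kap γ (p.1 - p.2)) * ((φ p.1 - φ p.2) * kap γ (p.1 - p.2))
        - ((F p.1 - F p.2) * kap γ (p.1 - p.2)) * ((φ p.1 - φ p.2) * kap γ (p.1 - p.2)) := by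
      filter_upwards [hae] with p hp
      rw [← hp]; ring
    have i1 : Integrable (fun p : ℝ × ℝ => ((f p.1 - f p.2) * kap γ (p.1 - p.2)) *
        ((φ p.1 - φ p.2) * kap γ (p.1 - p.2))) (mI.prod mI) := hEf.integrable_mul hb
    have i2 : Integrable (fun p : ℝ × ℝ => ((F p.1 - F p.2) * kap γ (p.1 - p.2)) *
        ((φ p.1 - φ p.2) * kap γ (p.1 - p.2))) (mI.prod mI) := hEF.integrable_mul hb
    rw [integral_congr_ae e, integral_sub i1 i2, hof φ hφ, hoF φ hφ, sub_zero])
  intro u hu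
  have := hz u
  rw [hW] at this
  simp only [clamp_of_mem hu] at this
  linarith

end

section

lemma final_conv {ψ : ℕ → ℕ → ℝ} {M : ℝ}
    (hM : ∀ n : ℕ, 4 ≤ n → ∀ a ∈ Finset.Icc 1 (n - 1), |ψ n a| ≤ M) (hM0 : 0 ≤ M)
    {N : ℕ → ℕ} (hN4 : ∀ j, 4 ≤ N j) (hN : Tendsto N atTop atTop) {f : ℝ → ℝ}
    (hlim : ∀ u, Tendsto (fun j => ψ (N j) (cl (N j) u)) atTop (nhds (f u)))
    {G : ℝ → ℝ} (hG : ContinuousOn G (Set.Icc 0 1)) :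
    Tendsto (fun j => (1 / (N j : ℝ)) *
        ∑ x ∈ Finset.Icc 1 (N j - 1), G ((x : ℝ) / (N j : ℝ)) * ψ (N j) x)
      atTop (nhds (∫ u, G u * f u ∂mI)) := by
  obtain ⟨B, hB⟩ := isCompact_Icc.exists_bound_of_continuousOn hG
  have hB0 : 0 ≤ B := (norm_nonneg _).trans (hB 0 (by simp))
  set Gc : ℝ → ℝ := fun u => G (clamp u) with hGc
  have hGcc : Continuous Gc := hG.comp_continuous clamp_continuous clamp_mem
  set H : ℕ → ℕ → ℝ := fun j x => if 1 ≤ x then Gc ((x:ℝ) / (N j)) * ψ (N j) x else 0 with hH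
  have hsum : ∀ j, (1 / (N j : ℝ)) *
      ∑ x ∈ Finset.Icc 1 (N j - 1), G ((x : ℝ) / (N j : ℝ)) * ψ (N j) x
      = ∫ u, H j ⌊(N j:ℝ) * u⌋₊ ∂mI := by
    intro j
    have h4 := hN4 j
    have hj0 : (0:ℝ) < N j := by exact_mod_cast (show 0 < N j by omega)
    rw [step1 (by omega) (H j), sum_range_eq_Icc (H j) (by simp [hH])]
    congr 1
    refine Finset.sum_congr rfl fun x hx => ?_
    rw [Finset.mem_Icc] at hx
    simp only [hH, hGc, if_pos hx.1]
    rw [clamp_of_mem]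
    refine ⟨by positivity, ?_⟩
    rw [div_le_one hj0]
    exact_mod_cast (show x ≤ N j by omega)
  simp_rw [hsum]
  refine tendsto_integral_of_dominated_convergence (fun _ => B * M) (fun j => ?_)
    (integrable_const _) (fun j => ?_) ?_
  · have h1 : Measurable (H j) := measurable_of_countable _
    exact (h1.comp (Nat.measurable_floor.comp
      (measurable_id.const_mul (N j:ℝ)))).aestronglyMeasurable
  · filter_upwards [mI_Ioo] with u hu
    have h4 := hN4 j
    have hj0 : (0:ℝ) < N j := by exact_mod_cast (show 0 < N j by omega)
    simp only [hH]
    split_ifs with h1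
    · have hk : ⌊(N j:ℝ) * u⌋₊ < N j := by
        rw [Nat.floor_lt (mul_nonneg hj0.le hu.1.le)]; nlinarith [hu.2]
      rw [norm_mul]
      exact mul_le_mul (hB _ (clamp_mem _)) (hM _ h4 _ (Finset.mem_Icc.2 (by omega)))
        (norm_nonneg _) hB0
    · rw [norm_zero]; positivity
  · filter_upwards [mI_Ioo] with u hu
    have h1 : G u = Gc u := by simp only [hGc, clamp_of_mem ⟨hu.1.le, hu.2.le⟩]
    rw [h1]
    refine (((hGcc.tendsto u).comp (tendsto_floor_div hN hu.1.le)).mul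
      (eventually_psi hN4 hN hlim hu)).congr' ?_
    filter_upwards [eventually_floor hN hu.1] with j hj
    simp only [hH, if_pos hj, Function.comp]

end

/-- Convergence of the discrete stationary profiles to the stationary
solution of the fractional Dirichlet problem, tested against continuous functions. -/
theorem discrete_profile_converges_to_stationary_profile
    (γ Φl Φr : ℝ) (hγ : γ ∈ Set.Ioo (1:ℝ) 2)
    (ψ : ℕ → ℕ → ℝ) (hψ : ∀ n : ℕ, 2 ≤ n → IsDiscreteProfile γ Φl Φr n (ψ n))
    (Φss : ℝ → ℝ) (hss : IsStationarySolution γ Φl Φr Φss)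
    (G : ℝ → ℝ) (hG : ContinuousOn G (Set.Icc 0 1)) :
    Tendsto (fun n : ℕ =>
        (1 / (n : ℝ)) * ∑ x ∈ Finset.Icc 1 (n - 1), G ((x : ℝ) / (n : ℝ)) * ψ n x)
      atTop (nhds (∫ u in Set.Icc (0:ℝ) 1, G u * Φss u)) := by
  obtain ⟨C, K, M, E, hC0, hK0, hM0, hE0, hap⟩ := apriori hγ ψ hψ
  obtain ⟨F, hF, hF0, hF1, hFae, hEF, hoF⟩ := stationary hγ hss
  have hα0 : 0 < (γ - 1) / 2 := by linarith [hγ.1]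
  refine Filter.tendsto_of_subseq_tendsto fun ns hns => ?_
  obtain ⟨N0, hN0⟩ := eventually_atTop.1 (hns.eventually_ge_atTop 4)
  set L : ℕ → ℕ := fun j => ns (j + N0) with hL
  have hL4 : ∀ j, 4 ≤ L j := fun j => hN0 _ (by omega)
  have hLt : Tendsto L atTop atTop := hns.comp (tendsto_add_atTop_nat N0)
  obtain ⟨θ, hθ, f, hf, hlim⟩ := arzela hα0 (fun j u => ψ (L j) (cl (L j) u))
    (fun j => 1 / (L j:ℝ)) (tendsto_one_div_atTop_nhds_zero_nat.comp hLt)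
    (fun j u => (hap _ (hL4 j)).2.2.1 _ (cl_mem (hL4 j) u))
    (fun j u v => by
      refine ((hap _ (hL4 j)).2.1 _ (cl_mem (hL4 j) u) _ (cl_mem (hL4 j) v)).trans ?_
      refine mul_le_mul_of_nonneg_left ?_ hK0
      exact Real.rpow_le_rpow (by positivity) (cl_dist (hL4 j) u v) hα0.le)
  refine ⟨fun j => θ j + N0, ?_⟩
  set N : ℕ → ℕ := fun j => L (θ j) with hNdef
  have hN4 : ∀ j, 4 ≤ N j := fun j => hL4 _
  have hN : Tendsto N atTop atTop := hLt.comp hθ.tendsto_atTop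
  have hlim' : ∀ u, Tendsto (fun j => ψ (N j) (cl (N j) u)) atTop (nhds (f u)) := hlim
  have hf0 : f 0 = Φl := by
    refine tendsto_nhds_unique (hlim' 0) ?_
    refine sq_lim (E := E) (δ := γ - 1) (by linarith [hγ.1]) hN fun j => ?_
    have : cl (N j) 0 = 1 := by
      have := hN4 j
      rw [cl, clamp_of_mem (by simp), mul_zero, Nat.floor_zero]; omega
    rw [this]
    exact (hap _ (hN4 j)).2.2.2.1
  have hf1 : f 1 = Φr := by
    refine tendsto_nhds_unique (hlim' 1) ?_
    refine sq_lim (E := E) (δ := γ - 1) (by linarith [hγ.1]) hN fun j => ?_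
    have : cl (N j) 1 = N j - 1 := by
      have := hN4 j
      rw [cl, clamp_of_mem (by simp), mul_one, Nat.floor_natCast]; omega
    rw [this]
    exact (hap _ (hN4 j)).2.2.2.2
  have hcore := fun φ hφ => core hγ hψ (fun n hn => (hap n hn).1) hN4 hN hlim' (φ := φ) hφ
  have heq := limit_eq hγ hf hF (hf0.trans hF0.symm) (hf1.trans hF1.symm)
    (hcore _ zero_test).1 hEF (fun φ hφ => (hcore φ hφ).2) hoF
  have hfin := final_conv (fun n hn => (hap n hn).2.2.1) hM0 hN4 hN hlim' hG
  have hIntg : ∫ u, G u * f u ∂mI = ∫ u in Set.Icc (0:ℝ) 1, G u * Φss u := by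
    refine integral_congr_ae ?_
    filter_upwards [hFae, ae_restrict_mem measurableSet_Icc] with u h1 h2
    rw [h1, heq u h2]
  rw [hIntg] at hfin
  exact hfin
end
end

section
/- Fix γ ∈ (1,2) and Φ_ℓ, Φ_r ∈ ℝ, and let Φ_ss be the unique weak solution of the stationary problem 𝕃^γ Φ_ss = 0 with boundary values Φ_ℓ at 0 and Φ_r at 1. If ρ ∈ H^{γ/2} and its continuous representative satisfies ρ(0) = Φ_ℓ and ρ(1) = Φ_r, then ‖ρ − Φ_ss‖²_{γ/2} − ⟨ρ − Φ_ss, ρ⟩_{γ/2} = 0. -/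
open MeasureTheory Filter ENNReal NNReal

noncomputable section

namespace SO

def mu : Measure ℝ := volume.restrict (Set.Icc (0:ℝ) 1)

instance : IsFiniteMeasure mu := by unfold mu; infer_instance

def nu : Measure (ℝ × ℝ) := mu.prod mu

instance : IsFiniteMeasure nu := by unfold nu; infer_instance

def kap (γ : ℝ) (p : ℝ × ℝ) : ℝ := |p.1 - p.2| ^ (-(1 + γ) / 2)

def DD (γ : ℝ) (F : ℝ → ℝ) (p : ℝ × ℝ) : ℝ := (F p.1 - F p.2) * kap γ p

lemma kap_sq (γ : ℝ) (p : ℝ × ℝ) : kap γ p * kap γ p = |p.1 - p.2| ^ (-(1 + γ)) := by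
  unfold kap
  rw [← pow_two, ← Real.rpow_natCast, ← Real.rpow_mul (abs_nonneg _)]
  congr 1
  push_cast; ring

lemma measurable_kap (γ : ℝ) : Measurable (kap γ) := by
  unfold kap; fun_prop

lemma measurable_DD (γ : ℝ) {F : ℝ → ℝ} (hF : Measurable F) : Measurable (DD γ F) := by
  have := measurable_kap γ
  unfold DD; fun_prop

lemma DD_mul (γ : ℝ) (F G : ℝ → ℝ) (p : ℝ × ℝ) :
    DD γ F p * DD γ G p = (F p.1 - F p.2) * (G p.1 - G p.2) * |p.1 - p.2| ^ (-(1 + γ)) := by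
  rw [← kap_sq]; unfold DD; ring

lemma fracInner_eq (γ : ℝ) {F G : ℝ → ℝ} (hF : MemLp (DD γ F) 2 nu) (hG : MemLp (DD γ G) 2 nu) :
    fracInner γ F G = cGamma γ / 2 * ∫ p, DD γ F p * DD γ G p ∂nu := by
  have h : Integrable (fun p => DD γ F p * DD γ G p) nu := hF.integrable_mul hG
  unfold nu at h ⊢
  rw [integral_prod _ h]
  simp only [DD_mul]
  rfl

lemma cGamma_nonneg (γ : ℝ) : 0 ≤ cGamma γ := by
  unfold cGamma
  apply inv_nonneg.2
  apply tsum_nonneg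
  intro z
  split_ifs
  · exact le_rfl
  · positivity

/-- energy -/
def en (γ : ℝ) (F : ℝ → ℝ) : ℝ≥0∞ := ∫⁻ p, ENNReal.ofReal (DD γ F p ^ 2) ∂nu

lemma memLp_of_en {γ : ℝ} {F : ℝ → ℝ} (hF : Measurable F) (h : en γ F < ⊤) :
    MemLp (DD γ F) 2 nu := by
  have hm := measurable_DD γ hF
  rw [memLp_two_iff_integrable_sq hm.aestronglyMeasurable]
  refine ⟨(hm.pow_const 2).aestronglyMeasurable, ?_⟩
  rw [hasFiniteIntegral_iff_ofReal (Eventually.of_forall fun p => sq_nonneg _)]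
  exact h

lemma en_eq_of_memLp {γ : ℝ} {F : ℝ → ℝ} (h : MemLp (DD γ F) 2 nu) :
    en γ F = ENNReal.ofReal (∫ p, DD γ F p ^ 2 ∂nu) := by
  rw [ofReal_integral_eq_lintegral_ofReal h.integrable_sq (Eventually.of_forall fun p => sq_nonneg _)]
  rfl

lemma en_lt_top {γ : ℝ} (hc : 0 < cGamma γ) {F : ℝ → ℝ} (hF : MemHgamma γ F) : en γ F < ⊤ := by
  obtain ⟨hm, hs⟩ := hF
  have h1 : fracSeminormSq γ F < ⊤ := lt_of_le_of_lt le_add_self hs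
  have hmD := measurable_DD γ hm
  have h2 : fracSeminormSq γ F = ENNReal.ofReal (cGamma γ / 2) * en γ F := by
    unfold en nu
    rw [lintegral_prod _ (by fun_prop), ← lintegral_const_mul _ (by fun_prop)]
    unfold fracSeminormSq
    apply lintegral_congr
    intro u
    rw [← lintegral_const_mul _ (by fun_prop)]
    apply lintegral_congr
    intro v
    rw [← ENNReal.ofReal_mul (by positivity), pow_two (DD γ F (u, v)), DD_mul]
    congr 1; ring
  rw [h2] at h1
  by_contra hcon
  rw [not_lt, top_le_iff] at hcon
  rw [hcon, ENNReal.mul_top] at h1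
  · exact lt_irrefl _ h1
  · simpa using hc

lemma DD_congr_ae {γ : ℝ} {F G : ℝ → ℝ} (h : F =ᵐ[mu] G) : DD γ F =ᵐ[nu] DD γ G := by
  have h1 : (fun p : ℝ × ℝ => F p.1) =ᵐ[nu] fun p => G p.1 :=
    Measure.quasiMeasurePreserving_fst.ae_eq_comp h
  have h2 : (fun p : ℝ × ℝ => F p.2) =ᵐ[nu] fun p => G p.2 :=
    Measure.quasiMeasurePreserving_snd.ae_eq_comp h
  filter_upwards [h1, h2] with p h1 h2
  simp only [DD]
  rw [h1, h2]

lemma weak_lemma {A B : ℝ × ℝ → ℝ} {Bn : ℕ → ℝ × ℝ → ℝ} (hA : MemLp A 2 nu) (hB : MemLp B 2 nu)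
    (hBm : ∀ n, Measurable (Bn n))
    (hBn : ∀ n, MemLp (Bn n) 2 nu) (C : ℝ) (hC : ∀ n, ∫ p, Bn n p ^ 2 ∂nu ≤ C)
    (hlim : ∀ p, Tendsto (fun n => Bn n p) atTop (nhds (B p)))
    (h0 : ∀ n, ∫ p, A p * Bn n p ∂nu = 0) : ∫ p, A p * B p ∂nu = 0 := by
  set S : ℕ → Set (ℝ × ℝ) := fun m => {p | ∀ n, |Bn n p| ≤ m} with hS
  have hSm : ∀ m, MeasurableSet (S m) := by
    intro m
    have : S m = ⋂ n, {p | |Bn n p| ≤ m} := by ext; simp [hS]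
    rw [this]
    exact MeasurableSet.iInter fun n => measurableSet_le (hBm n).abs measurable_const
  have hev : ∀ p, ∀ᶠ m in atTop, p ∈ S m := by
    intro p
    obtain ⟨M, hM⟩ := (hlim p).abs.bddAbove_range
    obtain ⟨N, hN⟩ := exists_nat_ge M
    filter_upwards [eventually_ge_atTop N] with m hm n
    exact (hM ⟨n, rfl⟩).trans (hN.trans (by exact_mod_cast hm))
  have hAB : Integrable (fun p => A p * B p) nu := hA.integrable_mul hB
  have hABn : ∀ n, Integrable (fun p => A p * Bn n p) nu := fun n => hA.integrable_mul (hBn n)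
  have hA2 : Integrable (fun p => A p ^ 2) nu := hA.integrable_sq
  have hB2 : ∀ n, Integrable (fun p => Bn n p ^ 2) nu := fun n => (hBn n).integrable_sq
  have hA1 : Integrable A nu := hA.integrable (by norm_num)
  -- limit on S m
  have l1 : ∀ m, Tendsto (fun n => ∫ p in S m, A p * Bn n p ∂nu) atTop
      (nhds (∫ p in S m, A p * B p ∂nu)) := by
    intro m
    apply tendsto_integral_of_dominated_convergence (fun p => |A p| * m)
    · intro n; exact (hABn n).1.restrict
    · exact (hA1.abs.mul_const _).integrableOn
    · intro n
      filter_upwards [ae_restrict_mem (hSm m)] with p hp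
      rw [Real.norm_eq_abs, abs_mul]
      exact mul_le_mul_of_nonneg_left (hp n) (abs_nonneg _)
    · exact Eventually.of_forall fun p => (hlim p).const_mul _
  have l2 : Tendsto (fun m => ∫ p in S m, A p * B p ∂nu) atTop (nhds (∫ p, A p * B p ∂nu)) := by
    simp_rw [← integral_indicator (hSm _)]
    apply tendsto_integral_of_dominated_convergence (fun p => |A p * B p|)
    · intro n; exact (hAB.1.indicator (hSm n))
    · exact hAB.abs
    · intro n
      exact Eventually.of_forall fun p => norm_indicator_le_norm_self _ _
    · refine Eventually.of_forall fun p => tendsto_const_nhds.congr' ?_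
      filter_upwards [hev p] with m hm
      rw [Set.indicator_of_mem hm]
  have l3 : Tendsto (fun m => ∫ p in (S m)ᶜ, A p ^ 2 ∂nu) atTop (nhds 0) := by
    simp_rw [← integral_indicator (hSm _).compl]
    rw [← integral_zero (ℝ × ℝ) ℝ (μ := nu)]
    apply tendsto_integral_of_dominated_convergence (fun p => |A p ^ 2|)
    · intro n; exact (hA2.1.indicator (hSm n).compl)
    · exact hA2.abs
    · intro n
      exact Eventually.of_forall fun p => norm_indicator_le_norm_self _ _
    · refine Eventually.of_forall fun p => tendsto_const_nhds.congr' ?_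
      filter_upwards [hev p] with m hm
      rw [Set.indicator_of_notMem (by simpa using hm)]
  have b1 : ∀ s : ℝ, 0 < s → ∀ m n, |∫ p in S m, A p * Bn n p ∂nu| ≤
      s * (∫ p in (S m)ᶜ, A p ^ 2 ∂nu) + C / s := by
    intro s hs m n
    have e1 := integral_add_compl (hSm m) (hABn n)
    rw [h0 n] at e1
    have e2 : ∫ p in S m, A p * Bn n p ∂nu = - ∫ p in (S m)ᶜ, A p * Bn n p ∂nu := by linarith
    rw [e2, abs_neg]
    have e3 : |∫ p in (S m)ᶜ, A p * Bn n p ∂nu| ≤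
        ∫ p in (S m)ᶜ, (s * A p ^ 2 + Bn n p ^ 2 / s) ∂nu := by
      rw [← Real.norm_eq_abs]
      apply norm_integral_le_of_norm_le
      · exact ((hA2.const_mul s).add ((hB2 n).div_const s)).integrableOn
      · refine Eventually.of_forall fun p => ?_
        rw [Real.norm_eq_abs]
        have hh : Bn n p ^ 2 / s = s * (Bn n p / s) ^ 2 := by field_simp
        have hh2 : A p * Bn n p = s * (A p * (Bn n p / s)) := by field_simp
        rw [hh, hh2, abs_mul, abs_of_pos hs, ← mul_add]
        apply mul_le_mul_of_nonneg_left _ hs.le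
        rw [abs_le]
        constructor <;> nlinarith [sq_nonneg (A p + Bn n p / s), sq_nonneg (A p - Bn n p / s),
          sq_nonneg (A p), sq_nonneg (Bn n p / s)]
    refine e3.trans ?_
    rw [integral_add (hA2.const_mul s).integrableOn ((hB2 n).div_const s).integrableOn,
      integral_const_mul, integral_div]
    have e4 : ∫ p in (S m)ᶜ, Bn n p ^ 2 ∂nu ≤ C :=
      (setIntegral_le_integral (hB2 n) (Eventually.of_forall fun p => sq_nonneg _)).trans (hC n)
    gcongr
  have b2 : ∀ s : ℝ, 0 < s → |∫ p, A p * B p ∂nu| ≤ C / s := by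
    intro s hs
    have b3 : ∀ m, |∫ p in S m, A p * B p ∂nu| ≤ s * (∫ p in (S m)ᶜ, A p ^ 2 ∂nu) + C / s := by
      intro m
      exact le_of_tendsto (l1 m).abs (Eventually.of_forall fun n => b1 s hs m n)
    have := le_of_tendsto_of_tendsto' l2.abs ((l3.const_mul s).add_const (C / s)) b3
    simpa using this
  have : Tendsto (fun s : ℝ => C / s) atTop (nhds 0) := tendsto_const_nhds.div_atTop tendsto_id
  have := ge_of_tendsto this (eventually_gt_atTop 0 |>.mono b2)
  exact abs_nonpos_iff.1 this

/-- truncated kernel -/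
def kE (γ ε t : ℝ) : ℝ := if ε ≤ |t| then |t| ^ (-(1 + γ)) else 0

lemma measurable_kE (γ ε : ℝ) : Measurable (kE γ ε) := by
  unfold kE
  exact Measurable.ite (measurableSet_le measurable_const (by fun_prop)) (by fun_prop)
    measurable_const

lemma kE_nonneg (γ ε t : ℝ) : 0 ≤ kE γ ε t := by
  unfold kE; split_ifs
  · positivity
  · exact le_rfl

lemma kE_le {γ ε : ℝ} (hγ : 1 < γ) (hε : 0 < ε) (t : ℝ) : kE γ ε t ≤ ε ^ (-(1 + γ)) := by
  unfold kE; split_ifs with h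
  · exact Real.rpow_le_rpow_of_nonpos hε h (by linarith)
  · positivity

lemma kE_le' (γ ε t : ℝ) : kE γ ε t ≤ |t| ^ (-(1 + γ)) := by
  unfold kE; split_ifs with h
  · exact le_rfl
  · positivity

lemma kE_neg (γ ε t : ℝ) : kE γ ε (-t) = kE γ ε t := by simp [kE]

lemma kE_tendsto (γ : ℝ) (hγ : 1 < γ) (t : ℝ) : ∀ᶠ ε in nhdsWithin (0:ℝ) (Set.Ioi 0),
    kE γ ε t = |t| ^ (-(1 + γ)) := by
  by_cases ht : t = 0
  · filter_upwards [self_mem_nhdsWithin] with ε hε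
    subst ht
    simp only [kE, abs_zero]
    rw [if_neg (not_le.2 hε), Real.zero_rpow (by linarith)]
  · have : Set.Iio |t| ∈ nhds (0:ℝ) := Iio_mem_nhds (abs_pos.2 ht)
    filter_upwards [mem_nhdsWithin_of_mem_nhds this] with ε hε
    rw [kE, if_pos (le_of_lt hε)]

lemma trunc_eq (γ ε u : ℝ) (F : ℝ → ℝ) :
    ∫ v in {v : ℝ | v ∈ Set.Icc (0:ℝ) 1 ∧ ε ≤ abs (u - v)}, (F v - F u) * |v - u| ^ (-(1 + γ))
     = ∫ v, (F v - F u) * kE γ ε (v - u) ∂mu := by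
  have hm : MeasurableSet {v : ℝ | ε ≤ |u - v|} := measurableSet_le measurable_const (by fun_prop)
  have : {v : ℝ | v ∈ Set.Icc (0:ℝ) 1 ∧ ε ≤ abs (u - v)} = {v : ℝ | ε ≤ |u - v|} ∩ Set.Icc 0 1 := by
    ext; simp [and_comm]
  rw [this, ← Measure.restrict_restrict hm, ← integral_indicator hm]
  apply integral_congr_ae
  refine Eventually.of_forall fun v => ?_
  simp only [Set.indicator, Set.mem_ofPred_eq, kE]
  rw [abs_sub_comm u v]
  split_ifs <;> simp

/-- local integral of the kernel -/
def Kc (γ : ℝ) : ℝ≥0∞ := ∫⁻ t in Set.Icc (-1:ℝ) 1, ENNReal.ofReal (|t| ^ (1 - γ))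

lemma Kc_lt_top {γ : ℝ} (hγ : γ ∈ Set.Ioo (1:ℝ) 2) : Kc γ < ⊤ := by
  have h0 : IntervalIntegrable (fun t : ℝ => t ^ (1 - γ)) volume 0 1 :=
    intervalIntegral.intervalIntegrable_rpow' (by linarith [hγ.2])
  have h1 : IntervalIntegrable (fun t : ℝ => |t| ^ (1 - γ)) volume 0 1 := by
    refine h0.congr ?_
    intro t ht
    rw [Set.uIoc_of_le zero_le_one] at ht
    simp only [abs_of_pos ht.1]
  have h2 : IntervalIntegrable (fun t : ℝ => |t| ^ (1 - γ)) volume (-1) 0 := by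
    have := (h1.comp_sub_left 0).symm
    simpa using this
  have h3 := (h2.trans h1)
  rw [intervalIntegrable_iff_integrableOn_Icc_of_le (by norm_num)] at h3
  have h4 := h3.2
  rw [hasFiniteIntegral_iff_ofReal (Eventually.of_forall fun p => by positivity)] at h4
  exact h4

lemma lint_le_Kc (γ u : ℝ) (hu : u ∈ Set.Icc (0:ℝ) 1) :
    ∫⁻ v, ENNReal.ofReal (|v - u| ^ (1 - γ)) ∂mu ≤ Kc γ := by
  unfold mu Kc
  rw [← lintegral_indicator measurableSet_Icc, ← lintegral_indicator measurableSet_Icc,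
    ← lintegral_sub_right_eq_self ((Set.Icc (-1:ℝ) 1).indicator _) u]
  apply lintegral_mono
  intro v
  simp only [Set.indicator]
  split_ifs with h1 h2
  · exact le_rfl
  · exact absurd ⟨by linarith [h1.1, hu.2], by linarith [h1.2, hu.1]⟩ h2
  · exact bot_le
  · exact le_rfl

lemma integrable_ker {γ : ℝ} (hγ : γ ∈ Set.Ioo (1:ℝ) 2) {u : ℝ} (hu : u ∈ Set.Icc (0:ℝ) 1) :
    Integrable (fun v => |v - u| ^ (1 - γ)) mu := by
  refine ⟨Measurable.aestronglyMeasurable (by fun_prop), ?_⟩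
  rw [hasFiniteIntegral_iff_ofReal (Eventually.of_forall fun p => by positivity)]
  exact (lint_le_Kc γ u hu).trans_lt (Kc_lt_top hγ)

lemma integral_ker_le {γ : ℝ} (hγ : γ ∈ Set.Ioo (1:ℝ) 2) {u : ℝ} (hu : u ∈ Set.Icc (0:ℝ) 1) :
    ∫ v, |v - u| ^ (1 - γ) ∂mu ≤ (Kc γ).toReal := by
  rw [integral_eq_lintegral_of_nonneg_ae (Eventually.of_forall fun p => by positivity)
    (Measurable.aestronglyMeasurable (by fun_prop))]
  exact ENNReal.toReal_mono (Kc_lt_top hγ).ne (lint_le_Kc γ u hu)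

lemma ae_mu : ∀ᵐ u ∂mu, u ∈ Set.Icc (0:ℝ) 1 := ae_restrict_mem measurableSet_Icc

lemma sq_mul_ker (γ : ℝ) (t : ℝ) : t ^ 2 * |t| ^ (-(1 + γ)) = |t| ^ (1 - γ) ∨ t = 0 := by
  by_cases ht : t = 0
  · right; exact ht
  left
  have h := abs_pos.2 ht
  rw [← sq_abs, ← Real.rpow_natCast, ← Real.rpow_add h]
  congr 1
  push_cast; ring

lemma sq_mul_ker_le (γ : ℝ) (t : ℝ) : t ^ 2 * |t| ^ (-(1 + γ)) ≤ |t| ^ (1 - γ) := by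
  rcases sq_mul_ker γ t with h | h
  · exact h.le
  · subst h; simp; positivity

lemma en_lip {γ : ℝ} (hγ : γ ∈ Set.Ioo (1:ℝ) 2) {G : ℝ → ℝ} {L : ℝ} (hG : Measurable G)
    (hL : ∀ u v, |G u - G v| ≤ L * |u - v|) : en γ G < ⊤ := by
  have hmD := measurable_DD γ hG
  have hb : en γ G ≤ ENNReal.ofReal (L ^ 2) * Kc γ * mu Set.univ := by
    unfold en nu
    rw [lintegral_prod _ (by fun_prop)]
    rw [← lintegral_const]
    apply lintegral_mono_ae
    filter_upwards [ae_mu] with u hu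
    refine le_trans ?_ (mul_le_mul_right (lint_le_Kc γ u hu) _)
    rw [← lintegral_const_mul _ (by fun_prop)]
    apply lintegral_mono
    intro v
    beta_reduce
    rw [← ENNReal.ofReal_mul (sq_nonneg _)]
    apply ENNReal.ofReal_le_ofReal
    rw [pow_two, DD_mul]
    simp only
    have h1 : (G u - G v) * (G u - G v) ≤ L ^ 2 * (v - u) ^ 2 := by
      have := hL u v
      have h3 := mul_self_le_mul_self (abs_nonneg _) this
      rw [abs_mul_abs_self] at h3
      have : |u - v| * |u - v| = (v - u) ^ 2 := by rw [abs_mul_abs_self]; ring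
      nlinarith
    calc _ ≤ L ^ 2 * (v - u) ^ 2 * |u - v| ^ (-(1 + γ)) := by gcongr
      _ = L ^ 2 * ((v - u) ^ 2 * |v - u| ^ (-(1 + γ))) := by rw [abs_sub_comm]; ring
      _ ≤ _ := by gcongr; exact sq_mul_ker_le γ _
  refine hb.trans_lt ?_
  exact ENNReal.mul_lt_top (ENNReal.mul_lt_top ENNReal.ofReal_lt_top (Kc_lt_top hγ)) (measure_lt_top _ _)

/-- Taylor remainder with local correction -/
def RR (G : ℝ → ℝ) (a u v : ℝ) : ℝ :=
  G v - G u - (if |v - u| < a then deriv G u * (v - u) else 0)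

lemma test_margin {G : ℝ → ℝ} {K : Set ℝ} (hK : IsCompact K) (hK1 : K ⊆ Set.Ioo 0 1)
    (hs : Function.support G ⊆ K) : ∃ a : ℝ, 0 < a ∧ ∀ u, u < a ∨ 1 - a < u → G u = 0 := by
  have : ∃ a : ℝ, 0 < a ∧ K ⊆ Set.Icc a (1 - a) := by
    rcases K.eq_empty_or_nonempty with h | h
    · exact ⟨1, one_pos, by simp [h]⟩
    · obtain ⟨x, hx⟩ := hK.exists_isLeast h
      obtain ⟨y, hy⟩ := hK.exists_isGreatest h
      refine ⟨min x (1 - y), lt_min (hK1 hx.1).1 (by linarith [(hK1 hy.1).2]), fun z hz => ?_⟩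
      have h1 := hx.2 hz
      have h2 := hy.2 hz
      exact ⟨(min_le_left _ _).trans h1, by linarith [min_le_right x (1 - y)]⟩
  obtain ⟨a, ha, hKa⟩ := this
  refine ⟨a, ha, fun u hu => ?_⟩
  by_contra hne
  have := hKa (hs hne)
  rcases hu with h | h
  · linarith [this.1]
  · linarith [this.2]

lemma test_hcs {G : ℝ → ℝ} (hG : IsSpatialTest G) : HasCompactSupport G := by
  obtain ⟨_, K, hK, _, hs⟩ := hG
  exact HasCompactSupport.intro hK fun x hx => by
    by_contra h; exact hx (hs h)

lemma deriv_zero_margin {G : ℝ → ℝ} {a : ℝ} (h : ∀ u, u < a ∨ 1 - a < u → G u = 0) :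
    ∀ u, u < a ∨ 1 - a < u → deriv G u = 0 := by
  intro u hu
  have ho : IsOpen {u : ℝ | u < a ∨ 1 - a < u} := isOpen_Iio.union isOpen_Ioi
  have : G =ᶠ[nhds u] fun _ => 0 := by
    filter_upwards [ho.mem_nhds hu] with v hv using h v hv
  rw [this.deriv_eq]; simp

lemma taylor {G : ℝ → ℝ} (hG : Differentiable ℝ G) {K : NNReal} (hK : LipschitzWith K (deriv G))
    (u v : ℝ) : |G v - G u - deriv G u * (v - u)| ≤ K * |v - u| ^ 2 := by
  have h1 : ∀ x ∈ Set.uIcc u v, HasDerivWithinAt (fun x => G x - deriv G u * x)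
      (deriv G x - deriv G u) (Set.uIcc u v) x := by
    intro x _
    have := ((hG x).hasDerivAt.sub ((hasDerivAt_id x).const_mul (deriv G u)))
    rw [mul_one] at this
    exact this.hasDerivWithinAt
  have h2 : ∀ x ∈ Set.uIcc u v, ‖deriv G x - deriv G u‖ ≤ K * |v - u| := by
    intro x hx
    have := hK.dist_le_mul x u
    rw [Real.dist_eq, Real.dist_eq] at this
    rw [Real.norm_eq_abs]
    refine this.trans ?_
    apply mul_le_mul_of_nonneg_left _ K.2
    exact Set.abs_sub_left_of_mem_uIcc hx
  have := (convex_uIcc u v).norm_image_sub_le_of_norm_hasDerivWithin_le h1 h2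
    Set.left_mem_uIcc Set.right_mem_uIcc
  rw [Real.norm_eq_abs, Real.norm_eq_abs] at this
  calc _ = |G v - deriv G u * v - (G u - deriv G u * u)| := by congr 1; ring
    _ ≤ _ := this
    _ = _ := by ring

lemma RR_bound {G : ℝ → ℝ} (hG : IsSpatialTest G) {a : ℝ} (ha : 0 < a) :
    ∃ C : ℝ, 0 ≤ C ∧ ∀ u v, |RR G a u v| ≤ C * (v - u) ^ 2 := by
  have hcs := test_hcs hG
  have hsm : ContDiff ℝ 2 G := hG.1.of_le (by
    have : ((2:ℕ∞) : WithTop ℕ∞) ≤ ((⊤ : ℕ∞) : WithTop ℕ∞) := WithTop.coe_le_coe.2 le_top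
    exact this)
  have hd : ContDiff ℝ 1 (deriv G) := hsm.deriv'
  obtain ⟨K, hK⟩ := hd.lipschitzWith_of_hasCompactSupport hcs.deriv (by norm_num)
  obtain ⟨M, hM⟩ := hcs.exists_bound_of_continuous hsm.continuous
  have hM0 : 0 ≤ M := (norm_nonneg _).trans (hM 0)
  refine ⟨K + 2 * M / a ^ 2, by positivity, fun u v => ?_⟩
  unfold RR
  split_ifs with h
  · have := taylor (hsm.differentiable (by norm_num)) hK u v
    rw [sq_abs] at this
    refine this.trans ?_
    gcongr
    simp; positivity
  · rw [sub_zero]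
    have h1 : |G v - G u| ≤ 2 * M := by
      have := abs_sub (G v) (G u)
      have h2 := hM v
      have h3 := hM u
      rw [Real.norm_eq_abs] at h2 h3
      linarith
    have h2 : a ^ 2 ≤ (v - u) ^ 2 := by
      rw [← sq_abs (v - u)]; push Not at h; gcongr
    have h3 : 2 * M ≤ 2 * M / a ^ 2 * (v - u) ^ 2 := by
      calc 2 * M = 2 * M / a ^ 2 * a ^ 2 := by field_simp
        _ ≤ _ := by gcongr
    have : 0 ≤ (K : ℝ) * (v - u) ^ 2 := by positivity
    linarith

lemma int_bdd_kE {γ ε : ℝ} (hγ : 1 < γ) (hε : 0 < ε) {f : ℝ → ℝ} (u : ℝ) (hf : Measurable f) {M : ℝ}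
    (hM : ∀ v ∈ Set.Icc (0:ℝ) 1, |f v| ≤ M) : Integrable (fun v => f v * kE γ ε (v - u)) mu := by
  have := measurable_kE γ ε
  refine Integrable.of_bound (Measurable.aestronglyMeasurable (by fun_prop)) (M * ε ^ (-(1 + γ))) ?_
  filter_upwards [ae_mu] with v hv
  rw [norm_mul, Real.norm_eq_abs, Real.norm_eq_abs, abs_of_nonneg (kE_nonneg _ _ _)]
  have := (abs_nonneg _).trans (hM v hv)
  gcongr
  · exact kE_nonneg _ _ _
  · exact hM v hv
  · exact kE_le hγ hε _

lemma corr_zero {γ : ℝ} (ε d a u : ℝ) (hu : a ≤ u ∧ u ≤ 1 - a) :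
    ∫ v, (if |v - u| < a then d * (v - u) else 0) * kE γ ε (v - u) ∂mu = 0 := by
  unfold mu
  rw [setIntegral_eq_integral_of_forall_compl_eq_zero]
  · rw [integral_sub_right_eq_self (fun t => (if |t| < a then d * t else 0) * kE γ ε t) u]
    have := integral_neg_eq_self (fun t => (if |t| < a then d * t else 0) * kE γ ε t) volume
    simp only [abs_neg, kE_neg] at this
    have h2 : ∫ t, (if |t| < a then d * -t else 0) * kE γ ε t =
      - ∫ t, (if |t| < a then d * t else 0) * kE γ ε t := by
      rw [← integral_neg]
      congr 1; ext t; split_ifs <;> ring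
    linarith
  · intro v hv
    rw [if_neg, zero_mul]
    intro h
    rw [abs_lt] at h
    exact hv ⟨by linarith, by linarith⟩

lemma trunc_RR {γ ε : ℝ} (hγ : 1 < γ) (hε : 0 < ε) {G : ℝ → ℝ} (hG : IsSpatialTest G) {a : ℝ}
    (h : ∀ u, u < a ∨ 1 - a < u → G u = 0) {u : ℝ} (hu : u ∈ Set.Icc (0:ℝ) 1) :
    ∫ v, (G v - G u) * kE γ ε (v - u) ∂mu = ∫ v, RR G a u v * kE γ ε (v - u) ∂mu := by
  have hcs := test_hcs hG
  obtain ⟨M, hM⟩ := hcs.exists_bound_of_continuous hG.1.continuous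
  have i1 : Integrable (fun v => (G v - G u) * kE γ ε (v - u)) mu := by
    apply int_bdd_kE hγ hε u (hG.1.continuous.measurable.sub_const _) (M := M + M)
    intro v _
    exact (abs_sub _ _).trans (add_le_add (hM v) (hM u))
  have i2 : Integrable (fun v => (if |v - u| < a then deriv G u * (v - u) else 0) * kE γ ε (v - u))
      mu := by
    apply int_bdd_kE hγ hε u _ (M := |deriv G u|)
    · intro v hv
      split_ifs
      · rw [abs_mul]
        have : |v - u| ≤ 1 := by rw [abs_le]; constructor <;> linarith [hv.1, hv.2, hu.1, hu.2]
        exact mul_le_of_le_one_right (abs_nonneg _) this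
      · simp
    · exact Measurable.ite (measurableSet_lt (by fun_prop) measurable_const) (by fun_prop)
        measurable_const
  have hz : ∫ v, (if |v - u| < a then deriv G u * (v - u) else 0) * kE γ ε (v - u) ∂mu = 0 := by
    by_cases hua : a ≤ u ∧ u ≤ 1 - a
    · exact corr_zero ε _ a u hua
    · have : deriv G u = 0 := by
        apply deriv_zero_margin h
        by_contra hc
        push Not at hc
        exact hua hc
      simp [this]
  have : ∀ v, RR G a u v * kE γ ε (v - u) = (G v - G u) * kE γ ε (v - u) -
    (if |v - u| < a then deriv G u * (v - u) else 0) * kE γ ε (v - u) := by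
    intro v; unfold RR; ring
  simp_rw [this]
  rw [integral_sub i1 i2, hz, sub_zero]

lemma RR_meas {G : ℝ → ℝ} (hG : Measurable G) (a u : ℝ) : Measurable (RR G a u) := by
  unfold RR
  apply Measurable.sub (by fun_prop)
  exact Measurable.ite (measurableSet_lt (by fun_prop) measurable_const) (by fun_prop)
        measurable_const

lemma RR_dom {γ ε : ℝ} {G : ℝ → ℝ} {a C : ℝ} (hC0 : 0 ≤ C)
    (hC : ∀ u v, |RR G a u v| ≤ C * (v - u) ^ 2) (u v : ℝ) :
    ‖RR G a u v * kE γ ε (v - u)‖ ≤ C * |v - u| ^ (1 - γ) := by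
  rw [norm_mul, Real.norm_eq_abs, Real.norm_eq_abs, abs_of_nonneg (kE_nonneg _ _ _)]
  calc _ ≤ C * (v - u) ^ 2 * |v - u| ^ (-(1 + γ)) := by
        gcongr
        · exact kE_nonneg _ _ _
        · exact hC u v
        · exact kE_le' _ _ _
    _ = C * ((v - u) ^ 2 * |v - u| ^ (-(1 + γ))) := by ring
    _ ≤ _ := by gcongr; exact sq_mul_ker_le γ _

lemma test_lap {γ : ℝ} (hγ : γ ∈ Set.Ioo (1:ℝ) 2) {G : ℝ → ℝ} (hG : IsSpatialTest G) :
    (∃ B : ℝ, ∀ ε > 0, ∀ u ∈ Set.Icc (0:ℝ) 1, |∫ v, (G v - G u) * kE γ ε (v - u) ∂mu| ≤ B) ∧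
    ∀ u ∈ Set.Icc (0:ℝ) 1, Tendsto (fun ε => cGamma γ * ∫ v, (G v - G u) * kE γ ε (v - u) ∂mu)
      (nhdsWithin (0:ℝ) (Set.Ioi 0)) (nhds (fracLap γ G u)) := by
  obtain ⟨hsm, K, hK, hK1, hs⟩ := id hG
  obtain ⟨a, ha, hGa⟩ := test_margin hK hK1 hs
  obtain ⟨C, hC0, hC⟩ := RR_bound hG ha
  constructor
  · refine ⟨C * (Kc γ).toReal, fun ε hε u hu => ?_⟩
    rw [trunc_RR hγ.1 hε hG hGa hu, ← Real.norm_eq_abs]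
    refine (norm_integral_le_of_norm_le ((integrable_ker hγ hu).const_mul C)
      (Eventually.of_forall fun v => RR_dom hC0 hC u v)).trans ?_
    rw [integral_const_mul]
    exact mul_le_mul_of_nonneg_left (integral_ker_le hγ hu) hC0
  · intro u hu
    have hL : HasFracLapAt γ G u (cGamma γ * ∫ v, RR G a u v * |v - u| ^ (-(1 + γ)) ∂mu) := by
      unfold HasFracLapAt
      simp_rw [trunc_eq]
      apply Filter.Tendsto.const_mul
      have : Tendsto (fun ε => ∫ v, RR G a u v * kE γ ε (v - u) ∂mu) (nhdsWithin (0:ℝ) (Set.Ioi 0))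
          (nhds (∫ v, RR G a u v * |v - u| ^ (-(1 + γ)) ∂mu)) := by
        apply tendsto_integral_filter_of_dominated_convergence (fun v => C * |v - u| ^ (1 - γ))
        · refine Eventually.of_forall fun ε => Measurable.aestronglyMeasurable ?_
          have := measurable_kE γ ε
          have := RR_meas hsm.continuous.measurable a u
          fun_prop
        · exact Eventually.of_forall fun ε => Eventually.of_forall fun v => RR_dom hC0 hC u v
        · exact (integrable_ker hγ hu).const_mul C
        · refine Eventually.of_forall fun v => tendsto_const_nhds.congr' ?_
          filter_upwards [kE_tendsto γ hγ.1 (v - u)] with ε h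
          rw [h]
      refine this.congr' ?_
      filter_upwards [self_mem_nhdsWithin] with ε hε
      exact (trunc_RR hγ.1 hε hG hGa hu).symm
    have hex : ∃ L, HasFracLapAt γ G u L := ⟨_, hL⟩
    have : HasFracLapAt γ G u (fracLap γ G u) := by
      unfold fracLap
      rw [dif_pos hex]
      exact hex.choose_spec
    unfold HasFracLapAt at this
    simp_rw [trunc_eq] at this
    exact this

lemma test_pairing {γ : ℝ} (hγ : γ ∈ Set.Ioo (1:ℝ) 2) (hc : 0 < cGamma γ) {Φ G : ℝ → ℝ}
    (hG : IsSpatialTest G) (hΦm : Measurable Φ) (hΦ : Integrable Φ mu) (hD : MemLp (DD γ Φ) 2 nu)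
    (h0 : ∫ u, Φ u * fracLap γ G u ∂mu = 0) :
    MemLp (DD γ G) 2 nu ∧ ∫ p, DD γ Φ p * DD γ G p ∂nu = 0 := by
  obtain ⟨⟨B, hB⟩, hlim⟩ := test_lap hγ hG
  have hcs := test_hcs hG
  have hcont := hG.1.continuous
  have hGm := hcont.measurable
  obtain ⟨M, hM⟩ := hcs.exists_bound_of_continuous hcont
  have hDG : MemLp (DD γ G) 2 nu := by
    obtain ⟨K, hK⟩ := hG.1.lipschitzWith_of_hasCompactSupport hcs (by norm_num)
    exact memLp_of_en hGm (en_lip hγ hGm (L := K) fun u v => by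
      simpa [Real.dist_eq] using hK.dist_le_mul u v)
  refine ⟨hDG, ?_⟩
  have hprod : Integrable (fun p => DD γ Φ p * DD γ G p) nu := hD.integrable_mul hDG
  -- first limit
  have t1 : Tendsto (fun ε => ∫ u, Φ u * (cGamma γ * ∫ v, (G v - G u) * kE γ ε (v - u) ∂mu) ∂mu)
      (nhdsWithin (0:ℝ) (Set.Ioi 0)) (nhds 0) := by
    refine Eq.subst (motive := fun z => Tendsto (fun ε => ∫ u, Φ u * (cGamma γ *
      ∫ v, (G v - G u) * kE γ ε (v - u) ∂mu) ∂mu) (nhdsWithin (0:ℝ) (Set.Ioi 0)) (nhds z)) h0 ?_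
    apply tendsto_integral_filter_of_dominated_convergence (fun u => |Φ u| * (cGamma γ * B))
    · refine Eventually.of_forall fun ε => ?_
      have hk := measurable_kE γ ε
      have : StronglyMeasurable (fun p : ℝ × ℝ => (G p.2 - G p.1) * kE γ ε (p.2 - p.1)) :=
        Measurable.stronglyMeasurable (by fun_prop)
      have h2 := (this.integral_prod_right' (ν := mu)).measurable
      exact Measurable.aestronglyMeasurable (hΦm.mul (measurable_const.mul h2))
    · filter_upwards [self_mem_nhdsWithin] with ε hε
      filter_upwards [ae_mu] with u hu
      rw [norm_mul, norm_mul, Real.norm_eq_abs, Real.norm_eq_abs, Real.norm_eq_abs,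
        abs_of_pos hc]
      gcongr
      exact hB ε hε u hu
    · exact hΦ.abs.mul_const _
    · filter_upwards [ae_mu] with u hu
      exact (hlim u hu).const_mul _
  -- second limit
  have t2 : Tendsto (fun ε => ∫ p : ℝ × ℝ, (Φ p.1 - Φ p.2) * (G p.1 - G p.2) * kE γ ε (p.2 - p.1) ∂nu)
      (nhdsWithin (0:ℝ) (Set.Ioi 0)) (nhds (∫ p, DD γ Φ p * DD γ G p ∂nu)) := by
    apply tendsto_integral_filter_of_dominated_convergence (fun p => |DD γ Φ p * DD γ G p|)
    · refine Eventually.of_forall fun ε => ?_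
      have hk := measurable_kE γ ε
      exact Measurable.aestronglyMeasurable (by fun_prop)
    · refine Eventually.of_forall fun ε => Eventually.of_forall fun p => ?_
      rw [DD_mul, norm_mul, abs_mul, Real.norm_eq_abs, Real.norm_eq_abs,
        abs_of_nonneg (kE_nonneg _ _ _), abs_sub_comm p.1 p.2]
      gcongr
      exact (kE_le' _ _ _).trans (le_abs_self _)
    · exact hprod.abs
    · refine Eventually.of_forall fun p => tendsto_const_nhds.congr' ?_
      filter_upwards [kE_tendsto γ hγ.1 (p.2 - p.1)] with ε h
      rw [h, DD_mul, abs_sub_comm]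
  have key : ∀ ε > 0, ∫ p : ℝ × ℝ, (Φ p.1 - Φ p.2) * (G p.1 - G p.2) * kE γ ε (p.2 - p.1) ∂nu =
      (-2 / cGamma γ) * ∫ u, Φ u * (cGamma γ * ∫ v, (G v - G u) * kE γ ε (v - u) ∂mu) ∂mu := by
    intro ε hε
    have hk := measurable_kE γ ε
    set f : ℝ × ℝ → ℝ := fun p => Φ p.1 * ((G p.2 - G p.1) * kE γ ε (p.2 - p.1)) with hf
    have hΦ1 : Integrable (fun p : ℝ × ℝ => Φ p.1) nu := by
      unfold nu; exact hΦ.comp_fst mu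
    have hfi : Integrable f nu := by
      apply hΦ1.mul_bdd (c := (M + M) * ε ^ (-(1 + γ)))
      · exact Measurable.aestronglyMeasurable (by fun_prop)
      · refine Eventually.of_forall fun p => ?_
        rw [norm_mul]
        have := (norm_nonneg _).trans (hM 0)
        gcongr
        · exact (norm_sub_le _ _).trans (add_le_add (hM _) (hM _))
        · rw [Real.norm_eq_abs, abs_of_nonneg (kE_nonneg _ _ _)]; exact kE_le hγ.1 hε _
    have e1 : ∫ u, Φ u * (cGamma γ * ∫ v, (G v - G u) * kE γ ε (v - u) ∂mu) ∂mu
        = cGamma γ * ∫ p, f p ∂nu := by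
      unfold nu at hfi ⊢
      rw [integral_prod _ hfi, ← integral_const_mul]
      congr 1; ext u
      simp only [hf]
      rw [integral_const_mul]; ring
    have e2 : ∫ p, f p.swap ∂nu = ∫ p, f p ∂nu := by
      unfold nu; exact integral_prod_swap f
    have e3 : Integrable (fun p => f p.swap) nu := by
      unfold nu at hfi ⊢; exact hfi.swap
    have e4 : ∫ p : ℝ × ℝ, (Φ p.1 - Φ p.2) * (G p.1 - G p.2) * kE γ ε (p.2 - p.1) ∂nu
        = - (∫ p, f p ∂nu + ∫ p, f p.swap ∂nu) := by
      rw [← integral_add hfi e3, ← integral_neg]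
      congr 1; ext p
      simp only [hf, Prod.fst_swap, Prod.snd_swap]
      rw [← kE_neg γ ε (p.1 - p.2), neg_sub]
      ring
    rw [e4, e1, e2]
    field_simp
    ring
  have t3 := (t1.const_mul (-2 / cGamma γ))
  rw [mul_zero] at t3
  refine tendsto_nhds_unique t2 (t3.congr' ?_)
  filter_upwards [self_mem_nhdsWithin] with ε hε
  exact (key ε hε).symm

lemma jensen_sq {η x : ℝ → ℝ} (hη0 : ∀ t, 0 ≤ η t) (hηc : Continuous η) (hηs : HasCompactSupport η)
    (hη1 : ∫ t, η t = 1) (hx : Continuous x) :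
    (∫ t, η t * x t) ^ 2 ≤ ∫ t, η t * x t ^ 2 := by
  set m := ∫ t, η t * x t with hm
  have i0 : Integrable η := hηc.integrable_of_hasCompactSupport hηs
  have i1 : Integrable (fun t => η t * x t) :=
    (hηc.mul hx).integrable_of_hasCompactSupport hηs.mul_right
  have i2 : Integrable (fun t => η t * x t ^ 2) :=
    (hηc.mul (hx.pow 2)).integrable_of_hasCompactSupport hηs.mul_right
  have h : 0 ≤ ∫ t, (η t * x t ^ 2 - 2 * m * (η t * x t) + m ^ 2 * η t) := by
    apply integral_nonneg
    intro t
    have : η t * x t ^ 2 - 2 * m * (η t * x t) + m ^ 2 * η t = η t * (x t - m) ^ 2 := by ring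
    simp only [Pi.zero_apply]
    rw [this]
    exact mul_nonneg (hη0 t) (sq_nonneg _)
  have i3 : Integrable (fun t => η t * x t ^ 2 - 2 * m * (η t * x t)) := i2.sub (i1.const_mul _)
  rw [integral_add i3 (i0.const_mul _), integral_sub i2 (i1.const_mul _),
    integral_const_mul, integral_const_mul, hη1, ← hm] at h
  nlinarith

lemma DD_shift (γ : ℝ) (W : ℝ → ℝ) (p : ℝ × ℝ) (t : ℝ) :
    DD γ W (p - (t, t)) = (W (p.1 - t) - W (p.2 - t)) * kap γ p := by
  simp only [DD, kap, Prod.fst_sub, Prod.snd_sub, sub_sub_sub_cancel_right]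

lemma DD_off {γ : ℝ} (hγ : 1 < γ) {W : ℝ → ℝ} {a M : ℝ} (ha : 0 < a)
    (h : ∀ u, u < a ∨ 1 - a < u → W u = 0) (hM : ∀ u, |W u| ≤ M) (p : ℝ × ℝ)
    (hp : p ∉ Set.Icc (0:ℝ) 1 ×ˢ Set.Icc (0:ℝ) 1) :
    DD γ W p ^ 2 ≤ (2 * M) ^ 2 * a ^ (-(1 + γ)) := by
  obtain ⟨x, y⟩ := p
  have hM0 := (abs_nonneg _).trans (hM 0)
  rw [pow_two, DD_mul]
  simp only
  by_cases hxy : a ≤ |x - y|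
  · have h1 : |W x - W y| ≤ 2 * M := by
      have := abs_sub (W x) (W y); linarith [hM x, hM y]
    have h2 : (W x - W y) * (W x - W y) ≤ (2 * M) ^ 2 := by
      have := mul_self_le_mul_self (abs_nonneg _) h1
      rw [abs_mul_abs_self] at this
      linarith
    have h3 : |x - y| ^ (-(1 + γ)) ≤ a ^ (-(1 + γ)) :=
      Real.rpow_le_rpow_of_nonpos ha hxy (by linarith)
    gcongr
  · have : W x - W y = 0 := by
      push Not at hxy
      rw [abs_lt] at hxy
      have hc : x < 0 ∨ 1 < x ∨ y < 0 ∨ 1 < y := by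
        by_contra hcon
        push Not at hcon
        exact hp ⟨⟨hcon.1, hcon.2.1⟩, ⟨hcon.2.2.1, hcon.2.2.2⟩⟩
      rcases hc with h1 | h1 | h1 | h1
      · rw [h x (Or.inl (by linarith)), h y (Or.inl (by linarith)), sub_zero]
      · rw [h x (Or.inr (by linarith)), h y (Or.inr (by linarith)), sub_zero]
      · rw [h x (Or.inl (by linarith)), h y (Or.inl (by linarith)), sub_zero]
      · rw [h x (Or.inr (by linarith)), h y (Or.inr (by linarith)), sub_zero]
    rw [this]
    simp only [zero_mul]
    positivity

lemma nu_eq : nu = (volume : Measure (ℝ × ℝ)).restrict (Set.Icc (0:ℝ) 1 ×ˢ Set.Icc (0:ℝ) 1) := by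
  unfold nu mu
  rw [Measure.prod_restrict]; rfl

lemma en_shift {γ : ℝ} (hγ : 1 < γ) {W : ℝ → ℝ} {a M : ℝ} (ha : 0 < a) (hW : Measurable W)
    (h : ∀ u, u < a ∨ 1 - a < u → W u = 0) (hM : ∀ u, |W u| ≤ M) (t : ℝ) :
    ∫⁻ p, ENNReal.ofReal (DD γ W (p - (t, t)) ^ 2) ∂nu ≤
      en γ W + ENNReal.ofReal ((2 * M) ^ 2 * a ^ (-(1 + γ))) * nu Set.univ := by
  have hD := measurable_DD γ hW
  set S : Set (ℝ × ℝ) := Set.Icc (0:ℝ) 1 ×ˢ Set.Icc (0:ℝ) 1 with hS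
  have hSm : MeasurableSet S := measurableSet_Icc.prod measurableSet_Icc
  set g : ℝ × ℝ → ℝ≥0∞ := S.indicator (fun p => ENNReal.ofReal (DD γ W p ^ 2)) with hg
  have hgm : Measurable g := Measurable.indicator (by fun_prop) hSm
  have h1 : ∀ p, ENNReal.ofReal (DD γ W p ^ 2) ≤
      g p + ENNReal.ofReal ((2 * M) ^ 2 * a ^ (-(1 + γ))) := by
    intro p
    by_cases hp : p ∈ S
    · rw [hg, Set.indicator_of_mem hp]; exact le_self_add
    · exact (ENNReal.ofReal_le_ofReal (DD_off hγ ha h hM p hp)).trans le_add_self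
  calc _ ≤ ∫⁻ p, (g (p - (t, t)) + ENNReal.ofReal ((2 * M) ^ 2 * a ^ (-(1 + γ)))) ∂nu :=
        lintegral_mono fun p => h1 _
    _ = ∫⁻ p, g (p - (t, t)) ∂nu + ENNReal.ofReal ((2 * M) ^ 2 * a ^ (-(1 + γ))) * nu Set.univ := by
        rw [lintegral_add_right _ measurable_const, lintegral_const]
    _ ≤ (∫⁻ p, g (p - (t, t))) + ENNReal.ofReal ((2 * M) ^ 2 * a ^ (-(1 + γ))) * nu Set.univ := by
        refine add_le_add ?_ le_rfl
        conv_lhs => rw [nu_eq]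
        exact setLIntegral_le_lintegral _ _
    _ = _ := by
        rw [lintegral_sub_right_eq_self g, hg, lintegral_indicator hSm]
        unfold en
        rw [nu_eq]

open scoped Convolution in
lemma moll_lemma {γ : ℝ} (hγ : γ ∈ Set.Ioo (1:ℝ) 2) {A : ℝ × ℝ → ℝ} (hA : MemLp A 2 nu)
    (hAG : ∀ G, IsSpatialTest G → MemLp (DD γ G) 2 nu ∧ ∫ p, A p * DD γ G p ∂nu = 0)
    {W : ℝ → ℝ} {a M : ℝ} (ha : 0 < a) (hW : Continuous W)
    (h : ∀ u, u < a ∨ 1 - a < u → W u = 0) (hM : ∀ u, |W u| ≤ M) (hen : en γ W < ⊤) :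
    ∫ p, A p * DD γ W p ∂nu = 0 := by
  have hWD := measurable_DD γ hW.measurable
  have hrpos : ∀ n : ℕ, 0 < a / (2 * (n + 2)) := fun n => by positivity
  let φ : ℕ → ContDiffBump (0:ℝ) := fun n =>
    { rIn := a / (2 * (n + 2)) / 2, rOut := a / (2 * (n + 2)), rIn_pos := half_pos (hrpos n),
      rIn_lt_rOut := half_lt_self (hrpos n) }
  have hrO : ∀ n, (φ n).rOut = a / (2 * (n + 2)) := fun n => rfl
  set G : ℕ → ℝ → ℝ := fun n => (φ n).normed volume ⋆[ContinuousLinearMap.lsmul ℝ ℝ, volume] W with hGdef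
  have hGe : ∀ n u, G n u = ∫ t, (φ n).normed volume t * W (u - t) := by
    intro n u
    simp only [hGdef, convolution, ContinuousLinearMap.lsmul_apply, smul_eq_mul]
  have hφc : ∀ n, Continuous ((φ n).normed volume) := fun n => (φ n).continuous_normed
  have hφs : ∀ n, HasCompactSupport ((φ n).normed volume) := fun n => (φ n).hasCompactSupport_normed
  have htest : ∀ n, IsSpatialTest (G n) := by
    intro n
    refine ⟨?_, Set.Icc (a / 2) (1 - a / 2), isCompact_Icc, fun x hx => ⟨by linarith [hx.1], by linarith [hx.2]⟩, ?_⟩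
    · exact (hφs n).contDiff_convolution_left _ (φ n).contDiff_normed hW.locallyIntegrable
    · intro u hu
      by_contra hcon
      apply hu
      rw [hGe]
      apply integral_eq_zero_of_ae
      refine Eventually.of_forall fun t => ?_
      simp only [Pi.zero_apply]
      by_cases ht : t ∈ Function.support ((φ n).normed volume)
      · rw [(φ n).support_normed_eq, hrO] at ht
        have ht2 : |t| < a / (2 * (n + 2)) := by simpa [Real.norm_eq_abs] using ht
        have h3 : a / (2 * ((n:ℝ) + 2)) ≤ a / 2 := by
          apply div_le_div_of_nonneg_left ha.le (by norm_num)
          have : (0:ℝ) ≤ n := Nat.cast_nonneg n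
          linarith
        have h4 := abs_lt.1 (ht2.trans_le h3)
        rw [h, mul_zero]
        rw [Set.mem_Icc, not_and_or, not_le, not_le] at hcon
        rcases hcon with hc | hc
        · left; linarith
        · right; linarith
      · rw [Function.notMem_support.1 ht, zero_mul]
  set CE : ℝ≥0∞ := en γ W + ENNReal.ofReal ((2 * M) ^ 2 * a ^ (-(1 + γ))) * nu Set.univ with hCE
  have hCEt : CE < ⊤ := ENNReal.add_lt_top.2
    ⟨hen, ENNReal.mul_lt_top ENNReal.ofReal_lt_top (measure_lt_top _ _)⟩
  have henG : ∀ n, en γ (G n) ≤ CE := by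
    intro n
    have hη0 : ∀ t, 0 ≤ (φ n).normed volume t := fun t => (φ n).nonneg_normed t
    have hη1 : ∫ t, (φ n).normed volume t = 1 := (φ n).integral_normed
    set η := (φ n).normed volume with hη
    have hηm : Measurable η := (hφc n).measurable
    have pw : ∀ p, ENNReal.ofReal (DD γ (G n) p ^ 2) ≤
        ∫⁻ t, ENNReal.ofReal (η t) * ENNReal.ofReal (DD γ W (p - (t, t)) ^ 2) := by
      intro p
      have ic : ∀ u, Integrable (fun t => η t * W (u - t)) := fun u =>
        ((hφc n).mul (by fun_prop)).integrable_of_hasCompactSupport (hφs n).mul_right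
      have hxc : Continuous fun t => W (p.1 - t) - W (p.2 - t) := by fun_prop
      have hj := jensen_sq hη0 (hφc n) (hφs n) hη1 hxc
      have e1 : DD γ (G n) p = (∫ t, η t * (W (p.1 - t) - W (p.2 - t))) * kap γ p := by
        unfold DD
        rw [hGe, hGe, ← integral_sub (ic _) (ic _)]
        congr 2; ext t; ring
      have i2 : Integrable (fun t => η t * (W (p.1 - t) - W (p.2 - t)) ^ 2) :=
        ((hφc n).mul (hxc.pow 2)).integrable_of_hasCompactSupport (hφs n).mul_right
      calc ENNReal.ofReal (DD γ (G n) p ^ 2)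
          ≤ ENNReal.ofReal ((∫ t, η t * (W (p.1 - t) - W (p.2 - t)) ^ 2) * kap γ p ^ 2) := by
            apply ENNReal.ofReal_le_ofReal
            rw [e1, mul_pow]
            gcongr
        _ = ∫⁻ t, ENNReal.ofReal (η t * (W (p.1 - t) - W (p.2 - t)) ^ 2 * kap γ p ^ 2) := by
            rw [← integral_mul_const, ofReal_integral_eq_lintegral_ofReal (i2.mul_const _)]
            exact Eventually.of_forall fun t => by
              have := hη0 t
              simp only [Pi.zero_apply]
              positivity
        _ = _ := by
            apply lintegral_congr
            intro t
            rw [DD_shift, ← ENNReal.ofReal_mul (hη0 t)]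
            congr 1; ring
    calc en γ (G n) ≤ ∫⁻ p, (∫⁻ t, ENNReal.ofReal (η t) * ENNReal.ofReal (DD γ W (p - (t, t)) ^ 2)) ∂nu :=
          lintegral_mono pw
      _ = ∫⁻ t, ∫⁻ p, ENNReal.ofReal (η t) * ENNReal.ofReal (DD γ W (p - (t, t)) ^ 2) ∂nu := by
          apply lintegral_lintegral_swap
          apply Measurable.aemeasurable
          have : Measurable fun q : (ℝ × ℝ) × ℝ => DD γ W (q.1 - (q.2, q.2)) :=
            hWD.comp (by fun_prop)
          simp only [Function.uncurry_def]
          fun_prop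
      _ ≤ ∫⁻ t, ENNReal.ofReal (η t) * CE := by
          apply lintegral_mono
          intro t
          beta_reduce
          rw [lintegral_const_mul _ (by fun_prop)]
          gcongr
          exact en_shift hγ.1 ha hW.measurable h hM t
      _ = CE := by
          rw [lintegral_mul_const _ (by fun_prop), ← ofReal_integral_eq_lintegral_ofReal
            ((hφc n).integrable_of_hasCompactSupport (hφs n)) (Eventually.of_forall hη0), hη1]
          simp
  refine weak_lemma hA (memLp_of_en hW.measurable hen)
    (fun n => measurable_DD γ (htest n).1.continuous.measurable)
    (fun n => (hAG _ (htest n)).1) CE.toReal ?_ ?_ (fun n => (hAG _ (htest n)).2)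
  · intro n
    have := henG n
    rw [en_eq_of_memLp (hAG _ (htest n)).1] at this
    rwa [ENNReal.ofReal_le_iff_le_toReal hCEt.ne] at this
  · intro p
    have hr : Tendsto (fun n => (φ n).rOut) atTop (nhds 0) := by
      simp only [hrO]
      apply tendsto_const_nhds.div_atTop
      apply Filter.Tendsto.const_mul_atTop (by norm_num)
      exact tendsto_atTop_add_const_right _ _ tendsto_natCast_atTop_atTop
    have hl : ∀ u, Tendsto (fun n => G n u) atTop (nhds (W u)) := fun u =>
      ContDiffBump.convolution_tendsto_right_of_continuous hr hW u
    exact ((hl p.1).sub (hl p.2)).mul_const _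

/-- soft threshold -/
def TT (δ x : ℝ) : ℝ := x - max (-δ) (min x δ)

lemma TT_zero {δ x : ℝ} (h : |x| ≤ δ) : TT δ x = 0 := by
  rw [abs_le] at h
  unfold TT; rw [min_eq_left h.2, max_eq_right h.1, sub_self]

lemma TT_near {δ x : ℝ} (h : 0 ≤ δ) : |TT δ x - x| ≤ δ := by
  unfold TT
  rw [abs_le]
  constructor
  · have : max (-δ) (min x δ) ≤ δ := max_le (by linarith) (min_le_right _ _)
    linarith
  · have := le_max_left (-δ) (min x δ)
    linarith

lemma TT_lip {δ : ℝ} (h : 0 ≤ δ) (x y : ℝ) : |TT δ x - TT δ y| ≤ |x - y| := by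
  unfold TT
  rcases max_cases (-δ) (min x δ) with h1 | h1 <;> rcases max_cases (-δ) (min y δ) with h2 | h2 <;>
  rcases min_cases x δ with h3 | h3 <;> rcases min_cases y δ with h4 | h4 <;>
  rw [h1.1, h2.1] <;>
  rcases abs_cases (x - y) with h5 | h5 <;>
  rw [abs_le] <;> constructor <;> linarith

lemma trunc_lemma {γ : ℝ} (hγ : γ ∈ Set.Ioo (1:ℝ) 2) {A : ℝ × ℝ → ℝ} (hA : MemLp A 2 nu)
    (hAG : ∀ G, IsSpatialTest G → MemLp (DD γ G) 2 nu ∧ ∫ p, A p * DD γ G p ∂nu = 0)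
    {W : ℝ → ℝ} {M : ℝ} (hW : Continuous W)
    (h : ∀ u, u ≤ 0 ∨ 1 ≤ u → W u = 0) (hM : ∀ u, |W u| ≤ M) (hen : en γ W < ⊤) :
    ∫ p, A p * DD γ W p ∂nu = 0 := by
  have hdp : ∀ n : ℕ, (0:ℝ) < 1 / ((n:ℝ) + 1) := fun n => by positivity
  set F : ℕ → ℝ → ℝ := fun n u => TT (1 / ((n:ℝ) + 1)) (W u) with hF
  have hFc : ∀ n, Continuous (F n) := by
    intro n; simp only [hF, TT]; fun_prop
  have hle : ∀ n p, DD γ (F n) p ^ 2 ≤ DD γ W p ^ 2 := by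
    intro n p
    unfold DD
    rw [mul_pow, mul_pow]
    gcongr ?_ * _
    exact sq_le_sq.2 (TT_lip (hdp n).le _ _)
  have henF : ∀ n, en γ (F n) ≤ en γ W := fun n =>
    lintegral_mono fun p => ENNReal.ofReal_le_ofReal (hle n p)
  have hml : ∀ n, MemLp (DD γ (F n)) 2 nu := fun n =>
    memLp_of_en (hFc n).measurable ((henF n).trans_lt hen)
  have hmW := memLp_of_en hW.measurable hen
  refine weak_lemma hA hmW
    (fun n => measurable_DD γ (hFc n).measurable) hml (∫ p, DD γ W p ^ 2 ∂nu) ?_ ?_ ?_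
  · intro n
    exact integral_mono (hml n).integrable_sq hmW.integrable_sq (hle n)
  · intro p
    have hl : ∀ u, Tendsto (fun n => F n u) atTop (nhds (W u)) := by
      intro u
      rw [tendsto_iff_dist_tendsto_zero]
      refine squeeze_zero (fun _ => dist_nonneg) (fun n => ?_) tendsto_one_div_add_atTop_nhds_zero_nat
      rw [Real.dist_eq]
      exact TT_near (hdp n).le
    exact ((hl p.1).sub (hl p.2)).mul_const _
  · intro n
    have hnear : ∀ x, W x = 0 → ∃ r > 0, ∀ u, |u - x| < r → F n u = 0 := by
      intro x hx
      obtain ⟨r, hr, hh⟩ := Metric.continuous_iff.1 hW x _ (hdp n)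
      refine ⟨r, hr, fun u hu => TT_zero ?_⟩
      have := hh u (by rwa [Real.dist_eq])
      rw [Real.dist_eq, hx, sub_zero] at this
      exact this.le
    have hz : ∀ u, W u = 0 → F n u = 0 := fun u hu => TT_zero (by rw [hu, abs_zero]; exact (hdp n).le)
    obtain ⟨r0, hr0, h0⟩ := hnear 0 (h 0 (Or.inl le_rfl))
    obtain ⟨r1, hr1, h1⟩ := hnear 1 (h 1 (Or.inr le_rfl))
    refine moll_lemma hγ hA hAG (lt_min hr0 hr1) (hFc n) ?_ (M := M) ?_ ((henF n).trans_lt hen)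
    · intro u hu
      rcases hu with hu | hu
      · rcases le_or_gt u 0 with h2 | h2
        · exact hz u (h u (Or.inl h2))
        · apply h0
          rw [sub_zero, abs_of_pos h2]
          exact hu.trans_le (min_le_left _ _)
      · rcases le_or_gt 1 u with h2 | h2
        · exact hz u (h u (Or.inr h2))
        · apply h1
          rw [abs_lt]
          have := min_le_right r0 r1
          constructor <;> linarith
    · intro u
      have h3 := TT_lip (hdp n).le (W u) 0
      rw [TT_zero (x := 0) (by rw [abs_zero]; exact (hdp n).le), sub_zero, sub_zero] at h3
      exact h3.trans (hM u)

lemma en_congr {γ : ℝ} {F G : ℝ → ℝ} (h : F =ᵐ[mu] G) : en γ F = en γ G := by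
  unfold en
  apply lintegral_congr_ae
  filter_upwards [DD_congr_ae (γ := γ) h] with p hp
  rw [hp]

lemma DD_sub (γ : ℝ) (F G : ℝ → ℝ) : DD γ (fun u => F u - G u) = DD γ F - DD γ G := by
  ext p; simp only [DD, Pi.sub_apply]; ring

end SO

/-- For any `ρ ∈ H^{γ/2}` whose continuous representative takes the
boundary values `Φl` at `0` and `Φr` at `1`,
`‖ρ − Φss‖²_{γ/2} − ⟨ρ − Φss, ρ⟩_{γ/2} = 0`. -/
theorem stationary_orthogonality
    (γ Φl Φr : ℝ) (hγ : γ ∈ Set.Ioo (1:ℝ) 2)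
    (Φss : ℝ → ℝ) (hss : IsStationarySolution γ Φl Φr Φss)
    (ρ : ℝ → ℝ) (hρ : MemHgamma γ ρ) (hbv : HasBoundaryValues ρ Φl Φr) :
    fracInner γ (fun u => ρ u - Φss u) (fun u => ρ u - Φss u)
      - fracInner γ (fun u => ρ u - Φss u) ρ = 0 := by
  rcases (SO.cGamma_nonneg γ).eq_or_lt with hc | hc
  · simp [fracInner, ← hc]
  obtain ⟨hΦ, ⟨Φc, hΦcc, hΦae, hΦ0, hΦ1⟩, htest⟩ := hss
  obtain ⟨ρc, hρcc, hρae, hρ0, hρ1⟩ := hbv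
  have dΦ := SO.memLp_of_en hΦ.1 (SO.en_lt_top hc hΦ)
  have dρ := SO.memLp_of_en hρ.1 (SO.en_lt_top hc hρ)
  have dw : MemLp (SO.DD γ (fun u => ρ u - Φss u)) 2 SO.nu := by
    rw [SO.DD_sub]; exact dρ.sub dΦ
  -- the continuous representative of the difference, extended by zero
  have hwc : ContinuousOn (fun u => ρc u - Φc u) (Set.Icc 0 1) := hρcc.sub hΦcc
  set W : ℝ → ℝ := Set.IccExtend (zero_le_one (α := ℝ))
    ((Set.Icc (0:ℝ) 1).domRestrict (fun u => ρc u - Φc u)) with hWdef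
  have hWc : Continuous W := hwc.domRestrict.Icc_extend'
  have hWin : ∀ u ∈ Set.Icc (0:ℝ) 1, W u = ρc u - Φc u := by
    intro u hu
    rw [hWdef, Set.IccExtend_of_mem _ _ hu]; rfl
  have hW0 : ∀ u, u ≤ 0 ∨ 1 ≤ u → W u = 0 := by
    intro u hu
    rcases hu with hu | hu
    · rw [hWdef, Set.IccExtend_of_le_left _ _ hu]
      change ρc 0 - Φc 0 = 0
      rw [hρ0, hΦ0, sub_self]
    · rw [hWdef, Set.IccExtend_of_right_le _ _ hu]
      change ρc 1 - Φc 1 = 0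
      rw [hρ1, hΦ1, sub_self]
  obtain ⟨M, hM⟩ : ∃ M, ∀ u, |W u| ≤ M := by
    have : HasCompactSupport W := HasCompactSupport.intro (isCompact_Icc (a := (0:ℝ)) (b := 1))
      fun x hx => hW0 x (by
        by_contra hcon
        push Not at hcon
        exact hx ⟨hcon.1.le, hcon.2.le⟩)
    exact this.exists_bound_of_continuous hWc
  have hae : (fun u => ρ u - Φss u) =ᵐ[SO.mu] W := by
    have h1 : ∀ᵐ u ∂SO.mu, Φss u = Φc u := hΦae
    have h2 : ∀ᵐ u ∂SO.mu, ρ u = ρc u := hρae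
    filter_upwards [h1, h2, SO.ae_mu] with u h1 h2 h3
    rw [hWin u h3, h1, h2]
  have hmeas : Measurable (fun u => ρ u - Φss u) := hρ.1.sub hΦ.1
  have enW : SO.en γ W < ⊤ := by
    rw [← SO.en_congr hae, SO.en_eq_of_memLp dw]
    exact ENNReal.ofReal_lt_top
  have iΦ : Integrable Φss SO.mu := by
    have h1 : IntegrableOn Φc (Set.Icc 0 1) volume := hΦcc.integrableOn_compact isCompact_Icc
    have h2 : Integrable Φc SO.mu := h1
    have h3 : Φc =ᵐ[SO.mu] Φss := by
      have h4 : ∀ᵐ u ∂SO.mu, Φss u = Φc u := hΦae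
      filter_upwards [h4] with u hu using hu.symm
    exact h2.congr h3
  have key := SO.trunc_lemma hγ dΦ
    (fun G hG => SO.test_pairing hγ hc hG hΦ.1 iΦ dΦ (htest G hG)) hWc hW0 hM enW
  have key2 : ∫ p, SO.DD γ (fun u => ρ u - Φss u) p * SO.DD γ Φss p ∂SO.nu = 0 := by
    rw [← key]
    apply integral_congr_ae
    filter_upwards [SO.DD_congr_ae (γ := γ) hae] with p hp
    rw [hp, mul_comm]
  have j1 : Integrable (fun p => SO.DD γ (fun u => ρ u - Φss u) p *
      SO.DD γ (fun u => ρ u - Φss u) p) SO.nu := dw.integrable_mul dw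
  have j2 : Integrable (fun p => SO.DD γ (fun u => ρ u - Φss u) p * SO.DD γ ρ p) SO.nu :=
    dw.integrable_mul dρ
  rw [SO.fracInner_eq γ dw dw, SO.fracInner_eq γ dw dρ, ← mul_sub, ← integral_sub j1 j2]
  have e : ∀ p, SO.DD γ (fun u => ρ u - Φss u) p * SO.DD γ (fun u => ρ u - Φss u) p -
      SO.DD γ (fun u => ρ u - Φss u) p * SO.DD γ ρ p =
      - (SO.DD γ (fun u => ρ u - Φss u) p * SO.DD γ Φss p) := by
    intro p
    rw [← mul_sub, ← mul_neg]
    congr 1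
    rw [SO.DD_sub]
    simp
  have e2 := integral_congr_ae (μ := SO.nu) (Eventually.of_forall e)
  rw [integral_neg, key2, neg_zero] at e2
  exact mul_eq_zero_of_right _ e2
end
end
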